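/- (Theorem 1.2, third formula.) Let n ≥ 4 be a natural number. The genus-zero Hurwitz number h_{1^2,1^2} with two degenerate branch points, each of reduced ramification type 1^2 (i.e., two permutations each of cycle type (2,2,1^{n-4})) and m = 2n−6 simple branch points satisfies h_{1^2,1^2} = 2·(2n^3 − 16n^2 + 43n − 40)·((2n−6)!/(n−4)!)·n^{n−6}. -/

import Mathlib

open Equiv

namespace Hz

/-! ### Part 1: Abel--Hurwitz identities over subsets -/

section Abel
variable {ι : Type*} [DecidableEq ι]

/-- Subset convolution. -/
def conv (f g : Finset ι → ℚ) (I : Finset ι) : ℚ := ∑ S ∈ I.powerset, f S * g (I \ S)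

lemma conv_comm (f g : Finset ι → ℚ) (I : Finset ι) : conv f g I = conv g f I := by
  unfold conv
  refine Finset.sum_nbij' (fun S => I \ S) (fun S => I \ S) ?_ ?_ ?_ ?_ ?_
  · intro S _; simp
  · intro S _; simp
  · intro S hS; simp at hS; simp [Finset.inter_eq_right.mpr hS]
  · intro S hS; simp at hS; simp [Finset.inter_eq_right.mpr hS]
  · intro S hS; simp at hS; simp [Finset.inter_eq_right.mpr hS, mul_comm]

lemma conv_pt (φ : ι → Finset ι → ℚ) (g : Finset ι → ℚ) (I : Finset ι) :
    conv (fun S => ∑ j ∈ S, φ j (S.erase j)) g I = ∑ j ∈ I, conv (φ j) g (I.erase j) := by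
  unfold conv
  simp only [Finset.sum_mul]
  rw [Finset.sum_comm' (t' := I) (s' := fun j => I.powerset.filter (fun S => j ∈ S))]
  · refine Finset.sum_congr rfl fun j hj => ?_
    refine Finset.sum_nbij' (fun S => S.erase j) (fun S => insert j S) ?_ ?_ ?_ ?_ ?_
    · intro S hS; simp at hS ⊢; exact Finset.erase_subset_erase _ hS.1
    · intro S hS; simp at hS ⊢
      intro x hx; simp at hx; rcases hx with rfl | hx
      · exact hj
      · exact Finset.mem_of_mem_erase (hS hx)
    · intro S hS; simp at hS ⊢; exact Finset.insert_erase hS.2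
    · intro S hS; simp at hS ⊢
      exact fun h => absurd (hS h) (by simp)
    · intro S hS; simp at hS
      congr 2
      ext x; simp; grind
  · intro S j; simp; grind

lemma conv_sub (f f' g : Finset ι → ℚ) (I : Finset ι) :
    conv (fun S => f S - f' S) g I = conv f g I - conv f' g I := by
  simp [conv, sub_mul]

lemma conv_smul (c : ℚ) (f g : Finset ι → ℚ) (I : Finset ι) :
    conv (fun S => c * f S) g I = c * conv f g I := by
  simp [conv, Finset.mul_sum, mul_assoc]

lemma diff_zero (k : ι → ℚ) (x : ℚ) (I : Finset ι) : ∀ p : Polynomial ℚ, p.degree < I.card →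
    ∑ S ∈ I.powerset, (-1 : ℚ) ^ S.card * p.eval (x + ∑ i ∈ S, k i) = 0 := by
  induction I using Finset.induction_on with
  | empty => intro p hp; simp at hp; simp [hp]
  | insert i I hi ih =>
    intro p hp
    rw [Finset.sum_powerset_insert hi, ← Finset.sum_add_distrib]
    have := ih (p - Polynomial.taylor (k i) p) ?_
    · rw [← this]
      refine Finset.sum_congr rfl fun S hS => ?_
      have hiS : i ∉ S := fun h => hi (Finset.mem_powerset.mp hS h)
      rw [Finset.card_insert_of_notMem hiS, Finset.sum_insert hiS]
      simp only [Polynomial.eval_sub, Polynomial.taylor_eval]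
      rw [show x + (k i + ∑ j ∈ S, k j) = x + ∑ j ∈ S, k j + k i by ring]
      ring
    · by_cases h0 : p = 0
      · simp [h0]
      · have := Polynomial.degree_sub_lt_left (p := p) (q := Polynomial.taylor (k i) p)
          (by simp) h0 (by simp)
        rw [Finset.card_insert_of_notMem hi] at hp
        have h2 : p.degree ≤ I.card := by
          rw [Polynomial.degree_eq_natDegree h0] at hp ⊢
          norm_cast at hp ⊢; omega
        exact lt_of_lt_of_le this h2

/-- `x (x + k_S)^{|S|-1}` -/
def Ab (k : ι → ℚ) (x : ℚ) (S : Finset ι) : ℚ := x * (x + ∑ i ∈ S, k i) ^ ((S.card : ℤ) - 1)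

def Bb (k : ι → ℚ) (x : ℚ) (S : Finset ι) : ℚ := (x + ∑ i ∈ S, k i) ^ ((S.card : ℤ) - 2)

def Pb (k : ι → ℚ) (y : ℚ) (S : Finset ι) : ℚ := (y + ∑ i ∈ S, k i) ^ S.card

open Polynomial in
lemma abel_poly (k : ι → ℚ) (hk : ∀ i, 0 < k i) (x : ℚ) (hx : 0 < x) (I : Finset ι) :
    ∑ S ∈ I.powerset, C (Ab k x S) * (X + C (∑ i ∈ I \ S, k i)) ^ (I \ S).card
      = (X + C (x + ∑ i ∈ I, k i)) ^ I.card := by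
  induction I using Finset.strongInduction with
  | H I ih =>
  rcases I.eq_empty_or_nonempty with rfl | hI
  · simp [Ab]; rw [← C_mul]; simp [hx.ne']
  have hder : derivative (∑ S ∈ I.powerset, C (Ab k x S) * (X + C (∑ i ∈ I \ S, k i)) ^ (I \ S).card)
      = derivative ((X + C (x + ∑ i ∈ I, k i)) ^ I.card) := by
    have h1 : ∀ i ∈ I, ∑ S ∈ I.powerset.filter (fun S => i ∉ S),
        C (Ab k x S) * (X + C (∑ i ∈ I \ S, k i)) ^ ((I \ S).card - 1)
        = (X + C (x + ∑ i ∈ I, k i)) ^ (I.card - 1) := by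
      intro i hi
      have h2 := congrArg (fun p => p.comp (X + C (k i))) (ih (I.erase i) (Finset.erase_ssubset hi))
      simp only [Polynomial.sum_comp, mul_comp, C_comp, pow_comp, add_comp, X_comp] at h2
      rw [Finset.card_erase_of_mem hi] at h2
      rw [← Finset.add_sum_erase I k hi]
      have : X + C (k i) + C (x + ∑ j ∈ I.erase i, k j) = X + C (x + (k i + ∑ j ∈ I.erase i, k j)) := by
        simp only [C_add]; ring
      rw [this] at h2
      rw [← h2]
      refine Finset.sum_congr ?_ fun S hS => ?_
      · ext S; simp [Finset.subset_erase]
      · simp at hS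
        have e : I.erase i \ S = (I \ S).erase i := by ext; simp; tauto
        have hm : i ∈ I \ S := by simp [hi]; grind
        rw [e, Finset.card_erase_of_mem hm, ← Finset.add_sum_erase (I \ S) k hm]
        simp only [C_add]; ring
    rw [derivative_sum]
    have h3 : ∀ S ∈ I.powerset, derivative (C (Ab k x S) * (X + C (∑ i ∈ I \ S, k i)) ^ (I \ S).card)
        = ∑ i ∈ I \ S, C (Ab k x S) * (X + C (∑ i ∈ I \ S, k i)) ^ ((I \ S).card - 1) := by
      intro S _
      rw [Finset.sum_const, derivative_C_mul, derivative_pow]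
      simp; ring
    rw [Finset.sum_congr rfl h3]
    rw [Finset.sum_comm' (t' := I) (s' := fun i => I.powerset.filter (fun S => i ∉ S))]
    · rw [Finset.sum_congr rfl h1, derivative_pow]
      simp
    · intro S j; simp; tauto
  have hev : eval (-(x + ∑ i ∈ I, k i)) (∑ S ∈ I.powerset, C (Ab k x S) * (X + C (∑ i ∈ I \ S, k i)) ^ (I \ S).card)
      = eval (-(x + ∑ i ∈ I, k i)) ((X + C (x + ∑ i ∈ I, k i)) ^ I.card) := by
    have hc : I.card ≠ 0 := by simpa using hI.ne_empty
    simp only [eval_finsetSum, eval_mul, eval_C, eval_pow, eval_add, eval_X]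
    rw [neg_add_cancel, zero_pow hc]
    have hd := diff_zero k x I (X ^ (I.card - 1)) (by
      rw [degree_X_pow]; norm_cast; omega)
    have : ∑ S ∈ I.powerset, x * (-1) ^ I.card * ((-1 : ℚ) ^ S.card * (X ^ (I.card - 1) : ℚ[X]).eval (x + ∑ i ∈ S, k i)) = 0 := by
      rw [← Finset.mul_sum, hd, mul_zero]
    rw [← this]
    refine Finset.sum_congr rfl fun S hS => ?_
    have hS' := Finset.mem_powerset.mp hS
    have hsum : ∑ i ∈ I, k i = ∑ i ∈ I \ S, k i + ∑ i ∈ S, k i := (Finset.sum_sdiff hS').symm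
    have hpos : 0 < x + ∑ i ∈ S, k i := add_pos_of_pos_of_nonneg hx (Finset.sum_nonneg fun i _ => (hk i).le)
    have hcard : (I \ S).card + S.card = I.card := Finset.card_sdiff_add_card_eq_card hS'
    rw [hsum, show -(x + (∑ i ∈ I \ S, k i + ∑ i ∈ S, k i)) + ∑ i ∈ I \ S, k i = -1 * (x + ∑ i ∈ S, k i) by ring, mul_pow]
    simp only [Ab, eval_pow, eval_X]
    have e1 : (x + ∑ i ∈ S, k i) ^ (I.card - 1) = (x + ∑ i ∈ S, k i) ^ ((S.card : ℤ) - 1) * (x + ∑ i ∈ S, k i) ^ (I \ S).card := by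
      rw [← zpow_natCast, ← zpow_natCast, ← zpow_add₀ hpos.ne']; congr 1; omega
    have e2 : (-1 : ℚ) ^ I.card * (-1) ^ S.card = (-1) ^ (I \ S).card := by
      rw [← hcard, pow_add, mul_assoc, ← mul_pow]; simp
    rw [e1, ← e2]; ring
  set p := ∑ S ∈ I.powerset, C (Ab k x S) * (X + C (∑ i ∈ I \ S, k i)) ^ (I \ S).card
  set q := (X + C (x + ∑ i ∈ I, k i)) ^ I.card
  have hz : derivative (p - q) = 0 := by rw [derivative_sub, hder, sub_self]
  have hC := derivative_eq_zero.mp hz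
  rw [natDegree_eq_zero] at hC
  obtain ⟨c, hc⟩ := hC
  have : eval (-(x + ∑ i ∈ I, k i)) (p - q) = 0 := by rw [eval_sub, hev, sub_self]
  rw [← hc, eval_C] at this
  rw [this, C_0] at hc
  exact sub_eq_zero.mp hc.symm

lemma abel1 (k : ι → ℚ) (hk : ∀ i, 0 < k i) (x y : ℚ) (hx : 0 < x) (I : Finset ι) :
    conv (Ab k x) (Pb k y) I = (x + y + ∑ i ∈ I, k i) ^ I.card := by
  have := congrArg (Polynomial.eval y) (abel_poly k hk x hx I)
  simp only [Polynomial.eval_finsetSum, Polynomial.eval_mul, Polynomial.eval_C, Polynomial.eval_pow,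
    Polynomial.eval_add, Polynomial.eval_X] at this
  unfold conv Pb
  rw [this]; ring

lemma possum (k : ι → ℚ) (hk : ∀ i, 0 < k i) (x : ℚ) (hx : 0 < x) (S : Finset ι) :
    0 < x + ∑ i ∈ S, k i :=
  add_pos_of_pos_of_nonneg hx (Finset.sum_nonneg fun i _ => (hk i).le)

lemma Ab_eq (k : ι → ℚ) (hk : ∀ i, 0 < k i) (y : ℚ) (hy : 0 < y) (S : Finset ι) :
    Ab k y S = Pb k y S - ∑ j ∈ S, k j * Pb k (y + k j) (S.erase j) := by
  have hp := possum k hk y hy S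
  have : ∀ j ∈ S, k j * Pb k (y + k j) (S.erase j) = k j * (y + ∑ i ∈ S, k i) ^ ((S.card : ℤ) - 1) := by
    intro j hj
    unfold Pb
    have hc : 0 < S.card := Finset.card_pos.mpr ⟨j, hj⟩
    rw [Finset.card_erase_of_mem hj, add_assoc, Finset.add_sum_erase S k hj, ← zpow_natCast]
    congr 2; omega
  rw [Finset.sum_congr rfl this, ← Finset.sum_mul]
  unfold Ab Pb
  rw [← zpow_natCast, show ((S.card : ℤ)) = ((S.card : ℤ) - 1) + 1 by ring, zpow_add_one₀ hp.ne']
  simp; ring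

lemma abel2 (k : ι → ℚ) (hk : ∀ i, 0 < k i) (x y : ℚ) (hx : 0 < x) (hy : 0 < y) (I : Finset ι) :
    conv (Ab k x) (Ab k y) I = Ab k (x + y) I := by
  rw [conv_comm, show Ab k y = fun S => Pb k y S - ∑ j ∈ S, k j * Pb k (y + k j) (S.erase j) from
    funext (Ab_eq k hk y hy), conv_sub, conv_pt (fun j S => k j * Pb k (y + k j) S), Ab_eq k hk (x + y) (by positivity)]
  congr 1
  · rw [conv_comm, abel1 k hk x y hx]; rfl
  · refine Finset.sum_congr rfl fun j hj => ?_
    rw [conv_smul, conv_comm, abel1 k hk x _ hx]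
    unfold Pb; ring

lemma Bb_eq (k : ι → ℚ) (hk : ∀ i, 0 < k i) (x : ℚ) (hx : 0 < x) (S : Finset ι) :
    x ^ 2 * Bb k x S = Ab k x S - ∑ j ∈ S, (k j * x / (x + k j)) * Ab k (x + k j) (S.erase j) := by
  have hp := possum k hk x hx S
  have : ∀ j ∈ S, (k j * x / (x + k j)) * Ab k (x + k j) (S.erase j) = k j * (x * (x + ∑ i ∈ S, k i) ^ ((S.card : ℤ) - 2)) := by
    intro j hj
    unfold Ab
    have hc : 0 < S.card := Finset.card_pos.mpr ⟨j, hj⟩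
    have := hk j
    rw [Finset.card_erase_of_mem hj, add_assoc x, Finset.add_sum_erase S k hj,
      show (((S.card - 1 : ℕ) : ℤ) - 1) = (S.card : ℤ) - 2 by omega]
    field_simp
  rw [Finset.sum_congr rfl this, ← Finset.sum_mul]
  unfold Ab Bb
  rw [show ((S.card : ℤ) - 1) = ((S.card : ℤ) - 2) + 1 by ring, zpow_add_one₀ hp.ne']
  ring

lemma SB_eq (k : ι → ℚ) (hk : ∀ i, 0 < k i) (p q : ℚ) (hp : 0 < p) (hq : 0 < q) (I : Finset ι)
    (n : ℚ) (hn : n = p + q + ∑ i ∈ I, k i) :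
    p ^ 2 * q ^ 2 * conv (Bb k p) (Bb k q) I =
      (p + q) * n ^ ((I.card : ℤ) - 1)
      - n ^ ((I.card : ℤ) - 2) * ∑ j ∈ I, k j * (p / (p + k j) + q / (q + k j)) * (p + q + k j)
      + p * q * n ^ ((I.card : ℤ) - 3) *
        ∑ j ∈ I, k j * (n - p - q - k j) * (1 / (p + k j) + 1 / (q + k j)) := by
  have e0 : p ^ 2 * q ^ 2 * conv (Bb k p) (Bb k q) I
      = conv (fun S => p ^ 2 * Bb k p S) (fun S => q ^ 2 * Bb k q S) I := by
    rw [conv_smul, conv_comm _ (fun S => q ^ 2 * Bb k q S), conv_smul, conv_comm]; ring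
  have hAA : ∀ (x y : ℚ) (J : Finset ι), 0 < x → 0 < y → x + y + ∑ i ∈ J, k i = n →
      conv (Ab k x) (Ab k y) J = (x + y) * n ^ ((J.card : ℤ) - 1) := by
    intro x y J hx hy h
    rw [abel2 k hk x y hx hy, Ab, h]
  have hAB : ∀ (x : ℚ) (J : Finset ι), 0 < x → x + q + ∑ i ∈ J, k i = n →
      conv (Ab k x) (fun S => q ^ 2 * Bb k q S) J = (x + q) * n ^ ((J.card : ℤ) - 1)
       - ∑ j ∈ J, (k j * q / (q + k j)) * ((x + q + k j) * n ^ ((J.card : ℤ) - 2)) := by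
    intro x J hx h
    rw [conv_comm, show (fun S => q ^ 2 * Bb k q S) = _ from funext (Bb_eq k hk q hq), conv_sub,
      conv_pt (fun j S => k j * q / (q + k j) * Ab k (q + k j) S)]
    congr 1
    · rw [conv_comm, hAA x q J hx hq h]
    · refine Finset.sum_congr rfl fun j hj => ?_
      have := hk j
      rw [conv_smul, hAA _ _ _ (by positivity) hx]
      · have hc : 0 < J.card := Finset.card_pos.mpr ⟨j, hj⟩
        rw [Finset.card_erase_of_mem hj, show (((J.card - 1 : ℕ) : ℤ) - 1) = (J.card : ℤ) - 2 by omega]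
        ring
      · rw [← h, ← Finset.add_sum_erase J k hj]; ring
  rw [e0, show (fun S => p ^ 2 * Bb k p S) = _ from funext (Bb_eq k hk p hp), conv_sub,
      conv_pt (fun j S => k j * p / (p + k j) * Ab k (p + k j) S), hAB p I hp hn.symm]
  have e1 : ∀ j ∈ I, conv (fun S => k j * p / (p + k j) * Ab k (p + k j) S) (fun S => q ^ 2 * Bb k q S) (I.erase j)
      = (k j * p / (p + k j)) * ((p + q + k j) * n ^ ((I.card : ℤ) - 2))
        - ∑ l ∈ I.erase j, n ^ ((I.card : ℤ) - 3) * (p * q * (k j * k l * (1 / (p + k j) + 1 / (q + k l)))) := by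
    intro j hj
    have hj' := hk j
    have hc : 0 < I.card := Finset.card_pos.mpr ⟨j, hj⟩
    rw [conv_smul, hAB _ _ (by positivity) (by rw [hn, ← Finset.add_sum_erase I k hj]; ring),
      Finset.card_erase_of_mem hj, show (((I.card - 1 : ℕ) : ℤ) - 1) = (I.card : ℤ) - 2 by omega,
      show (((I.card - 1 : ℕ) : ℤ) - 2) = (I.card : ℤ) - 3 by omega, mul_sub, Finset.mul_sum]
    congr 1
    · ring
    · refine Finset.sum_congr rfl fun l hl => ?_
      have hl' := hk l
      field_simp
      ring
  rw [Finset.sum_congr rfl e1, Finset.sum_sub_distrib]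
  have e2 : ∑ j ∈ I, ∑ l ∈ I.erase j, n ^ ((I.card : ℤ) - 3) * (p * q * (k j * k l * (1 / (p + k j) + 1 / (q + k l))))
     = p * q * n ^ ((I.card : ℤ) - 3) *
        ∑ j ∈ I, k j * (n - p - q - k j) * (1 / (p + k j) + 1 / (q + k j)) := by
    have hs : ∀ j ∈ I, ∑ l ∈ I.erase j, k l = n - p - q - k j := by
      intro j hj; rw [hn, ← Finset.add_sum_erase I k hj]; ring
    have s1 : ∑ j ∈ I, ∑ l ∈ I.erase j, k j * k l * (1 / (p + k j)) = ∑ j ∈ I, k j * (n - p - q - k j) * (1 / (p + k j)) := by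
      refine Finset.sum_congr rfl fun j hj => ?_
      rw [← hs j hj, Finset.mul_sum, Finset.sum_mul]
    have s2 : ∑ j ∈ I, ∑ l ∈ I.erase j, k j * k l * (1 / (q + k l)) = ∑ j ∈ I, k j * (n - p - q - k j) * (1 / (q + k j)) := by
      rw [Finset.sum_comm' (t' := I) (s' := fun j => I.erase j) (by intro a b; simp; tauto)]
      refine Finset.sum_congr rfl fun j hj => ?_
      rw [← hs j hj, Finset.mul_sum, Finset.sum_mul]
      refine Finset.sum_congr rfl fun l _ => by ring
    simp only [mul_add, Finset.sum_add_distrib]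
    rw [← s1, ← s2]
    simp only [Finset.mul_sum]
    congr 1 <;>
    · refine Finset.sum_congr rfl fun j hj => Finset.sum_congr rfl fun l hl => ?_
      ring
  rw [e2]
  have e3 : n ^ ((I.card : ℤ) - 2) * ∑ j ∈ I, k j * (p / (p + k j) + q / (q + k j)) * (p + q + k j)
     = (∑ j ∈ I, (k j * q / (q + k j)) * ((p + q + k j) * n ^ ((I.card : ℤ) - 2)))
      + ∑ j ∈ I, (k j * p / (p + k j)) * ((p + q + k j) * n ^ ((I.card : ℤ) - 2)) := by
    rw [Finset.mul_sum, ← Finset.sum_add_distrib]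
    refine Finset.sum_congr rfl fun j _ => by ring
  rw [e3]; ring

end Abel
end Hz

open Equiv

namespace Hz

noncomputable section

/-! ### Part 2: the tree function -/

/-- `k^(k-1)/k!` for `k ≥ 1`. -/
def g (k : ℕ) : ℚ := if k = 0 then 0 else (k : ℚ) ^ (k - 1) / (k.factorial : ℚ)

def h (k : ℕ) : ℚ := k * g k

def w (k : ℕ) : ℚ := k ^ 2 * g k

lemma g_zero : g 0 = 0 := by simp [g]
lemma h_zero : h 0 = 0 := by simp [h]
lemma g_succ (j : ℕ) : g (j + 1) = ((j : ℚ) + 1) ^ j / ((j + 1).factorial : ℚ) := by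
  simp [g]

lemma g_pos {k : ℕ} (hk : 0 < k) : 0 < g k := by
  unfold g; rw [if_neg hk.ne']; positivity

lemma h_pos {k : ℕ} (hk : 0 < k) : 0 < h k := by
  have := g_pos hk
  unfold h; positivity

lemma w_pos {k : ℕ} (hk : 0 < k) : 0 < w k := by
  have := g_pos hk
  unfold w; positivity

lemma h_rec (n : ℕ) : h n = g n + ∑ ij ∈ Finset.HasAntidiagonal.antidiagonal n, g ij.1 * h ij.2 := by
  rcases n with _ | n
  · simp [h, g]
  have h1 := abel1 (fun _ : ℕ => (1 : ℚ)) (fun _ => one_pos) 1 0 one_pos (Finset.range n)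
  unfold conv at h1
  have h2 : ∀ S ∈ (Finset.range n).powerset,
      Ab (fun _ : ℕ => (1 : ℚ)) 1 S * Pb (fun _ : ℕ => (1 : ℚ)) 0 (Finset.range n \ S)
      = (fun j : ℕ => ((1 : ℚ) + j) ^ ((j : ℤ) - 1) * ((n - j : ℕ) : ℚ) ^ (n - j)) S.card := by
    intro S hS
    have := Finset.card_sdiff_of_subset (Finset.mem_powerset.mp hS)
    simp at this
    simp [Ab, Pb, this]
  rw [Finset.sum_congr rfl h2, Finset.sum_powerset_apply_card (f := fun j : ℕ => ((1 : ℚ) + j) ^ ((j : ℤ) - 1) * ((n - j : ℕ) : ℚ) ^ (n - j))] at h1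
  simp only [Finset.card_range, Finset.sum_const, nsmul_eq_mul] at h1
  rw [Finset.Nat.antidiagonal_succ, Finset.sum_cons, Finset.sum_map]
  simp only [g_zero, zero_mul, zero_add, Function.Embedding.prodMap, Function.Embedding.coeFn_mk,
    Prod.map, Function.Embedding.refl_apply]
  rw [Finset.Nat.sum_antidiagonal_eq_sum_range_succ (f := fun i j => g (i + 1) * h j), Finset.sum_range_succ]
  rw [Finset.sum_range_succ] at h1
  have h3 : ∀ j ∈ Finset.range n, g (j + 1) * h (n - j) =
      ((n.choose j : ℚ) * ((1 + (j : ℚ)) ^ ((j : ℤ) - 1) * ((n - j : ℕ) : ℚ) ^ (n - j))) / (n.factorial : ℚ) := by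
    intro j hj
    rw [Finset.mem_range] at hj
    obtain ⟨d, rfl⟩ : ∃ d, n = j + d + 1 := ⟨n - j - 1, by omega⟩
    rw [show j + d + 1 - j = d + 1 by omega, g_succ, h, g_succ, Nat.cast_choose ℚ (by omega : j ≤ j + d + 1),
      show j + d + 1 - j = d + 1 by omega]
    rw [zpow_sub₀ (by positivity), zpow_natCast]
    rw [Nat.factorial_succ j]
    push_cast
    field_simp
    ring
  rw [Finset.sum_congr rfl h3, ← Finset.sum_div]
  simp only [Nat.sub_self, h_zero, mul_zero, add_zero, pow_zero, Nat.choose_self, Nat.cast_one, one_mul, mul_one] at h1 ⊢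
  rw [eq_sub_of_add_eq h1]
  rw [h, g_succ, zpow_sub₀ (by positivity), zpow_natCast, Nat.factorial_succ]
  push_cast
  field_simp
  ring

lemma gg_sum (n : ℕ) : (n : ℚ) * ∑ ij ∈ Finset.HasAntidiagonal.antidiagonal n, g ij.1 * g ij.2 = 2 * (h n - g n) := by
  have h1 := h_rec n
  have h2 : ∑ ij ∈ Finset.HasAntidiagonal.antidiagonal n, g ij.1 * h ij.2 = ∑ ij ∈ Finset.HasAntidiagonal.antidiagonal n, h ij.1 * g ij.2 := by
    rw [← Finset.Nat.sum_antidiagonal_swap]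
    exact Finset.sum_congr rfl fun _ _ => by simp [mul_comm]
  have h3 : (n : ℚ) * ∑ ij ∈ Finset.HasAntidiagonal.antidiagonal n, g ij.1 * g ij.2 =
      ∑ ij ∈ Finset.HasAntidiagonal.antidiagonal n, g ij.1 * h ij.2 + ∑ ij ∈ Finset.HasAntidiagonal.antidiagonal n, h ij.1 * g ij.2 := by
    rw [Finset.mul_sum, ← Finset.sum_add_distrib]
    refine Finset.sum_congr rfl fun ij hij => ?_
    rw [← Finset.HasAntidiagonal.mem_antidiagonal.mp hij]; unfold h; push_cast; ring
  rw [h3, ← h2, h1]; ring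

section D2
open PowerSeries

abbrev S2 := PowerSeries (PowerSeries ℚ)

def c2 (a b : ℕ) (f : S2) : ℚ := coeff b (coeff a f)

lemma c2_ext {f f' : S2} (H : ∀ a b, c2 a b f = c2 a b f') : f = f' := by
  ext a b; exact H a b

lemma c2_mul (a b : ℕ) (f f' : S2) : c2 a b (f * f') =
    ∑ i ∈ Finset.HasAntidiagonal.antidiagonal a, ∑ j ∈ Finset.HasAntidiagonal.antidiagonal b, c2 i.1 j.1 f * c2 i.2 j.2 f' := by
  simp [c2, coeff_mul]

lemma c2_add (a b : ℕ) (f f' : S2) : c2 a b (f + f') = c2 a b f + c2 a b f' := by simp [c2]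
lemma c2_sub (a b : ℕ) (f f' : S2) : c2 a b (f - f') = c2 a b f - c2 a b f' := by simp [c2]

def dl (f : S2) : S2 := PowerSeries.mk fun a => PowerSeries.mk fun b => ((a : ℚ) + b) * c2 a b f

lemma c2_dl (a b : ℕ) (f : S2) : c2 a b (dl f) = ((a : ℚ) + b) * c2 a b f := by simp [c2, dl]

lemma dl_add (f f' : S2) : dl (f + f') = dl f + dl f' := by
  apply c2_ext; intro a b; simp only [c2_dl, c2_add]; ring
lemma dl_sub (f f' : S2) : dl (f - f') = dl f - dl f' := by
  apply c2_ext; intro a b; simp only [c2_dl, c2_sub]; ring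
lemma dl_mul (f f' : S2) : dl (f * f') = dl f * f' + f * dl f' := by
  apply c2_ext; intro a b; simp only [c2_dl, c2_add, c2_mul, Finset.mul_sum, ← Finset.sum_add_distrib]
  refine Finset.sum_congr rfl fun i hi => Finset.sum_congr rfl fun j hj => ?_
  rw [← Finset.HasAntidiagonal.mem_antidiagonal.mp hi, ← Finset.HasAntidiagonal.mem_antidiagonal.mp hj]
  push_cast; ring

def mk2 (F : ℕ → ℕ → ℚ) : S2 := PowerSeries.mk fun a => PowerSeries.mk fun b => F a b
lemma c2_mk2 (F) (a b : ℕ) : c2 a b (mk2 F) = F a b := by simp [c2, mk2]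

def inx (f : ℕ → ℚ) : S2 := mk2 fun a b => if b = 0 then f a else 0
def iny (f : ℕ → ℚ) : S2 := mk2 fun a b => if a = 0 then f b else 0

lemma c2_inx_mul (f : ℕ → ℚ) (F : S2) (a b : ℕ) :
    c2 a b (inx f * F) = ∑ i ∈ Finset.HasAntidiagonal.antidiagonal a, f i.1 * c2 i.2 b F := by
  rw [c2_mul]
  refine Finset.sum_congr rfl fun i _ => ?_
  rw [Finset.sum_eq_single (0, b)]
  · simp [inx, c2_mk2]
  · rintro ⟨j, l⟩ hj hne
    have : j ≠ 0 := by
      rintro rfl; simp at hj; simp [hj] at hne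
    simp [inx, c2_mk2, this]
  · simp

lemma c2_iny_mul (f : ℕ → ℚ) (F : S2) (a b : ℕ) :
    c2 a b (iny f * F) = ∑ i ∈ Finset.HasAntidiagonal.antidiagonal b, f i.1 * c2 a i.2 F := by
  rw [c2_mul, Finset.sum_eq_single (0, a)]
  · simp [iny, c2_mk2]
  · rintro ⟨j, l⟩ hj hne
    have : j ≠ 0 := by
      rintro rfl; simp at hj; simp [hj] at hne
    simp [iny, c2_mk2, this]
  · simp

lemma c2_inx_iny (f f' : ℕ → ℚ) (a b : ℕ) : c2 a b (inx f * iny f') = f a * f' b := by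
  rw [c2_inx_mul, Finset.sum_eq_single (a, 0)]
  · simp [iny, c2_mk2]
  · rintro ⟨j, l⟩ hj hne
    have : l ≠ 0 := by
      rintro rfl; simp at hj; simp [hj] at hne
    simp [iny, c2_mk2, this]
  · simp

lemma dl_inx (f : ℕ → ℚ) : dl (inx f) = inx (fun k => k * f k) := by
  apply c2_ext; intro a b; simp only [c2_dl, inx, c2_mk2]; split_ifs with H <;> simp [H]
lemma dl_iny (f : ℕ → ℚ) : dl (iny f) = iny (fun k => k * f k) := by
  apply c2_ext; intro a b; simp only [c2_dl, iny, c2_mk2]; split_ifs with H <;> simp [H]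

lemma inx_rec : inx h = inx g + inx g * inx h := by
  apply c2_ext; intro a b
  rw [c2_add, c2_inx_mul]
  simp only [inx, c2_mk2]
  split_ifs with H
  · exact h_rec a
  · simp
lemma iny_rec : iny h = iny g + iny g * iny h := by
  apply c2_ext; intro a b
  rw [c2_add, c2_iny_mul]
  simp only [iny, c2_mk2]
  split_ifs with H
  · exact h_rec b
  · simp

lemma ode_unique (s Z : S2) (hs : c2 0 0 s = 0) (hZ : (1 - s) * dl Z = Z) (h10 : c2 1 0 Z = 0)
    (h01 : c2 0 1 Z = 0) : Z = 0 := by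
  have key : ∀ N a b, a + b = N → c2 a b Z = 0 := by
    intro N
    induction N using Nat.strong_induction_on with
    | _ N ih =>
    intro a b hab
    have h1 := congrArg (c2 a b) hZ
    rw [sub_mul, one_mul, c2_sub, c2_dl, c2_mul] at h1
    rw [Finset.sum_eq_zero] at h1
    · by_cases hN : N = 1
      · have : (a = 1 ∧ b = 0) ∨ (a = 0 ∧ b = 1) := by omega
        rcases this with ⟨rfl, rfl⟩ | ⟨rfl, rfl⟩ <;> assumption
      · have h2 : ((a : ℚ) + b - 1) * c2 a b Z = 0 := by linarith
        rcases mul_eq_zero.mp h2 with h3 | h3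
        · exfalso; apply hN; rw [← hab]
          have : ((a + b : ℕ) : ℚ) = 1 := by push_cast; linarith
          exact_mod_cast this
        · exact h3
    · rintro ⟨i, i'⟩ hi
      refine Finset.sum_eq_zero ?_
      rintro ⟨j, j'⟩ hj
      simp at hi hj ⊢
      by_cases h0 : i = 0 ∧ j = 0
      · left; rw [h0.1, h0.2]; exact hs
      · right; rw [c2_dl, ih (i' + j') (by omega) i' j' rfl, mul_zero]
  apply c2_ext; intro a b; rw [key _ a b rfl]; simp [c2]

/-- `p^2 g(p) * h(b)/(p+b)` -/
def kap (p b : ℕ) : ℚ := p * h p * h b / (p + b)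

def ex : S2 := inx fun k => if k = 1 then 1 else 0
def ey : S2 := iny fun k => if k = 1 then 1 else 0

lemma c2_ex_mul (F : S2) (a b : ℕ) : c2 a b (ex * F) = if a = 0 then 0 else c2 (a - 1) b F := by
  rw [ex, c2_inx_mul]
  rcases a with _ | a
  · simp
  · rw [Finset.sum_eq_single (1, a)]
    · simp
    · rintro ⟨i, j⟩ hi hne
      simp at hi
      have : i ≠ 1 := by rintro rfl; apply hne; simp; omega
      simp [this]
    · intro H; simp at H; omega

lemma c2_ey_mul (F : S2) (a b : ℕ) : c2 a b (ey * F) = if b = 0 then 0 else c2 a (b - 1) F := by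
  rw [ey, c2_iny_mul]
  rcases b with _ | a
  · simp
  · rw [Finset.sum_eq_single (1, a)]
    · simp
    · rintro ⟨i, j⟩ hi hne
      simp at hi
      have : i ≠ 1 := by rintro rfl; apply hne; simp; omega
      simp [this]
    · intro H; simp at H; omega

def GG : S2 := mk2 fun a b => if a = 0 ∨ b = 0 then 0 else g (a + b)

lemma GG_eq : (ey - ex) * GG = ex * iny g - ey * inx g := by
  apply c2_ext; intro a b
  rw [sub_mul, c2_sub, c2_sub, c2_ey_mul, c2_ex_mul, c2_ex_mul, c2_ey_mul]
  simp only [GG, inx, iny, c2_mk2]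
  rcases a with _ | _ | a <;> rcases b with _ | _ | b <;> simp [g_zero]
  all_goals try ring_nf
  all_goals simp

lemma ey_sub_ex_ne : (ey - ex : S2) ≠ 0 := by
  intro H
  have := congrArg (c2 1 0) H
  rw [c2_sub] at this
  simp [ex, ey, inx, iny, c2_mk2] at this
  simp [c2] at this

lemma dl_ex : dl ex = ex := by
  unfold ex; rw [dl_inx]; congr 1; funext k; split_ifs with H <;> simp [H]
lemma dl_ey : dl ey = ey := by
  unfold ey; rw [dl_iny]; congr 1; funext k; split_ifs with H <;> simp [H]

lemma D2_series : inx g * mk2 kap + iny g * mk2 (fun a b => kap b a) + GG = inx h * iny h := by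
  set t := inx g with ht
  set u := iny g with hu
  set H := inx h with hH
  set V := iny h with hV
  set K := mk2 kap with hK
  have dt : dl t = H := dl_inx g
  have du : dl u = V := dl_iny g
  have rt : H = t + t * H := inx_rec
  have ru : V = u + u * V := iny_rec
  have dH : dl H = H + (H * H + t * dl H) := by
    conv_lhs => rw [rt, dl_add, dl_mul, dt]
  have dK : dl K = dl H * V := by
    apply c2_ext; intro a b
    rw [hH, hV, dl_inx, c2_inx_iny, c2_dl, hK, c2_mk2, kap]
    by_cases h0 : (a : ℚ) + b = 0
    · have : (a : ℚ) = 0 := by have : (0 : ℚ) ≤ a := by positivity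
                               have : (0 : ℚ) ≤ b := by positivity
                               linarith
      simp [this]
    · field_simp
  have hKK : K + mk2 (fun a b => kap b a) = H * V := by
    apply c2_ext; intro a b
    rw [hH, hV, c2_inx_iny, c2_add, hK, c2_mk2, c2_mk2, kap, kap]
    by_cases h0 : (a : ℚ) + b = 0
    · have h1 : (a : ℚ) = 0 := by have : (0 : ℚ) ≤ a := by positivity
                                  have : (0 : ℚ) ≤ b := by positivity
                                  linarith
      have h2 : (b : ℚ) = 0 := by linarith
      norm_cast at h1 h2
      simp [h1, h2, h_zero]
    · have : (b : ℚ) + a ≠ 0 := by rwa [add_comm]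
      field_simp
      ring
  have dG : (ey - ex) * dl GG = ex * V - ey * H := by
    have := congrArg dl GG_eq
    rw [dl_mul, dl_sub, dl_sub, dl_mul, dl_mul, dl_ex, dl_ey, dl_inx, dl_iny] at this
    have e1 : (inx fun k => (k : ℚ) * g k) = H := rfl
    have e2 : (iny fun k => (k : ℚ) * g k) = V := rfl
    rw [e1, e2, GG_eq] at this
    linear_combination this
  have dG2 : (1 - t) * (1 - u) * dl GG = GG + t * u := by
    apply mul_left_cancel₀ ey_sub_ex_ne
    have h1 : (1 - t) * H = t := by linear_combination rt
    have h2 : (1 - u) * V = u := by linear_combination ru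
    have h3 := GG_eq
    linear_combination (1 - t) * (1 - u) * dG + (1 - t) * ex * h2 - (1 - u) * ey * h1 - h3
  have h1 : (1 - t) * H = t := by linear_combination rt
  have h2 : (1 - u) * V = u := by linear_combination ru
  have h4 : (1 - t) * ((1 - t) * dl H) = H := by
    have : (1 - t) * dl H = H + H * H := by linear_combination dH
    rw [this]; linear_combination (1 + H) * h1 - rt
  have Z0 : (t - u) * K + GG - u * H = 0 := by
    apply ode_unique (t + u - t * u)
    · rw [c2_sub, c2_add, ht, c2_inx_mul, hu]; simp [inx, iny, c2_mk2, g_zero]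
    · rw [dl_sub, dl_add, dl_mul, dl_mul, dl_sub, dt, du, dK]
      linear_combination K * (1 - u) * h1 - K * (1 - t) * h2 + dG2
         - (1 - t) * H * h2 - u * h1 - u * h4 + (1 - t) * dl H * (t - u) * h2
    · rw [c2_sub, c2_add, sub_mul, c2_sub, ht, hu, c2_inx_mul, c2_iny_mul, c2_iny_mul, hK, GG]
      simp [c2_mk2, kap, g_zero, h_zero, Finset.Nat.antidiagonal_succ]
    · rw [c2_sub, c2_add, sub_mul, c2_sub, ht, hu, c2_inx_mul, c2_iny_mul, c2_iny_mul, hK, GG, hH]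
      simp [c2_mk2, kap, inx, g_zero, h_zero, Finset.Nat.antidiagonal_succ]
  linear_combination Z0 + u * hKK - H * h2

end D2

/-- `E(a,b)` -/
def EE (a b : ℕ) : ℚ := ∑ ij ∈ Finset.HasAntidiagonal.antidiagonal a, w ij.1 * g ij.2 / (ij.1 + b)

lemma D2_eq {a b : ℕ} (ha : 0 < a) (hb : 0 < b) :
    h a * h b = g (a + b) + h b * EE a b + h a * EE b a := by
  have := congrArg (c2 a b) D2_series
  rw [c2_add, c2_add, c2_inx_mul, c2_iny_mul, c2_inx_iny, GG, c2_mk2, if_neg (by omega)] at this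
  rw [← this, EE, EE, Finset.mul_sum, Finset.mul_sum]
  simp only [c2_mk2]
  rw [← Finset.Nat.sum_antidiagonal_swap, ← Finset.Nat.sum_antidiagonal_swap (n := b)]
  have e1 : ∀ x : ℕ × ℕ, ∀ b, g x.swap.1 * kap x.swap.2 b = h b * (w x.1 * g x.2 / (x.1 + b)) := by
    intro x b; simp only [kap, w, h, Prod.fst_swap, Prod.snd_swap]; ring
  simp only [e1]
  ring

lemma g1 : g 1 = 1 := by simp [g]
lemma w1 : w 1 = 1 := by simp [w, g]
end

end Hz

open Equiv

namespace Hz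

noncomputable section

/-! ### Part 3: the main algebraic identity -/

variable {ι : Type*} [DecidableEq ι]

lemma conv_Bb_congr (k k' : ι → ℚ) (p q : ℚ) (I : Finset ι) (H : ∀ i ∈ I, k i = k' i) :
    conv (Bb k p) (Bb k q) I = conv (Bb k' p) (Bb k' q) I := by
  unfold conv
  refine Finset.sum_congr rfl fun S hS => ?_
  rw [Finset.mem_powerset] at hS
  unfold Bb
  rw [Finset.sum_congr rfl (fun i hi => H i (hS hi)),
    Finset.sum_congr rfl (fun i hi => H i (Finset.sdiff_subset hi))]

lemma SB_eq' (k : ι → ℚ) (p q : ℚ) (hp : 0 < p) (hq : 0 < q) (I : Finset ι) (hk : ∀ i ∈ I, 0 < k i) (n : ℚ)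
    (hn : n = p + q + ∑ i ∈ I, k i) :
    p ^ 2 * q ^ 2 * conv (Bb k p) (Bb k q) I = (p + q) * n ^ ((I.card : ℤ) - 1)
      - n ^ ((I.card : ℤ) - 2) * ∑ j ∈ I, k j * (p / (p + k j) + q / (q + k j)) * (p + q + k j)
      + p * q * n ^ ((I.card : ℤ) - 3) * ∑ j ∈ I, k j * (n - p - q - k j) * (1 / (p + k j) + 1 / (q + k j)) := by
  set k' : ι → ℚ := fun i => if i ∈ I then k i else 1 with hk'
  have e : ∀ i ∈ I, k i = k' i := fun i hi => by simp [hk', hi]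
  have hpos : ∀ i, 0 < k' i := by
    intro i; simp only [hk']; split_ifs with H
    · exact hk i H
    · exact one_pos
  have := SB_eq k' hpos p q hp hq I n (by rw [hn, Finset.sum_congr rfl e])
  rw [conv_Bb_congr k k' p q I e, this]
  congr 1
  · congr 2
    exact Finset.sum_congr rfl fun i hi => by rw [e i hi]
  · congr 1
    exact Finset.sum_congr rfl fun i hi => by rw [e i hi]

def RR (a b : ℕ) : ℚ := ∑ ij ∈ Finset.HasAntidiagonal.antidiagonal a, g ij.1 * g ij.2 * (ij.1 / (ij.1 + b))
def TT (a b : ℕ) : ℚ := ∑ ij ∈ Finset.HasAntidiagonal.antidiagonal a, g ij.1 * g ij.2 * (ij.1 * ij.2 / (ij.1 + b))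
def CC (a : ℕ) : ℚ := ∑ ij ∈ Finset.HasAntidiagonal.antidiagonal a, g ij.1 * g ij.2

lemma anti_swap (a : ℕ) (f : ℕ → ℕ → ℚ) :
    ∑ ij ∈ Finset.HasAntidiagonal.antidiagonal a, f ij.1 ij.2 = ∑ ij ∈ Finset.HasAntidiagonal.antidiagonal a, f ij.2 ij.1 := by
  rw [← Finset.Nat.sum_antidiagonal_swap]
  rfl

lemma ER (a b : ℕ) (hb : 0 < b) : EE a b + b * RR a b = a * CC a / 2 := by
  have hb' : (0 : ℚ) < b := by exact_mod_cast hb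
  have h1 : EE a b + b * RR a b = ∑ ij ∈ Finset.HasAntidiagonal.antidiagonal a, g ij.1 * g ij.2 * (ij.1 : ℚ) := by
    rw [EE, RR, Finset.mul_sum, ← Finset.sum_add_distrib]
    refine Finset.sum_congr rfl fun ij _ => ?_
    have : (ij.1 : ℚ) + b ≠ 0 := by positivity
    rw [w]; field_simp
  have h2 : a * CC a = ∑ ij ∈ Finset.HasAntidiagonal.antidiagonal a, g ij.1 * g ij.2 * (ij.1 : ℚ)
      + ∑ ij ∈ Finset.HasAntidiagonal.antidiagonal a, g ij.2 * g ij.1 * (ij.2 : ℚ) := by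
    rw [CC, Finset.mul_sum, ← Finset.sum_add_distrib]
    refine Finset.sum_congr rfl fun ij hij => ?_
    rw [← Finset.HasAntidiagonal.mem_antidiagonal.mp hij]; push_cast; ring
  rw [← anti_swap a (fun i j => g i * g j * (i : ℚ))] at h2
  rw [h1, h2]; ring

lemma ET (a b : ℕ) (hb : 0 < b) : EE a b + TT a b = a * RR a b := by
  have hb' : (0 : ℚ) < b := by exact_mod_cast hb
  rw [EE, RR, TT, Finset.mul_sum, ← Finset.sum_add_distrib]
  refine Finset.sum_congr rfl fun ij hij => ?_
  have : (ij.1 : ℚ) + b ≠ 0 := by positivity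
  rw [← Finset.HasAntidiagonal.mem_antidiagonal.mp hij, w]; push_cast; field_simp

lemma aCC (a : ℕ) : a * CC a = 2 * (h a - g a) := gg_sum a

/-- inner sum -/
lemma V_eq (k : ι → ℕ) (J : Finset ι) (hk : ∀ i ∈ J, 0 < k i) (a : ℕ) (ha : 0 < a) (n : ℚ)
    (hn : n = a + ∑ i ∈ J, (k i : ℚ)) :
    ∑ pq ∈ Finset.HasAntidiagonal.antidiagonal a, w pq.1 * w pq.2 * conv (Bb (fun i => (k i : ℚ)) pq.1) (Bb (fun i => (k i : ℚ)) pq.2) J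
    = n ^ ((J.card : ℤ) - 3) * (- ((J.card : ℚ) - 1) * (2 * (a : ℚ) ^ 2 * (h a - g a)) + 2 * ∑ j ∈ J, ((a : ℚ) + k j) ^ 2 * EE a (k j)) := by
  have hnpos : 0 < n := by
    have : (0 : ℚ) < a := by exact_mod_cast ha
    rw [hn]; positivity
  set N := n ^ ((J.card : ℤ) - 3) with hN
  have e1 : n ^ ((J.card : ℤ) - 1) = N * n ^ 2 := by
    rw [hN, ← zpow_natCast, ← zpow_add₀ hnpos.ne']; congr 1; push_cast; ring
  have e2 : n ^ ((J.card : ℤ) - 2) = N * n := by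
    rw [hN, ← zpow_add_one₀ hnpos.ne']; congr 1; ring
  have step : ∀ pq ∈ Finset.HasAntidiagonal.antidiagonal a,
      w pq.1 * w pq.2 * conv (Bb (fun i => (k i : ℚ)) pq.1) (Bb (fun i => (k i : ℚ)) pq.2) J
      = N * (a * n ^ 2 * (g pq.1 * g pq.2)
        - n * ∑ j ∈ J, k j * (a + k j) * (g pq.1 * g pq.2 * (pq.1 / (pq.1 + k j)) + g pq.2 * g pq.1 * (pq.2 / (pq.2 + k j)))
        + ∑ j ∈ J, k j * (n - a - k j) * (g pq.1 * g pq.2 * (pq.1 * pq.2 / (pq.1 + k j)) + g pq.2 * g pq.1 * (pq.2 * pq.1 / (pq.2 + k j)))) := by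
    rintro ⟨p, q⟩ hpq
    have hpq' := Finset.HasAntidiagonal.mem_antidiagonal.mp hpq
    simp only at hpq' ⊢
    rcases Nat.eq_zero_or_pos p with rfl | hp
    · simp [w, g_zero]
    rcases Nat.eq_zero_or_pos q with rfl | hq
    · simp [w, g_zero]
    have hp' : (0 : ℚ) < p := by exact_mod_cast hp
    have hq' : (0 : ℚ) < q := by exact_mod_cast hq
    have ha' : (a : ℚ) = p + q := by rw [← hpq']; push_cast; ring
    have := SB_eq' (fun i => (k i : ℚ)) p q hp' hq' J (fun i hi => by exact_mod_cast hk i hi) n (by rw [hn, ha'])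
    rw [e1, e2, ← hN] at this
    calc _ = g p * g q * ((p : ℚ) ^ 2 * (q : ℚ) ^ 2 * conv (Bb (fun i => (k i : ℚ)) p) (Bb (fun i => (k i : ℚ)) q) J) := by
          unfold w; ring
      _ = _ := by
          rw [this, ha', mul_add, mul_sub, mul_add, mul_sub]
          congr 1
          · congr 1
            · ring
            · simp only [Finset.mul_sum]
              exact Finset.sum_congr rfl fun j _ => by ring
          · simp only [Finset.mul_sum]
            exact Finset.sum_congr rfl fun j _ => by ring
  rw [Finset.sum_congr rfl step, ← Finset.mul_sum]
  congr 1
  rw [Finset.sum_add_distrib, Finset.sum_sub_distrib, ← Finset.mul_sum, ← Finset.mul_sum, Finset.sum_comm, Finset.sum_comm (s := Finset.HasAntidiagonal.antidiagonal a)]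
  have s1 : ∀ b : ℕ, ∑ ij ∈ Finset.HasAntidiagonal.antidiagonal a, (g ij.1 * g ij.2 * ((ij.1 : ℚ) / (ij.1 + b)) + g ij.2 * g ij.1 * ((ij.2 : ℚ) / (ij.2 + b))) = 2 * RR a b := by
    intro b
    rw [Finset.sum_add_distrib, ← anti_swap a (fun i j => g i * g j * ((i : ℚ) / (i + b)))]
    rw [RR]; ring
  have s2 : ∀ b : ℕ, ∑ ij ∈ Finset.HasAntidiagonal.antidiagonal a, (g ij.1 * g ij.2 * ((ij.1 : ℚ) * ij.2 / (ij.1 + b)) + g ij.2 * g ij.1 * ((ij.2 : ℚ) * ij.1 / (ij.2 + b))) = 2 * TT a b := by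
    intro b
    rw [Finset.sum_add_distrib, ← anti_swap a (fun i j => g i * g j * ((i : ℚ) * j / (i + b)))]
    rw [TT]; ring
  simp only [← Finset.mul_sum, s1, s2]
  rw [← CC, Finset.mul_sum]
  have s3 : ∑ j ∈ J, k j * (n - a - k j) * (2 * TT a (k j)) - ∑ j ∈ J, n * (k j * (a + k j) * (2 * RR a (k j)))
     = ∑ j ∈ J, (a * CC a * (- n * k j - a * (a + k j)) + 2 * (((a : ℚ) + k j) ^ 2 * EE a (k j))) := by
    rw [← Finset.sum_sub_distrib]
    refine Finset.sum_congr rfl fun j hj => ?_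
    have h1 := ER a (k j) (hk j hj)
    have h2 := ET a (k j) (hk j hj)
    have h2' : TT a (k j) = a * RR a (k j) - EE a (k j) := by linarith
    rw [h2']
    linear_combination (-2 * n * (a + k j) + 2 * a * (n - a - k j)) * h1
  have s4 : ∑ j ∈ J, (a * CC a * (- n * k j - a * (a + k j)) + 2 * (((a : ℚ) + k j) ^ 2 * EE a (k j)))
     = a * CC a * (- n * (n - a) - J.card * a ^ 2 - a * (n - a)) + 2 * ∑ j ∈ J, ((a : ℚ) + k j) ^ 2 * EE a (k j) := by
    rw [Finset.sum_add_distrib, ← Finset.mul_sum, ← Finset.mul_sum]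
    congr 2
    have : n - a = ∑ i ∈ J, (k i : ℚ) := by rw [hn]; ring
    rw [Finset.sum_sub_distrib, ← Finset.mul_sum, ← this, ← Finset.mul_sum, Finset.sum_add_distrib, ← this]
    simp; ring
  have h5 := aCC a
  linear_combination s3 + s4 + (-(J.card - 1) * (a : ℚ) ^ 2) * h5

theorem star (k : ι → ℕ) (I : Finset ι) (hI : I.Nonempty) (hk : ∀ i ∈ I, 0 < k i) (n : ℚ) (hn : n = ∑ i ∈ I, (k i : ℚ)) :
    2 * (n + I.card - 2) * (n ^ ((I.card : ℤ) - 3) * ∏ i ∈ I, w (k i)) =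
    n ^ ((I.card : ℤ) - 4) * ∑ i ∈ I, ∑ j ∈ I.erase i, (k i : ℚ) * k j * w (k i + k j) * ∏ l ∈ (I.erase i).erase j, w (k l)
    + ∑ i ∈ I, k i * (∑ pq ∈ Finset.HasAntidiagonal.antidiagonal (k i), w pq.1 * w pq.2 *
       conv (Bb (fun i => (k i : ℚ)) pq.1) (Bb (fun i => (k i : ℚ)) pq.2) (I.erase i)) * ∏ l ∈ I.erase i, w (k l) := by
  have hnpos : 0 < n := by
    rw [hn]; exact Finset.sum_pos (fun i hi => by exact_mod_cast hk i hi) hI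
  set W := ∏ i ∈ I, w (k i) with hW
  set N := n ^ ((I.card : ℤ) - 4) with hN
  have e1 : n ^ ((I.card : ℤ) - 3) = N * n := by
    rw [hN, ← zpow_add_one₀ hnpos.ne']; congr 1; ring
  have W1 : ∀ i ∈ I, (k i : ℚ) * ∏ l ∈ I.erase i, w (k l) = W / h (k i) := by
    intro i hi
    have := h_pos (hk i hi)
    rw [hW, ← Finset.mul_prod_erase I _ hi, eq_div_iff this.ne', w, h]; ring
  have W2 : ∀ i ∈ I, ∀ j ∈ I.erase i, (k i : ℚ) * k j * w (k i + k j) * ∏ l ∈ (I.erase i).erase j, w (k l)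
      = W * (((k i : ℚ) + k j) ^ 2 * (g (k i + k j) / (h (k i) * h (k j)))) := by
    intro i hi j hj
    have h1 := h_pos (hk i hi)
    have h2 := h_pos (hk j (Finset.mem_of_mem_erase hj))
    have := W1 i hi
    rw [← Finset.mul_prod_erase _ _ hj] at this
    have h3 : (k j : ℚ) * h (k j) = w (k j) := by rw [w, h]; ring
    have h4 : W = k i * (w (k j) * ∏ x ∈ (I.erase i).erase j, w (k x)) * h (k i) := by
      rw [this]; field_simp
    rw [h4, ← h3, w]; push_cast; field_simp
  have step : ∀ i ∈ I, k i * (∑ pq ∈ Finset.HasAntidiagonal.antidiagonal (k i), w pq.1 * w pq.2 *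
       conv (Bb (fun i => (k i : ℚ)) pq.1) (Bb (fun i => (k i : ℚ)) pq.2) (I.erase i)) * ∏ l ∈ I.erase i, w (k l)
      = N * W * (-2 * ((I.card : ℚ) - 2) * ((k i : ℚ) ^ 2 - k i) + 2 * ∑ j ∈ I.erase i, ((k i : ℚ) + k j) ^ 2 * (EE (k i) (k j) / h (k i))) := by
    intro i hi
    rw [V_eq k (I.erase i) (fun j hj => hk j (Finset.mem_of_mem_erase hj)) (k i) (hk i hi) n
      (by rw [hn, Finset.add_sum_erase I (fun i => (k i : ℚ)) hi])]
    have hc : ((I.erase i).card : ℤ) = I.card - 1 := by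
      rw [Finset.card_erase_of_mem hi, Nat.cast_sub (Finset.card_pos.mpr ⟨i, hi⟩)]; rfl
    have hc' : ((I.erase i).card : ℚ) = I.card - 1 := by exact_mod_cast hc
    rw [hc, hc', show (I.card : ℤ) - 1 - 3 = I.card - 4 by ring, ← hN]
    have h1 := h_pos (hk i hi)
    have h2 := W1 i hi
    have h3 : h (k i) = k i * g (k i) := rfl
    have h4 : ∑ j ∈ I.erase i, ((k i : ℚ) + k j) ^ 2 * (EE (k i) (k j) / h (k i)) = (∑ j ∈ I.erase i, ((k i : ℚ) + k j) ^ 2 * EE (k i) (k j)) / h (k i) := by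
      rw [Finset.sum_div]; exact Finset.sum_congr rfl fun j _ => by ring
    rw [h4]
    have h5 : (k i : ℚ) ^ 2 - k i = (k i : ℚ) ^ 2 * (h (k i) - g (k i)) / h (k i) := by
      rw [eq_div_iff h1.ne', h3]; ring
    rw [h5]
    calc _ = N * (-((I.card : ℚ) - 1 - 1) * (2 * (k i) ^ 2 * (h (k i) - g (k i))) + 2 * ∑ j ∈ I.erase i, (↑(k i) + ↑(k j)) ^ 2 * EE (k i) (k j)) * ((k i : ℚ) * ∏ l ∈ I.erase i, w (k l)) := by ring
      _ = _ := by rw [h2]; ring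
  rw [Finset.sum_congr rfl step, Finset.sum_congr rfl (fun i hi => Finset.sum_congr rfl (W2 i hi)), e1]
  simp only [← Finset.mul_sum]
  rw [Finset.sum_add_distrib, ← Finset.mul_sum, ← Finset.mul_sum]
  -- symmetrize
  have sc : ∀ F : ι → ι → ℚ, ∑ i ∈ I, ∑ j ∈ I.erase i, F i j = ∑ i ∈ I, ∑ j ∈ I.erase i, F j i := by
    intro F
    rw [Finset.sum_sigma', Finset.sum_sigma']
    refine Finset.sum_nbij' (fun x => ⟨x.2, x.1⟩) (fun x => ⟨x.2, x.1⟩) ?_ ?_ ?_ ?_ ?_ <;>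
      simp +contextual [eq_comm]
  have s1 : 2 * ∑ i ∈ I, ∑ j ∈ I.erase i, ((k i : ℚ) + k j) ^ 2 * (EE (k i) (k j) / h (k i)) =
      ∑ i ∈ I, ∑ j ∈ I.erase i, ((k i : ℚ) + k j) ^ 2 * (EE (k i) (k j) / h (k i)) +
      ∑ i ∈ I, ∑ j ∈ I.erase i, ((k j : ℚ) + k i) ^ 2 * (EE (k j) (k i) / h (k j)) := by
    rw [← sc]; ring
  have s2 : ∑ i ∈ I, ∑ j ∈ I.erase i, ((k i : ℚ) + k j) ^ 2 * (g (k i + k j) / (h (k i) * h (k j)))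
      + 2 * ∑ i ∈ I, ∑ j ∈ I.erase i, ((k i : ℚ) + k j) ^ 2 * (EE (k i) (k j) / h (k i))
      = ∑ i ∈ I, ∑ j ∈ I.erase i, ((k i : ℚ) + k j) ^ 2 := by
    rw [s1]
    simp only [← Finset.sum_add_distrib]
    refine Finset.sum_congr rfl fun i hi => Finset.sum_congr rfl fun j hj => ?_
    have h1 := h_pos (hk i hi)
    have hj' := hk j (Finset.mem_of_mem_erase hj)
    have h2 := h_pos hj'
    have h3 := D2_eq (hk i hi) hj'
    field_simp
    linear_combination - ((k i : ℚ) + k j) ^ 2 * h3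
  have s3 : ∑ i ∈ I, ∑ j ∈ I.erase i, ((k i : ℚ) + k j) ^ 2 = 2 * ((I.card : ℚ) - 2) * ∑ i ∈ I, (k i : ℚ) ^ 2 + 2 * n ^ 2 := by
    have : ∀ i ∈ I, ∑ j ∈ I.erase i, ((k i : ℚ) + k j) ^ 2 = ((I.card : ℚ) - 4) * (k i : ℚ) ^ 2 + 2 * n * k i + ∑ j ∈ I, (k j : ℚ) ^ 2 := by
      intro i hi
      have h0 := Finset.add_sum_erase I (fun j => ((k i : ℚ) + k j) ^ 2) hi
      have h1 : ∑ j ∈ I, ((k i : ℚ) + k j) ^ 2 = I.card * (k i : ℚ) ^ 2 + 2 * k i * n + ∑ j ∈ I, (k j : ℚ) ^ 2 := by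
        simp only [add_sq, Finset.sum_add_distrib, ← Finset.mul_sum, ← hn]; simp
      linarith
    rw [Finset.sum_congr rfl this, Finset.sum_add_distrib, Finset.sum_add_distrib, ← Finset.mul_sum, ← Finset.mul_sum, ← hn]
    simp; ring
  have s4 : ∑ i ∈ I, ((k i : ℚ) ^ 2 - k i) = ∑ i ∈ I, (k i : ℚ) ^ 2 - n := by rw [Finset.sum_sub_distrib, ← hn]
  rw [s4]
  linear_combination -N * W * (s2 + s3)

end

end Hz

open Equiv

namespace Hz

noncomputable section

set_option linter.unusedSectionVars false

open scoped Classical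

/-! ### Part 4: blocks of equivalence relations -/

variable {α : Type*} [Fintype α] [DecidableEq α]

def cl (R : Setoid α) (x : α) : Finset α := Finset.univ.filter fun y => R x y

@[simp] lemma mem_cl {R : Setoid α} {x y : α} : y ∈ cl R x ↔ R x y := by simp [cl]

lemma self_mem_cl (R : Setoid α) (x : α) : x ∈ cl R x := by simp

lemma cl_eq_iff {R : Setoid α} {x y : α} : cl R x = cl R y ↔ R x y := by
  constructor
  · intro H
    have : y ∈ cl R y := self_mem_cl R y
    rw [← H] at this; exact mem_cl.mp this
  · intro H; ext z; rw [mem_cl, mem_cl]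
    exact ⟨fun h1 => R.trans' (R.symm' H) h1, fun h1 => R.trans' H h1⟩

def blocks (R : Setoid α) : Finset (Finset α) := Finset.univ.image (cl R)

lemma mem_blocks {R : Setoid α} {c : Finset α} : c ∈ blocks R ↔ ∃ x, cl R x = c := by simp [blocks]

lemma cl_mem (R : Setoid α) (x : α) : cl R x ∈ blocks R := mem_blocks.mpr ⟨x, rfl⟩

lemma eq_cl_of_mem {R : Setoid α} {c : Finset α} (hc : c ∈ blocks R) {x : α} (hx : x ∈ c) : c = cl R x := by
  obtain ⟨y, rfl⟩ := mem_blocks.mp hc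
  exact cl_eq_iff.mpr (mem_cl.mp hx)

lemma block_nonempty {R : Setoid α} {c : Finset α} (hc : c ∈ blocks R) : c.Nonempty := by
  obtain ⟨y, rfl⟩ := mem_blocks.mp hc
  exact ⟨y, self_mem_cl R y⟩

lemma block_card_pos {R : Setoid α} {c : Finset α} (hc : c ∈ blocks R) : 0 < c.card :=
  Finset.card_pos.mpr (block_nonempty hc)

lemma blocks_inj {R Q : Setoid α} (H : blocks R = blocks Q) : R = Q := by
  ext x y
  have h1 : cl R x ∈ blocks Q := H ▸ cl_mem R x
  have := eq_cl_of_mem h1 (self_mem_cl R x)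
  rw [← mem_cl, this, mem_cl]

/-- saturated sets -/
def Sat (R : Setoid α) (S : Finset α) : Prop := ∀ x ∈ S, ∀ y, R x y → y ∈ S

def blIn (R : Setoid α) (S : Finset α) : Finset (Finset α) := (blocks R).filter (· ⊆ S)

lemma mem_blIn {R : Setoid α} {S c : Finset α} : c ∈ blIn R S ↔ c ∈ blocks R ∧ c ⊆ S := by simp [blIn]

lemma Sat.cl_sub {R : Setoid α} {S : Finset α} (hS : Sat R S) {x : α} (hx : x ∈ S) : cl R x ⊆ S :=
  fun y hy => hS x hx y (mem_cl.mp hy)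

lemma Sat.cl_mem_blIn {R : Setoid α} {S : Finset α} (hS : Sat R S) {x : α} (hx : x ∈ S) : cl R x ∈ blIn R S :=
  mem_blIn.mpr ⟨cl_mem R x, hS.cl_sub hx⟩

lemma sat_cl {R Q : Setoid α} (H : R ≤ Q) (x : α) : Sat R (cl Q x) := by
  intro y hy z hz
  rw [mem_cl] at *
  exact Q.trans' hy (H hz)

lemma sat_block {R Q : Setoid α} (H : R ≤ Q) {B} (hB : B ∈ blocks Q) : Sat R B := by
  obtain ⟨x, rfl⟩ := mem_blocks.mp hB
  exact sat_cl H x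

/-- sum over a saturated set of a function of the class -/
lemma sum_cl {R : Setoid α} {S : Finset α} (hS : Sat R S) (F : Finset α → ℚ) :
    ∑ x ∈ S, F (cl R x) = ∑ c ∈ blIn R S, (c.card : ℚ) * F c := by
  rw [← Finset.sum_fiberwise_of_maps_to (t := blIn R S) (g := cl R) (fun x hx => hS.cl_mem_blIn hx)]
  refine Finset.sum_congr rfl fun c hc => ?_
  rw [Finset.sum_congr rfl (g := fun _ => F c)]
  · rw [Finset.sum_const, nsmul_eq_mul]
    congr 3
    ext x
    rw [Finset.mem_filter]
    constructor
    · rintro ⟨_, rfl⟩; exact self_mem_cl R x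
    · intro hx; exact ⟨(mem_blIn.mp hc).2 hx, (eq_cl_of_mem (mem_blIn.mp hc).1 hx).symm⟩
  · intro x hx; rw [(Finset.mem_filter.mp hx).2]

lemma sum_card_blIn {R : Setoid α} {S : Finset α} (hS : Sat R S) :
    (S.card : ℚ) = ∑ c ∈ blIn R S, (c.card : ℚ) := by
  have := sum_cl hS (fun _ => 1)
  simpa using this

lemma biUnion_blIn {R : Setoid α} {S : Finset α} (hS : Sat R S) : (blIn R S).biUnion id = S := by
  ext x
  simp only [Finset.mem_biUnion, id]
  constructor
  · rintro ⟨c, hc, hx⟩; exact (mem_blIn.mp hc).2 hx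
  · intro hx; exact ⟨cl R x, hS.cl_mem_blIn hx, self_mem_cl R x⟩

lemma sat_biUnion {R : Setoid α} {T : Finset (Finset α)} (hT : T ⊆ blocks R) : Sat R (T.biUnion id) := by
  intro x hx y hy
  simp only [Finset.mem_biUnion, id] at *
  obtain ⟨c, hc, hx⟩ := hx
  refine ⟨c, hc, ?_⟩
  rw [eq_cl_of_mem (hT hc) hx, mem_cl]; exact hy

lemma blIn_biUnion {R : Setoid α} {T : Finset (Finset α)} (hT : T ⊆ blocks R) : blIn R (T.biUnion id) = T := by
  ext c
  rw [mem_blIn]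
  constructor
  · rintro ⟨hc, hcT⟩
    obtain ⟨x, hx⟩ := block_nonempty hc
    have := hcT hx
    simp only [Finset.mem_biUnion, id] at this
    obtain ⟨d, hd, hxd⟩ := this
    rw [eq_cl_of_mem hc hx, ← eq_cl_of_mem (hT hd) hxd]; exact hd
  · intro hc
    exact ⟨hT hc, fun x hx => Finset.mem_biUnion.mpr ⟨c, hc, hx⟩⟩

lemma sat_sdiff {R : Setoid α} {S B : Finset α} (hB : Sat R B) (hS : Sat R S) : Sat R (B \ S) := by
  intro x hx y hy
  rw [Finset.mem_sdiff] at *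
  exact ⟨hB x hx.1 y hy, fun h => hx.2 (hS y h x (R.symm' hy))⟩

lemma blIn_sdiff {R : Setoid α} {S B : Finset α} (hS : Sat R S) :
    blIn R (B \ S) = blIn R B \ blIn R S := by
  ext c
  simp only [mem_blIn, Finset.mem_sdiff, not_and]
  constructor
  · rintro ⟨hc, hcT⟩
    refine ⟨⟨hc, fun x hx => (Finset.mem_sdiff.mp (hcT hx)).1⟩, fun _ hcS => ?_⟩
    obtain ⟨x, hx⟩ := block_nonempty hc
    exact (Finset.mem_sdiff.mp (hcT hx)).2 (hcS hx)
  · rintro ⟨⟨hc, hcB⟩, h2⟩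
    refine ⟨hc, fun x hx => Finset.mem_sdiff.mpr ⟨hcB hx, fun hxS => h2 hc ?_⟩⟩
    rw [eq_cl_of_mem hc hx]; exact hS.cl_sub hxS

/-- local factor -/
def fB (R : Setoid α) (B : Finset α) : ℚ :=
  (B.card : ℚ) ^ (((blIn R B).card : ℤ) - 3) * ∏ c ∈ blIn R B, w c.card

/-- the saturated subsets of `B` separating `x` from `y` -/
def seps (R : Setoid α) (B : Finset α) (x y : α) : Finset (Finset α) :=
  B.powerset.filter fun S => Sat R S ∧ x ∈ S ∧ y ∉ S

lemma mem_seps {R : Setoid α} {B : Finset α} {x y : α} {S : Finset α} :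
    S ∈ seps R B x y ↔ S ⊆ B ∧ Sat R S ∧ x ∈ S ∧ y ∉ S := by simp [seps]

def kq : Finset α → ℚ := fun c => (c.card : ℚ)

lemma L_lemma {R : Setoid α} {B : Finset α} (hB : Sat R B) {x y : α} (hx : x ∈ B) (hy : y ∈ B)
    (hxy : ¬ R x y) :
    ∑ S ∈ seps R B x y, fB R S * fB R (B \ S) =
      (∏ c ∈ blIn R B, w c.card) * conv (Bb kq (cl R x).card) (Bb kq (cl R y).card)
        (((blIn R B).erase (cl R x)).erase (cl R y)) := by
  set I := ((blIn R B).erase (cl R x)).erase (cl R y) with hI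
  have hne : cl R x ≠ cl R y := fun h => hxy (cl_eq_iff.mp h)
  have hxB := hB.cl_mem_blIn hx
  have hyB := hB.cl_mem_blIn hy
  have hxI : cl R x ∉ I := by simp [hI]
  have hyI : cl R y ∉ I := by simp [hI]
  have hIB : I ⊆ blIn R B := (Finset.erase_subset _ _).trans (Finset.erase_subset _ _)
  have hBb : ∀ c ∈ blIn R B, c ∈ blocks R := fun c hc => (mem_blIn.mp hc).1
  unfold conv
  rw [Finset.mul_sum]
  refine Finset.sum_nbij' (fun S => (blIn R S).erase (cl R x)) (fun T => (insert (cl R x) T).biUnion id)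
    ?_ ?_ ?_ ?_ ?_
  · intro S hS
    obtain ⟨h1, h2, h3, h4⟩ := mem_seps.mp hS
    rw [Finset.mem_powerset]
    intro c hc
    rw [Finset.mem_erase, mem_blIn] at hc
    rw [hI, Finset.mem_erase, Finset.mem_erase, mem_blIn]
    refine ⟨?_, hc.1, hc.2.1, hc.2.2.trans h1⟩
    rintro rfl
    exact h4 (hc.2.2 (self_mem_cl R y))
  · intro T hT
    rw [Finset.mem_powerset] at hT
    have hT' : insert (cl R x) T ⊆ blIn R B := Finset.insert_subset hxB (hT.trans hIB)
    have hTb : insert (cl R x) T ⊆ blocks R := fun c hc => hBb c (hT' hc)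
    refine mem_seps.mpr ⟨?_, sat_biUnion hTb, ?_, ?_⟩
    · intro z hz
      obtain ⟨c, hc, hz⟩ := Finset.mem_biUnion.mp hz
      exact (mem_blIn.mp (hT' hc)).2 hz
    · exact Finset.mem_biUnion.mpr ⟨_, Finset.mem_insert_self _ _, self_mem_cl R x⟩
    · intro h
      obtain ⟨c, hc, hz⟩ := Finset.mem_biUnion.mp h
      have := eq_cl_of_mem (hTb hc) hz
      rw [Finset.mem_insert] at hc
      rcases hc with rfl | hc
      · exact hne this
      · rw [this] at hc; exact hyI (hT hc)
  · intro S hS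
    obtain ⟨h1, h2, h3, h4⟩ := mem_seps.mp hS
    rw [Finset.insert_erase (h2.cl_mem_blIn h3), biUnion_blIn h2]
  · intro T hT
    rw [Finset.mem_powerset] at hT
    have hT' : insert (cl R x) T ⊆ blIn R B := Finset.insert_subset hxB (hT.trans hIB)
    have hTb : insert (cl R x) T ⊆ blocks R := fun c hc => hBb c (hT' hc)
    rw [blIn_biUnion hTb, Finset.erase_insert (fun h => hxI (hT h))]
  · intro S hS
    obtain ⟨h1, h2, h3, h4⟩ := mem_seps.mp hS
    set T := (blIn R S).erase (cl R x) with hT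
    have hS' : blIn R S = insert (cl R x) T := (Finset.insert_erase (h2.cl_mem_blIn h3)).symm
    have hxT : cl R x ∉ T := by simp [hT]
    have hSB : blIn R S ⊆ blIn R B := fun c hc => mem_blIn.mpr ⟨(mem_blIn.mp hc).1, (mem_blIn.mp hc).2.trans h1⟩
    have hyS : cl R y ∉ blIn R S := fun h => h4 ((mem_blIn.mp h).2 (self_mem_cl R y))
    have hD : blIn R (B \ S) = insert (cl R y) (I \ T) := by
      rw [blIn_sdiff h2]
      ext c
      simp only [hI, hT, Finset.mem_sdiff, Finset.mem_insert, Finset.mem_erase]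
      by_cases e1 : c = cl R y
      · subst e1; simp [hyB, hyS]
      · by_cases e2 : c = cl R x
        · subst e2; simp [e1, h2.cl_mem_blIn h3]
        · simp [e1, e2]
    have hyT : cl R y ∉ I \ T := fun h => hyI (Finset.mem_sdiff.mp h).1
    have hcS := sum_card_blIn h2
    have hcD := sum_card_blIn (sat_sdiff hB h2)
    have hprod : ∏ c ∈ blIn R B, w c.card = (∏ c ∈ blIn R S, w c.card) * ∏ c ∈ blIn R (B \ S), w c.card := by
      rw [blIn_sdiff h2, mul_comm, Finset.prod_sdiff hSB]
    rw [hprod]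
    unfold fB Bb
    rw [hcS, hcD, hS', hD, Finset.card_insert_of_notMem hxT, Finset.card_insert_of_notMem hyT,
      Finset.sum_insert hxT, Finset.sum_insert hyT]
    have z1 : ((T.card + 1 : ℕ) : ℤ) - 3 = T.card - 2 := by push_cast; ring
    have z2 : (((I \ T).card + 1 : ℕ) : ℤ) - 3 = (I \ T).card - 2 := by push_cast; ring
    rw [z1, z2]
    simp only [kq]
    ring

/-! joining two classes -/

def pr (a b : α) : Setoid α where
  r x y := x = y ∨ ((x = a ∨ x = b) ∧ (y = a ∨ y = b))
  iseqv := by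
    refine ⟨fun x => Or.inl rfl, ?_, ?_⟩
    · intro x y h; rcases h with rfl | h
      · exact Or.inl rfl
      · exact Or.inr h.symm
    · intro x y z h1 h2
      rcases h1 with rfl | h1
      · exact h2
      · rcases h2 with rfl | h2
        · exact Or.inr h1
        · exact Or.inr ⟨h1.1, h2.2⟩

lemma pr_rel (a b : α) : pr a b a b := Or.inr ⟨Or.inl rfl, Or.inr rfl⟩

lemma pr_le_iff {a b : α} {R : Setoid α} : pr a b ≤ R ↔ R a b := by
  constructor
  · intro H; exact H (pr_rel a b)
  · intro H x y h
    rcases h with rfl | ⟨rfl | rfl, rfl | rfl⟩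
    · exact R.refl' _
    · exact R.refl' _
    · exact H
    · exact R.symm' H
    · exact R.refl' _

lemma pr_comm (a b : α) : pr a b = pr b a :=
  le_antisymm (pr_le_iff.mpr ((pr b a).symm' (pr_rel b a))) (pr_le_iff.mpr ((pr a b).symm' (pr_rel a b)))

lemma sup_pr_rel {a b : α} {R : Setoid α} {x y : α} :
    (R ⊔ pr a b) x y ↔ R x y ∨ (R x a ∧ R b y) ∨ (R x b ∧ R a y) := by
  constructor
  · intro H
    let Q : Setoid α :=
      { r := fun x y => R x y ∨ ((R x a ∨ R x b) ∧ (R a y ∨ R b y))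
        iseqv := by
          refine ⟨fun x => Or.inl (R.refl' x), ?_, ?_⟩
          · intro x y h
            rcases h with h | ⟨h1, h2⟩
            · exact Or.inl (R.symm' h)
            · exact Or.inr ⟨h2.imp R.symm' R.symm', h1.imp R.symm' R.symm'⟩
          · intro x y z h1 h2
            rcases h1 with h1 | ⟨h1, h1'⟩
            · rcases h2 with h2 | ⟨h2, h2'⟩
              · exact Or.inl (R.trans' h1 h2)
              · exact Or.inr ⟨h2.imp (R.trans' h1) (R.trans' h1), h2'⟩
            · rcases h2 with h2 | ⟨h2, h2'⟩
              · exact Or.inr ⟨h1, h1'.imp (fun h => R.trans' h h2) (fun h => R.trans' h h2)⟩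
              · exact Or.inr ⟨h1, h2'⟩ }
    have h1 : R ⊔ pr a b ≤ Q := by
      refine sup_le (fun x y h => Or.inl h) (pr_le_iff.mpr ?_)
      exact Or.inr ⟨Or.inl (R.refl' _), Or.inr (R.refl' _)⟩
    have h2 : Q x y := h1 H
    rcases h2 with h | ⟨h1 | h1, h2 | h2⟩
    · exact Or.inl h
    · exact Or.inl (R.trans' h1 h2)
    · exact Or.inr (Or.inl ⟨h1, h2⟩)
    · exact Or.inr (Or.inr ⟨h1, h2⟩)
    · exact Or.inl (R.trans' h1 h2)
  · have l1 : R ≤ R ⊔ pr a b := le_sup_left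
    have l2 : (R ⊔ pr a b) a b := (le_sup_right : pr a b ≤ _) (pr_rel a b)
    rintro (h | ⟨h1, h2⟩ | ⟨h1, h2⟩)
    · exact l1 h
    · exact Setoid.trans' _ (l1 h1) (Setoid.trans' _ l2 (l1 h2))
    · exact Setoid.trans' _ (l1 h1) (Setoid.trans' _ (Setoid.symm' _ l2) (l1 h2))

lemma cl_sup_left {a b : α} {R : Setoid α} : cl (R ⊔ pr a b) a = cl R a ∪ cl R b := by
  ext x
  simp only [mem_cl, Finset.mem_union, sup_pr_rel]
  have := R.refl' a
  tauto

lemma cl_sup_right {a b : α} {R : Setoid α} : cl (R ⊔ pr a b) b = cl R a ∪ cl R b := by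
  ext x
  simp only [mem_cl, Finset.mem_union, sup_pr_rel]
  have := R.refl' b
  tauto

lemma cl_sup_other {a b x : α} {R : Setoid α} (ha : ¬ R x a) (hb : ¬ R x b) : cl (R ⊔ pr a b) x = cl R x := by
  ext y
  simp only [mem_cl, sup_pr_rel]
  tauto

lemma blocks_sup {a b : α} {R : Setoid α} (_hab : ¬ R a b) :
    blocks (R ⊔ pr a b) = insert (cl R a ∪ cl R b) (((blocks R).erase (cl R a)).erase (cl R b)) := by
  ext c
  rw [Finset.mem_insert, Finset.mem_erase, Finset.mem_erase]
  constructor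
  · intro hc
    obtain ⟨x, rfl⟩ := mem_blocks.mp hc
    by_cases ha : R x a
    · left; rw [← cl_sup_left]; exact cl_eq_iff.mpr (sup_pr_rel.mpr (Or.inl ha))
    by_cases hb : R x b
    · left; rw [← cl_sup_right]; exact cl_eq_iff.mpr (sup_pr_rel.mpr (Or.inl hb))
    right
    rw [cl_sup_other ha hb]
    exact ⟨fun h => hb (cl_eq_iff.mp h), fun h => ha (cl_eq_iff.mp h), cl_mem R x⟩
  · rintro (rfl | ⟨h1, h2, h3⟩)
    · rw [← cl_sup_left]; exact cl_mem _ _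
    · obtain ⟨x, rfl⟩ := mem_blocks.mp h3
      rw [← cl_sup_other (fun h => h2 (cl_eq_iff.mpr h)) (fun h => h1 (cl_eq_iff.mpr h))]
      exact cl_mem _ _

lemma cl_union_notMem {a b : α} {R : Setoid α} (hab : ¬ R a b) : cl R a ∪ cl R b ∉ blocks R := by
  intro h
  have h1 := eq_cl_of_mem h (Finset.mem_union_left _ (self_mem_cl R a))
  have h2 := eq_cl_of_mem h (Finset.mem_union_right _ (self_mem_cl R b))
  exact hab (cl_eq_iff.mp (h1.symm.trans h2))

lemma card_blocks_sup {a b : α} {R : Setoid α} (hab : ¬ R a b) :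
    (blocks (R ⊔ pr a b)).card + 1 = (blocks R).card := by
  rw [blocks_sup hab, Finset.card_insert_of_notMem, Finset.card_erase_of_mem, Finset.card_erase_of_mem (cl_mem R a)]
  · have : 1 < (blocks R).card := Finset.one_lt_card.mpr ⟨_, cl_mem R a, _, cl_mem R b, fun h => hab (cl_eq_iff.mp h)⟩
    omega
  · exact Finset.mem_erase.mpr ⟨fun h => hab (cl_eq_iff.mp h.symm), cl_mem R b⟩
  · intro h; exact cl_union_notMem hab (Finset.mem_of_mem_erase (Finset.mem_of_mem_erase h))

lemma cl_disj {a b : α} {R : Setoid α} (hab : ¬ R a b) : Disjoint (cl R a) (cl R b) := by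
  rw [Finset.disjoint_left]
  intro x h1 h2
  rw [mem_cl] at *
  exact hab (R.trans' h1 (R.symm' h2))

lemma blIn_sup {a b : α} {R : Setoid α} (hab : ¬ R a b) {B : Finset α} (hB : Sat R B) (ha : a ∈ B) (hb : b ∈ B) :
    blIn (R ⊔ pr a b) B = insert (cl R a ∪ cl R b) (((blIn R B).erase (cl R a)).erase (cl R b)) := by
  unfold blIn
  rw [blocks_sup hab, Finset.filter_insert, if_pos (Finset.union_subset (hB.cl_sub ha) (hB.cl_sub hb)),
    Finset.filter_erase, Finset.filter_erase]

/-- a block set not meeting the joined classes is unchanged -/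
lemma blIn_sup_other {a b : α} {R : Setoid α} (hab : ¬ R a b) {B : Finset α} (ha : a ∉ B) (hb : b ∉ B) :
    blIn (R ⊔ pr a b) B = blIn R B := by
  unfold blIn
  rw [blocks_sup hab, Finset.filter_insert, if_neg (fun h => ha (h (Finset.mem_union_left _ (self_mem_cl R a)))),
    Finset.filter_erase, Finset.filter_erase, Finset.erase_eq_of_notMem, Finset.erase_eq_of_notMem]
  · intro h; exact ha ((Finset.mem_filter.mp h).2 (self_mem_cl R a))
  · intro h; exact hb ((Finset.mem_filter.mp (Finset.mem_of_mem_erase h)).2 (self_mem_cl R b))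

lemma fB_sup_other {a b : α} {R : Setoid α} (hab : ¬ R a b) {B : Finset α} (ha : a ∉ B) (hb : b ∉ B) :
    fB (R ⊔ pr a b) B = fB R B := by
  unfold fB; rw [blIn_sup_other hab ha hb]

/-- splitting a block -/
def split (P : Setoid α) (S : Finset α) : Setoid α where
  r x y := P x y ∧ (x ∈ S ↔ y ∈ S)
  iseqv := ⟨fun x => ⟨P.refl' x, Iff.rfl⟩, fun h => ⟨P.symm' h.1, h.2.symm⟩,
    fun h1 h2 => ⟨P.trans' h1.1 h2.1, h1.2.trans h2.2⟩⟩

lemma split_rel {P : Setoid α} {S : Finset α} {x y : α} : split P S x y ↔ P x y ∧ (x ∈ S ↔ y ∈ S) := Iff.rfl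

lemma le_split {R P : Setoid α} (H : R ≤ P) {S : Finset α} (hS : Sat R S) : R ≤ split P S :=
  fun x y h => ⟨H h, fun hx => hS x hx y h, fun hy => hS y hy x (R.symm' h)⟩

lemma cl_split_left {P : Setoid α} {S : Finset α} {x : α} (hx : x ∈ S) (hS : S ⊆ cl P x) : cl (split P S) x = S := by
  ext z
  rw [mem_cl, split_rel]
  exact ⟨fun h => h.2.mp hx, fun h => ⟨mem_cl.mp (hS h), by simp [hx, h]⟩⟩

lemma cl_split_right {P : Setoid α} {S : Finset α} {x y : α} (hxy : P x y) (hy : y ∉ S) :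
    cl (split P S) y = cl P x \ S := by
  ext z
  rw [mem_cl, split_rel, Finset.mem_sdiff, mem_cl]
  constructor
  · rintro ⟨h1, h2⟩; exact ⟨P.trans' hxy h1, fun h => hy (h2.mpr h)⟩
  · rintro ⟨h1, h2⟩; exact ⟨P.trans' (P.symm' hxy) h1, by simp [hy, h2]⟩

lemma split_sup {P : Setoid α} {S : Finset α} {x y : α} (hxy : P x y) (hx : x ∈ S) (hy : y ∉ S) (hS : S ⊆ cl P x) :
    split P S ⊔ pr x y = P := by
  ext u v
  refine sup_pr_rel.trans ?_
  simp only [split_rel]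
  constructor
  · rintro (h | ⟨h1, h2⟩ | ⟨h1, h2⟩)
    · exact h.1
    · exact P.trans' h1.1 (P.trans' hxy h2.1)
    · exact P.trans' h1.1 (P.trans' (P.symm' hxy) h2.1)
  · intro h
    by_cases hu : u ∈ S <;> by_cases hv : v ∈ S
    · left; exact ⟨h, by simp [hu, hv]⟩
    · right; left
      have := mem_cl.mp (hS hu)
      exact ⟨⟨P.symm' this, by simp [hu, hx]⟩, P.trans' (P.symm' hxy) (P.trans' this h), by simp [hy, hv]⟩
    · right; right
      have := mem_cl.mp (hS hv)
      exact ⟨⟨P.trans' h (P.trans' (P.symm' this) hxy), by simp [hu, hy]⟩, this, by simp [hx, hv]⟩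
    · left; exact ⟨h, by simp [hu, hv]⟩

lemma split_eq {P Q : Setoid α} {x y : α} (hQ : ¬ Q x y) (H : Q ⊔ pr x y = P) : split P (cl Q x) = Q := by
  subst H
  ext u v
  rw [split_rel, sup_pr_rel, mem_cl, mem_cl]
  constructor
  · rintro ⟨h | ⟨h1, h2⟩ | ⟨h1, h2⟩, h3⟩
    · exact h
    · exact absurd (Q.trans' (h3.mp (Q.symm' h1)) (Q.symm' h2)) hQ
    · exact absurd (Q.trans' (h3.mpr h2) h1) hQ
  · intro h
    exact ⟨Or.inl h, fun h1 => Q.trans' h1 h, fun h1 => Q.trans' h1 (Q.symm' h)⟩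

/-- the indicator identity behind splitting -/
lemma split_indicator {R P Q : Setoid α} {x y : α} (hP : P x y) (hR : R ≤ Q) :
    (if Q ⊔ pr x y = P then (1 : ℚ) else 0) = (if Q = P then 1 else 0)
      + ∑ S ∈ seps R (cl P x) x y, if Q = split P S then (1 : ℚ) else 0 := by
  by_cases hQ : Q x y
  · have : Q ⊔ pr x y = Q := sup_eq_left.mpr (pr_le_iff.mpr hQ)
    rw [this, Finset.sum_eq_zero, add_zero]
    intro S hS
    obtain ⟨h1, h2, h3, h4⟩ := mem_seps.mp hS
    rw [if_neg]
    rintro rfl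
    exact h4 ((split_rel.mp hQ).2.mp h3)
  · have hne : Q ≠ P := by rintro rfl; exact hQ hP
    rw [if_neg hne, zero_add]
    by_cases H : Q ⊔ pr x y = P
    · rw [if_pos H]
      have hQP : Q ≤ P := H ▸ le_sup_left
      rw [Finset.sum_eq_single (cl Q x)]
      · rw [if_pos (split_eq hQ H).symm]
      · intro S hS hne
        obtain ⟨h1, h2, h3, h4⟩ := mem_seps.mp hS
        rw [if_neg]
        intro h; apply hne; rw [h, cl_split_left h3 h1]
      · intro h
        exfalso; apply h
        refine mem_seps.mpr ⟨fun z hz => mem_cl.mpr (hQP (mem_cl.mp hz)), sat_cl hR x, self_mem_cl Q x, fun h => hQ (mem_cl.mp h)⟩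
    · rw [if_neg H, Finset.sum_eq_zero]
      intro S hS
      obtain ⟨h1, h2, h3, h4⟩ := mem_seps.mp hS
      rw [if_neg]
      rintro rfl
      exact H (split_sup hP h3 h4 h1)

end

end Hz

open Equiv

namespace Hz

noncomputable section

set_option linter.unusedSectionVars false

open scoped Classical

/-! ### Part 5: cycles of permutations and multiplication by a transposition -/

variable {α : Type*} [Fintype α] [DecidableEq α]

def stl (π : Perm α) : Setoid α := Perm.SameCycle.setoid π

lemma stl_rel {π : Perm α} {x y : α} : stl π x y ↔ π.SameCycle x y := Iff.rfl

lemma stl_apply (π : Perm α) (x : α) : stl π x (π x) := stl_rel.mpr ⟨1, by simp⟩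

lemma stl_iter_of (π : Perm α) (R : Setoid α) (H : ∀ x, R x (π x)) (n : ℕ) (x : α) : R x ((π ^ n) x) := by
  induction n with
  | zero => exact R.refl' x
  | succ n ih => rw [pow_succ', Perm.mul_apply]; exact R.trans' ih (H _)

lemma stl_le_iff {π : Perm α} {R : Setoid α} : stl π ≤ R ↔ ∀ x, R x (π x) := by
  constructor
  · intro H x; exact H (stl_apply π x)
  · intro H x y hxy
    obtain ⟨i, rfl⟩ := Perm.SameCycle.exists_nat_pow_eq (stl_rel.mp hxy)
    exact stl_iter_of π R H i x

lemma stl_one : stl (1 : Perm α) = ⊥ := le_antisymm (stl_le_iff.mpr fun _ => rfl) bot_le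

lemma stl_inv (π : Perm α) : stl π⁻¹ = stl π := by
  ext x y; exact Perm.sameCycle_inv

lemma stl_swap (a b : α) : stl (swap a b) = pr a b := by
  apply le_antisymm
  · refine stl_le_iff.mpr fun x => ?_
    rw [swap_apply_def]
    split_ifs with h1 h2
    · exact Or.inr ⟨Or.inl h1, Or.inr rfl⟩
    · exact Or.inr ⟨Or.inr h2, Or.inl rfl⟩
    · exact Or.inl rfl
  · refine pr_le_iff.mpr (stl_rel.mpr ⟨1, by simp⟩)

lemma stl_mul_le (σ π : Perm α) : stl (σ * π) ≤ stl σ ⊔ stl π := by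
  refine stl_le_iff.mpr fun x => ?_
  have l1 : stl σ ≤ stl σ ⊔ stl π := le_sup_left
  have l2 : stl π ≤ stl σ ⊔ stl π := le_sup_right
  exact Setoid.trans' _ (l2 (stl_apply π x)) (l1 (stl_apply σ (π x)))

lemma merge_aux {π : Perm α} {a b : α} (hab : ¬ stl π a b) {x : α} (hx : stl π a x) :
    stl (swap a b * π) a x := by
  obtain ⟨i, rfl⟩ := Perm.SameCycle.exists_nat_pow_eq (stl_rel.mp hx)
  clear hx
  induction i with
  | zero => exact Setoid.refl' _ a
  | succ i ih =>
    rw [pow_succ', Perm.mul_apply]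
    set y := (π ^ i) a with hy
    by_cases h1 : π y = a
    · rw [h1]
    · have h2 : π y ≠ b := by
        intro h
        apply hab
        rw [← h, hy, ← Perm.mul_apply, ← pow_succ']
        exact ⟨(i + 1 : ℕ), by rw [zpow_natCast]⟩
      have := stl_apply (swap a b * π) y
      rw [Perm.mul_apply, swap_apply_of_ne_of_ne h1 h2] at this
      exact Setoid.trans' _ ih this

lemma merge {π : Perm α} {a b : α} (hab : ¬ stl π a b) : stl (swap a b * π) = stl π ⊔ pr a b := by
  apply le_antisymm
  · rw [← stl_swap, sup_comm]; exact stl_mul_le _ _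
  have hba : ¬ stl π b a := fun h => hab ((stl π).symm' h)
  have h1 : ∀ x, stl π a x → stl (swap a b * π) a x := fun x => merge_aux hab
  have h2 : ∀ x, stl π b x → stl (swap a b * π) b x := fun x h => by
    rw [swap_comm]; exact merge_aux hba h
  have h3 : stl (swap a b * π) a b := by
    have e1 := h1 (π⁻¹ a) (by
      have := stl_apply π⁻¹ a
      rwa [stl_inv] at this)
    have e2 := stl_apply (swap a b * π) (π⁻¹ a)
    simp at e2
    exact Setoid.trans' _ e1 e2
  refine sup_le (stl_le_iff.mpr fun x => ?_) (pr_le_iff.mpr h3)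
  by_cases ha : π x = a
  · rw [ha]; apply Setoid.symm'; apply h1; rw [← ha]; exact Setoid.symm' _ (stl_apply π x)
  by_cases hb : π x = b
  · rw [hb]; apply Setoid.symm'; apply h2; rw [← hb]; exact Setoid.symm' _ (stl_apply π x)
  have := stl_apply (swap a b * π) x
  rwa [Perm.mul_apply, swap_apply_of_ne_of_ne ha hb] at this

lemma mper_pos (π : Perm α) (a : α) : 0 < Function.minimalPeriod π a := by
  apply Function.minimalPeriod_pos_of_mem_periodicPts
  exact ⟨orderOf π, orderOf_pos π, by
    rw [Function.IsPeriodicPt, Function.IsFixedPt, ← Perm.coe_pow, pow_orderOf_eq_one]; rfl⟩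

lemma cl_stl (π : Perm α) (a : α) :
    cl (stl π) a = (Finset.range (Function.minimalPeriod π a)).image fun i => π^[i] a := by
  ext x
  rw [mem_cl, Finset.mem_image]
  constructor
  · intro h
    obtain ⟨i, rfl⟩ := Perm.SameCycle.exists_nat_pow_eq (stl_rel.mp h)
    refine ⟨i % Function.minimalPeriod π a, Finset.mem_range.mpr (Nat.mod_lt _ (mper_pos π a)), ?_⟩
    rw [Function.iterate_mod_minimalPeriod_eq, Perm.coe_pow]
  · rintro ⟨i, _, rfl⟩
    rw [← Perm.coe_pow]; exact stl_iter_of π _ (stl_apply π) i a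

lemma card_cl_stl (π : Perm α) (a : α) : (cl (stl π) a).card = Function.minimalPeriod π a := by
  rw [cl_stl, Finset.card_image_of_injOn, Finset.card_range]
  intro i hi j hj h
  exact Function.iterate_injOn_Iio_minimalPeriod (by simpa using hi) (by simpa using hj) h

lemma cl_cut {π : Perm α} {a : α} {j : ℕ} (hj : 0 < j) (hjk : j < Function.minimalPeriod π a) :
    cl (stl (swap a (π^[j] a) * π)) a = (Finset.range j).image fun i => π^[i] a := by
  set b := π^[j] a with hb
  set π' := swap a b * π with hπ'
  have inj : ∀ i i', i < Function.minimalPeriod π a → i' < Function.minimalPeriod π a → π^[i] a = π^[i'] a → i = i' :=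
    fun i i' hi hi' h => Function.iterate_injOn_Iio_minimalPeriod hi hi' h
  have step : ∀ i, i + 1 < j → π' (π^[i] a) = π^[i+1] a := by
    intro i hi
    rw [hπ', Perm.mul_apply, ← Function.iterate_succ_apply' π i a]
    apply swap_apply_of_ne_of_ne
    · intro h; have := inj (i + 1) 0 (by omega) (by omega) h; omega
    · intro h; have := inj (i + 1) j (by omega) (by omega) h; omega
  have last : π' (π^[j-1] a) = a := by
    rw [hπ', Perm.mul_apply, ← Function.iterate_succ_apply' π (j-1) a, Nat.succ_eq_add_one, Nat.sub_add_cancel hj, ← hb,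
      swap_apply_right]
  have closed : ∀ i < j, ∃ i' < j, π' (π^[i] a) = π^[i'] a := by
    intro i hi
    by_cases h : i + 1 < j
    · exact ⟨i + 1, h, step i h⟩
    · have : i = j - 1 := by omega
      subst this
      exact ⟨0, hj, last⟩
  have pw : ∀ n : ℕ, ∃ i < j, (π' ^ n) a = π^[i] a := by
    intro n
    induction n with
    | zero => exact ⟨0, hj, rfl⟩
    | succ n ih =>
      obtain ⟨i, hi, h⟩ := ih
      rw [pow_succ', Perm.mul_apply, h]; exact closed i hi
  ext x
  rw [mem_cl, Finset.mem_image]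
  constructor
  · intro h
    obtain ⟨n, rfl⟩ := Perm.SameCycle.exists_nat_pow_eq (stl_rel.mp h)
    obtain ⟨i, hi, h⟩ := pw n
    exact ⟨i, Finset.mem_range.mpr hi, h.symm⟩
  · rintro ⟨i, hi, rfl⟩
    rw [Finset.mem_range] at hi
    induction i with
    | zero => exact Setoid.refl' _ a
    | succ i ih =>
      have := stl_apply π' (π^[i] a)
      rw [step i hi] at this
      exact Setoid.trans' _ (ih (by omega)) this

lemma cut_card {π : Perm α} {a : α} {j : ℕ} (hj : 0 < j) (hjk : j < Function.minimalPeriod π a) :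
    (cl (stl (swap a (π^[j] a) * π)) a).card = j := by
  rw [cl_cut hj hjk, Finset.card_image_of_injOn, Finset.card_range]
  intro i hi i' hi' h
  have hi := Finset.mem_range.mp (Finset.mem_coe.mp hi)
  have hi' := Finset.mem_range.mp (Finset.mem_coe.mp hi')
  exact Function.iterate_injOn_Iio_minimalPeriod (show i < _ by omega) (show i' < _ by omega) h

lemma cut {π : Perm α} {a b : α} (hne : a ≠ b) (hab : stl π a b) : ¬ stl (swap a b * π) a b := by
  have := mem_cl.mpr hab
  rw [cl_stl, Finset.mem_image] at this
  obtain ⟨j, hj, rfl⟩ := this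
  rw [Finset.mem_range] at hj
  have hj0 : 0 < j := by
    rcases Nat.eq_zero_or_pos j with rfl | h
    · exact absurd rfl hne
    · exact h
  rw [← mem_cl, cl_cut hj0 hj, Finset.mem_image]
  rintro ⟨i, hi, h⟩
  rw [Finset.mem_range] at hi
  have := Function.iterate_injOn_Iio_minimalPeriod (show i < _ by omega) (show j < _ by omega) h
  omega

lemma cut_sup {π : Perm α} {a b : α} (hne : a ≠ b) (hab : stl π a b) : stl π = stl (swap a b * π) ⊔ pr a b := by
  rw [← merge (cut hne hab), ← mul_assoc, swap_mul_self, one_mul]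

lemma cut_cl {π : Perm α} {a b : α} (hne : a ≠ b) (hab : stl π a b) :
    cl (stl π) a = cl (stl (swap a b * π)) a ∪ cl (stl (swap a b * π)) b := by
  conv_lhs => rw [cut_sup hne hab, cl_sup_left]

lemma cut_card_add {π : Perm α} {a b : α} (hne : a ≠ b) (hab : stl π a b) :
    (cl (stl (swap a b * π)) a).card + (cl (stl (swap a b * π)) b).card = (cl (stl π) a).card := by
  rw [cut_cl hne hab, Finset.card_union_of_disjoint (cl_disj (cut hne hab))]

lemma cut_sum (π : Perm α) (a : α) (F : ℕ → ℕ → ℚ) (h0 : ∀ k, F 0 k = 0) (h0' : ∀ k, F k 0 = 0) :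
    ∑ b ∈ (cl (stl π) a).erase a, F (cl (stl (swap a b * π)) a).card (cl (stl (swap a b * π)) b).card
    = ∑ pq ∈ Finset.HasAntidiagonal.antidiagonal (cl (stl π) a).card, F pq.1 pq.2 := by
  set k := (cl (stl π) a).card with hk
  have hkp : k = Function.minimalPeriod π a := card_cl_stl π a
  have hk0 : 0 < k := hkp ▸ mper_pos π a
  have h1 : ∑ b ∈ (cl (stl π) a).erase a, F (cl (stl (swap a b * π)) a).card (cl (stl (swap a b * π)) b).card
     = ∑ j ∈ Finset.Ico 1 k, F j (k - j) := by
    symm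
    refine Finset.sum_bij (fun j _ => π^[j] a) ?_ ?_ ?_ ?_
    · intro j hj
      rw [Finset.mem_Ico] at hj
      rw [Finset.mem_erase, cl_stl, Finset.mem_image]
      refine ⟨fun h => ?_, j, Finset.mem_range.mpr (by omega), rfl⟩
      have := Function.iterate_injOn_Iio_minimalPeriod (f := π) (x := a) (show j < _ by omega) (show 0 < _ by omega) h
      omega
    · intro i hi j hj h
      rw [Finset.mem_Ico] at hi hj
      exact Function.iterate_injOn_Iio_minimalPeriod (show i < _ by omega) (show j < _ by omega) h
    · intro b hb
      rw [Finset.mem_erase, cl_stl, Finset.mem_image] at hb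
      obtain ⟨h1, j, hj, rfl⟩ := hb
      rw [Finset.mem_range] at hj
      refine ⟨j, Finset.mem_Ico.mpr ⟨?_, by omega⟩, rfl⟩
      rcases Nat.eq_zero_or_pos j with rfl | h
      · exact absurd rfl h1
      · exact h
    · intro j hj
      rw [Finset.mem_Ico] at hj
      have h1 := cut_card (π := π) (a := a) (j := j) (by omega) (by omega)
      have hne : a ≠ π^[j] a := by
        intro h
        have := Function.iterate_injOn_Iio_minimalPeriod (f := π) (x := a) (show j < _ by omega) (show 0 < _ by omega) h.symm
        omega
      have h2 := cut_card_add (π := π) (a := a) (b := π^[j] a) hne (by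
        rw [← Perm.coe_pow]; exact stl_iter_of π _ (stl_apply π) j a)
      rw [h1] at h2
      rw [h1, show k - j = (cl (stl (swap a (π^[j] a) * π)) (π^[j] a)).card by omega]
  rw [h1, Finset.Nat.sum_antidiagonal_eq_sum_range_succ F, Finset.sum_range_succ, Nat.sub_self, h0', add_zero,
    Finset.range_eq_Ico, Finset.sum_eq_sum_Ico_succ_bot hk0, h0, zero_add]

/-- the contribution of a transposition -/
def GR (π : Perm α) (B : Finset α) (a b : α) : ℚ :=
  if stl π a b then ∑ S ∈ seps (stl (swap a b * π)) B a b,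
    fB (stl (swap a b * π)) S * fB (stl (swap a b * π)) (B \ S)
  else fB (stl (swap a b * π)) B

lemma GR_diff {π : Perm α} {B : Finset α} (hB : Sat (stl π) B) {a b : α} (ha : a ∈ B) (hb : b ∈ B) (hab : ¬ stl π a b) :
    GR π B a b = (B.card : ℚ) ^ (((blIn (stl π) B).card : ℤ) - 4) * (w ((cl (stl π) a).card + (cl (stl π) b).card) *
      ∏ c ∈ ((blIn (stl π) B).erase (cl (stl π) a)).erase (cl (stl π) b), w c.card) := by
  unfold GR fB
  rw [if_neg hab, merge hab, blIn_sup hab hB ha hb]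
  have hn : cl (stl π) a ∪ cl (stl π) b ∉ ((blIn (stl π) B).erase (cl (stl π) a)).erase (cl (stl π) b) := by
    intro h; exact cl_union_notMem hab (mem_blIn.mp (Finset.mem_of_mem_erase (Finset.mem_of_mem_erase h))).1
  rw [Finset.prod_insert hn, Finset.card_insert_of_notMem hn, Finset.card_union_of_disjoint (cl_disj hab)]
  have h1 : cl (stl π) b ∈ (blIn (stl π) B).erase (cl (stl π) a) :=
    Finset.mem_erase.mpr ⟨fun h => hab (cl_eq_iff.mp h.symm), hB.cl_mem_blIn hb⟩
  have h3 : 1 < (blIn (stl π) B).card := Finset.one_lt_card.mpr ⟨_, hB.cl_mem_blIn ha, _, hB.cl_mem_blIn hb, fun h => hab (cl_eq_iff.mp h)⟩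
  rw [Finset.card_erase_of_mem h1, Finset.card_erase_of_mem (hB.cl_mem_blIn ha)]
  congr 2
  omega

lemma GR_same {π : Perm α} {B : Finset α} (hB : Sat (stl π) B) {a b : α} (hne : a ≠ b) (ha : a ∈ B) (hb : b ∈ B) (hab : stl π a b) :
    GR π B a b = w (cl (stl (swap a b * π)) a).card * w (cl (stl (swap a b * π)) b).card *
      conv (Bb kq (cl (stl (swap a b * π)) a).card) (Bb kq (cl (stl (swap a b * π)) b).card)
        ((blIn (stl π) B).erase (cl (stl π) a)) * ∏ c ∈ (blIn (stl π) B).erase (cl (stl π) a), w c.card := by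
  unfold GR
  rw [if_pos hab]
  set R := stl (swap a b * π) with hR
  have hcut : ¬ R a b := cut hne hab
  have hs : stl π = R ⊔ pr a b := cut_sup hne hab
  have hB' : Sat R B := by
    intro x hx y hy
    exact hB x hx y (by rw [hs]; exact (le_sup_left : R ≤ _) hy)
  rw [L_lemma hB' ha hb hcut]
  have hI : (blIn (stl π) B).erase (cl (stl π) a) = ((blIn R B).erase (cl R a)).erase (cl R b) := by
    rw [hs, blIn_sup hcut hB' ha hb, cl_sup_left, Finset.erase_insert]
    intro h; exact cl_union_notMem hcut (mem_blIn.mp (Finset.mem_of_mem_erase (Finset.mem_of_mem_erase h))).1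
  rw [hI, ← Finset.mul_prod_erase (blIn R B) _ (hB'.cl_mem_blIn ha),
    ← Finset.mul_prod_erase ((blIn R B).erase (cl R a)) _ (Finset.mem_erase.mpr ⟨fun h => hcut (cl_eq_iff.mp h.symm), hB'.cl_mem_blIn hb⟩)]
  ring

lemma sum_cl' {R : Setoid α} {S : Finset α} (hS : Sat R S) (F : Finset α → ℚ) (f : α → ℚ)
    (H : ∀ x ∈ S, f x = F (cl R x)) : ∑ x ∈ S, f x = ∑ c ∈ blIn R S, (c.card : ℚ) * F c := by
  rw [Finset.sum_congr rfl H, sum_cl hS]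

theorem R_identity {π : Perm α} {B : Finset α} (hB : Sat (stl π) B) (hne : B.Nonempty) :
    ∑ a ∈ B, ∑ b ∈ B.erase a, GR π B a b =
    2 * ((B.card : ℚ) + (blIn (stl π) B).card - 2) * fB (stl π) B := by
  set R := stl π with hR
  have hst := star (fun c : Finset α => c.card) (blIn R B)
    (by obtain ⟨x, hx⟩ := hne; exact ⟨_, hB.cl_mem_blIn hx⟩)
    (fun c hc => block_card_pos (mem_blIn.mp hc).1) (B.card : ℚ) (sum_card_blIn hB)
  rw [fB, hst]
  have hsplit : ∀ a ∈ B, ∑ b ∈ B.erase a, GR π B a b =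
      ∑ b ∈ B \ cl R a, GR π B a b + ∑ b ∈ (cl R a).erase a, GR π B a b := by
    intro a ha
    have : B.erase a = (B \ cl R a) ∪ (cl R a).erase a := by
      ext x
      simp only [Finset.mem_erase, Finset.mem_union, Finset.mem_sdiff]
      constructor
      · rintro ⟨h1, h2⟩; by_cases h : x ∈ cl R a
        · exact Or.inr ⟨h1, h⟩
        · exact Or.inl ⟨h2, h⟩
      · rintro (⟨h1, h2⟩ | ⟨h1, h2⟩)
        · exact ⟨fun h => h2 (h ▸ self_mem_cl R a), h1⟩
        · exact ⟨h1, hB.cl_sub ha h2⟩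
    rw [this, Finset.sum_union]
    rw [Finset.disjoint_left]
    intro x h1 h2
    exact (Finset.mem_sdiff.mp h1).2 (Finset.mem_of_mem_erase h2)
  rw [Finset.sum_congr rfl hsplit, Finset.sum_add_distrib]
  congr 1
  · rw [sum_cl' hB (fun c : Finset α => ∑ d ∈ (blIn R B).erase c, (d.card : ℚ) *
        ((B.card : ℚ) ^ (((blIn R B).card : ℤ) - 4) * (w (c.card + d.card) *
          ∏ e ∈ ((blIn R B).erase c).erase d, w e.card)))]
    rotate_left
    · intro a ha
      have hs : Sat R (B \ cl R a) := sat_sdiff hB (sat_cl le_rfl a)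
      have := sum_cl hs (fun d => (B.card : ℚ) ^ (((blIn R B).card : ℤ) - 4) * (w ((cl R a).card + d.card) *
          ∏ e ∈ ((blIn R B).erase (cl R a)).erase d, w e.card))
      have hb : blIn R (B \ cl R a) = (blIn R B).erase (cl R a) := by
        rw [blIn_sdiff (sat_cl le_rfl a), Finset.erase_eq]
        congr 1
        have : (({cl R a} : Finset (Finset α)).biUnion id) = cl R a := by simp
        conv_lhs => rw [← this]
        exact blIn_biUnion (by simpa using cl_mem R a)
      rw [hb] at this
      rw [← this]
      refine Finset.sum_congr rfl fun b hb => ?_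
      rw [Finset.mem_sdiff, mem_cl] at hb
      exact GR_diff hB ha hb.1 hb.2
    simp only [Finset.mul_sum]
    exact Finset.sum_congr rfl fun c _ => Finset.sum_congr rfl fun d _ => by ring
  · rw [sum_cl' hB (fun c : Finset α =>
        (∑ pq ∈ Finset.HasAntidiagonal.antidiagonal c.card, w pq.1 * w pq.2 *
       conv (Bb kq pq.1) (Bb kq pq.2) ((blIn R B).erase c)) * ∏ l ∈ (blIn R B).erase c, w l.card)]
    rotate_left
    · intro a ha
      rw [← cut_sum π a (fun p q => w p * w q * conv (Bb kq p) (Bb kq q) ((blIn R B).erase (cl R a)))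
        (by simp [w]) (by simp [w]), Finset.sum_mul]
      refine Finset.sum_congr rfl fun b hb => ?_
      rw [Finset.mem_erase] at hb
      exact GR_same hB hb.1.symm ha (hB.cl_sub ha hb.2) (mem_cl.mp hb.2)
    exact Finset.sum_congr rfl fun c _ => by rw [← mul_assoc]; rfl

end

end Hz

open Equiv

namespace Hz

noncomputable section

set_option linter.unusedSectionVars false

open scoped Classical

/-! ### Part 6: counting factorizations -/

variable {α : Type*} [Fintype α] [DecidableEq α]

def swaps : Finset (Perm α) := Finset.univ.filter fun τ => τ.IsSwap

lemma mem_swaps {τ : Perm α} : τ ∈ swaps ↔ τ.IsSwap := by simp [swaps]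

lemma swap_eq_of_moved {τ : Perm α} (hτ : τ.IsSwap) {x : α} (hx : τ x ≠ x) : τ = swap x (τ x) := by
  obtain ⟨c, d, hcd, rfl⟩ := hτ
  by_cases h1 : x = c
  · subst h1; simp
  by_cases h2 : x = d
  · subst h2; simp [swap_comm]
  exact absurd (swap_apply_of_ne_of_ne h1 h2) hx

lemma sum_swaps (f : Perm α → ℚ) :
    2 * ∑ τ ∈ swaps, f τ = ∑ a, ∑ b ∈ Finset.univ.erase a, f (swap a b) := by
  have h1 : 2 * ∑ τ ∈ swaps, f τ = ∑ τ ∈ swaps, ∑ x ∈ (Finset.univ : Finset α), if τ x ≠ x then f τ else 0 := by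
    rw [Finset.mul_sum]
    refine Finset.sum_congr rfl fun τ hτ => ?_
    rw [← Finset.sum_filter, Finset.sum_const, nsmul_eq_mul]
    congr 1
    have := Perm.card_support_eq_two.mpr (mem_swaps.mp hτ)
    have e : (Finset.univ.filter fun x => τ x ≠ x) = τ.support := by ext x; simp
    rw [e, this]; rfl
  rw [h1, Finset.sum_comm]
  refine Finset.sum_congr rfl fun x _ => ?_
  rw [← Finset.sum_filter]
  refine Finset.sum_nbij' (fun τ => τ x) (fun b => swap x b) ?_ ?_ ?_ ?_ ?_
  · intro τ hτ; simpa using (Finset.mem_filter.mp hτ).2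
  · intro b hb
    have hb' : b ≠ x := (Finset.mem_erase.mp hb).1
    exact Finset.mem_filter.mpr ⟨mem_swaps.mpr ⟨x, b, hb'.symm, rfl⟩, by simpa using hb'⟩
  · intro τ hτ
    obtain ⟨h1, h2⟩ := Finset.mem_filter.mp hτ
    exact (swap_eq_of_moved (mem_swaps.mp h1) h2).symm
  · intro b _; simp
  · intro τ hτ
    obtain ⟨h1, h2⟩ := Finset.mem_filter.mp hτ
    rw [← swap_eq_of_moved (mem_swaps.mp h1) h2]

def ev : ℕ → (Perm α → Setoid α → ℚ) → ℚ
  | 0, Φ => Φ 1 ⊥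
  | m + 1, Φ => ∑ τ ∈ swaps, ev m fun π P => Φ (τ * π) (stl τ ⊔ P)

lemma ev_congr (m : ℕ) : ∀ {Φ Ψ : Perm α → Setoid α → ℚ}, (∀ π P, stl π ≤ P → Φ π P = Ψ π P) → ev m Φ = ev m Ψ := by
  induction m with
  | zero => intro Φ Ψ H; exact H 1 ⊥ (by rw [stl_one])
  | succ m ih =>
    intro Φ Ψ H
    refine Finset.sum_congr rfl fun τ _ => ih fun π P hP => H _ _ ?_
    exact (stl_mul_le τ π).trans (sup_le_sup_left hP _)

lemma ev_add (m : ℕ) : ∀ (Φ Ψ : Perm α → Setoid α → ℚ), ev m (fun π P => Φ π P + Ψ π P) = ev m Φ + ev m Ψ := by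
  induction m with
  | zero => intro Φ Ψ; rfl
  | succ m ih =>
    intro Φ Ψ
    simp only [ev]
    rw [← Finset.sum_add_distrib]
    exact Finset.sum_congr rfl fun τ _ => ih _ _

lemma ev_zero (m : ℕ) : ev m (fun (_ : Perm α) (_ : Setoid α) => (0 : ℚ)) = 0 := by
  induction m with
  | zero => rfl
  | succ m ih => simp only [ev, ih, Finset.sum_const_zero]

lemma ev_sum {κ : Type*} (m : ℕ) (s : Finset κ) (Φ : κ → Perm α → Setoid α → ℚ) :
    ev m (fun π P => ∑ i ∈ s, Φ i π P) = ∑ i ∈ s, ev m (Φ i) := by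
  induction s using Finset.induction_on with
  | empty => simpa using ev_zero m
  | insert i s hi ih =>
    rw [Finset.sum_insert hi, ← ih, ← ev_add]
    congr 1; funext π P; rw [Finset.sum_insert hi]

def cnt (m : ℕ) (π : Perm α) (P : Setoid α) : ℚ := ev m fun ρ Q => if ρ = π ∧ Q = P then 1 else 0

lemma ite_and' (p q : Prop) : (if p ∧ q then (1 : ℚ) else 0) = (if p then 1 else 0) * (if q then 1 else 0) := by
  by_cases hp : p <;> by_cases hq : q <;> simp [hp, hq]

lemma ev_split (m : ℕ) (π : Perm α) {P : Setoid α} {x y : α} (hP : P x y) :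
    ev m (fun ρ Q => if ρ = π ∧ Q ⊔ pr x y = P then 1 else 0)
    = cnt m π P + ∑ S ∈ seps (stl π) (cl P x) x y, cnt m π (split P S) := by
  unfold cnt
  rw [← ev_sum, ← ev_add]
  refine ev_congr m fun ρ Q hQ => ?_
  by_cases h : ρ = π
  · subst h
    simp only [true_and]
    exact split_indicator hP hQ
  · simp [h]

/-- the rank -/
def rk (π : Perm α) (P : Setoid α) : ℤ :=
  Fintype.card α + (blocks (stl π)).card - 2 * (blocks P).card

lemma sum_blocks (P : Setoid α) (f : α → ℚ) : ∑ a, f a = ∑ B ∈ blocks P, ∑ a ∈ B, f a := by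
  rw [← Finset.sum_fiberwise_of_maps_to (t := blocks P) (g := cl P) (fun x _ => cl_mem P x)]
  refine Finset.sum_congr rfl fun B hB => Finset.sum_congr ?_ fun _ _ => rfl
  ext x
  simp only [Finset.mem_filter, Finset.mem_univ, true_and]
  exact ⟨fun h => h ▸ self_mem_cl P x, fun h => (eq_cl_of_mem hB h).symm⟩

lemma card_blocks_eq {R P : Setoid α} (H : R ≤ P) : (blocks R).card = ∑ B ∈ blocks P, (blIn R B).card := by
  rw [← Finset.card_biUnion]
  · congr 1
    ext c
    rw [Finset.mem_biUnion]
    constructor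
    · intro hc
      obtain ⟨x, rfl⟩ := mem_blocks.mp hc
      exact ⟨cl P x, cl_mem P x, (sat_cl H x).cl_mem_blIn (self_mem_cl P x)⟩
    · rintro ⟨B, _, hc⟩; exact (mem_blIn.mp hc).1
  · intro B hB B' hB' hne
    rw [Function.onFun, Finset.disjoint_left]
    intro c hc hc'
    obtain ⟨x, hx⟩ := block_nonempty (mem_blIn.mp hc).1
    apply hne
    rw [eq_cl_of_mem hB ((mem_blIn.mp hc).2 hx), eq_cl_of_mem hB' ((mem_blIn.mp hc').2 hx)]

lemma rk_eq_sum {π : Perm α} {P : Setoid α} (H : stl π ≤ P) :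
    (rk π P : ℚ) = ∑ B ∈ blocks P, ((B.card : ℚ) + (blIn (stl π) B).card - 2) := by
  unfold rk
  rw [card_blocks_eq H, Finset.sum_sub_distrib, Finset.sum_add_distrib]
  have := sum_blocks P (fun _ => 1)
  simp at this
  push_cast
  rw [this]
  simp; ring

lemma rk_merge {π : Perm α} {P : Setoid α} {a b : α} (hab : ¬ stl π a b) : rk (swap a b * π) P = rk π P - 1 := by
  unfold rk
  rw [merge hab, ← card_blocks_sup hab]; push_cast; ring

lemma rk_cut {π : Perm α} {P : Setoid α} {a b : α} (hne : a ≠ b) (hab : stl π a b) :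
    rk (swap a b * π) P = rk π P + 1 := by
  have := rk_merge (P := P) (cut hne hab)
  rw [← mul_assoc, swap_mul_self, one_mul] at this
  linarith

lemma blocks_split_card {P : Setoid α} {S : Finset α} {a b : α} (hP : P a b) (ha : a ∈ S) (hb : b ∉ S) (hS : S ⊆ cl P a) :
    (blocks (split P S)).card = (blocks P).card + 1 := by
  have h1 : ¬ split P S a b := fun h => hb (h.2.mp ha)
  have := card_blocks_sup h1
  rw [split_sup hP ha hb hS] at this
  exact this.symm

lemma blocks_sup_erase {a b : α} {R : Setoid α} (hab : ¬ R a b) :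
    (blocks (R ⊔ pr a b)).erase (cl (R ⊔ pr a b) a) = ((blocks R).erase (cl R a)).erase (cl R b) := by
  rw [blocks_sup hab, cl_sup_left, Finset.erase_insert]
  intro h; exact cl_union_notMem hab (Finset.mem_of_mem_erase (Finset.mem_of_mem_erase h))

lemma prod_blocks_split {P : Setoid α} {S : Finset α} {a b : α} (hP : P a b) (ha : a ∈ S) (hb : b ∉ S) (hS : S ⊆ cl P a)
    (F : Finset α → ℚ) :
    ∏ B ∈ blocks (split P S), F B = F S * F (cl P a \ S) * ∏ B ∈ (blocks P).erase (cl P a), F B := by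
  have h1 : ¬ split P S a b := fun h => hb (h.2.mp ha)
  have h2 := blocks_sup_erase h1
  rw [split_sup hP ha hb hS, cl_split_left ha hS, cl_split_right hP hb] at h2
  rw [h2]
  have e1 := cl_mem (split P S) a
  have e2 := cl_mem (split P S) b
  have hne : cl (split P S) b ≠ cl (split P S) a := fun h => h1 (cl_eq_iff.mp h.symm)
  rw [cl_split_left ha hS] at e1 hne
  rw [cl_split_right hP hb] at e2 hne
  rw [← Finset.mul_prod_erase _ _ e1, ← Finset.mul_prod_erase _ _ (Finset.mem_erase.mpr ⟨hne, e2⟩), mul_assoc]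

lemma fB_other {π : Perm α} {B : Finset α} {a b : α} (ha : a ∉ B) (hb : b ∉ B) :
    fB (stl (swap a b * π)) B = fB (stl π) B := by
  by_cases hne : a = b
  · subst hne; rw [swap_self]; rfl
  by_cases hab : stl π a b
  · have := fB_sup_other (cut hne hab) ha hb
    rw [← cut_sup hne hab] at this
    exact this.symm
  · rw [merge hab, fB_sup_other hab ha hb]

lemma prod_other {π : Perm α} {P : Setoid α} {a b : α} (hP : P a b) :
    ∏ B ∈ (blocks P).erase (cl P a), fB (stl (swap a b * π)) B = ∏ B ∈ (blocks P).erase (cl P a), fB (stl π) B := by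
  refine Finset.prod_congr rfl fun B hB => ?_
  obtain ⟨h1, h2⟩ := Finset.mem_erase.mp hB
  refine fB_other (fun h => h1 (eq_cl_of_mem h2 h)) (fun h => h1 ?_)
  rw [eq_cl_of_mem h2 h]; exact cl_eq_iff.mpr (P.symm' hP)

lemma stl_mul_swap_le {π : Perm α} {P : Setoid α} {a b : α} (H : stl π ≤ P) (hP : P a b) : stl (swap a b * π) ≤ P :=
  (stl_mul_le _ _).trans (sup_le (by rw [stl_swap]; exact pr_le_iff.mpr hP) H)

def YY (m : ℕ) (π : Perm α) (P : Setoid α) (a b : α) : ℚ :=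
  ev m fun ρ Q => if swap a b * ρ = π ∧ stl (swap a b) ⊔ Q = P then 1 else 0

lemma cnt_succ (m : ℕ) (π : Perm α) (P : Setoid α) :
    2 * cnt (m + 1) π P = ∑ a, ∑ b ∈ Finset.univ.erase a, YY m π P a b := by
  unfold cnt
  exact sum_swaps (fun τ => ev m fun ρ Q => if τ * ρ = π ∧ stl τ ⊔ Q = P then 1 else 0)

lemma swap_mul_eq_iff {a b : α} {ρ π : Perm α} : swap a b * ρ = π ↔ ρ = swap a b * π := by
  constructor
  · rintro rfl; rw [← mul_assoc, swap_mul_self, one_mul]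
  · rintro rfl; rw [← mul_assoc, swap_mul_self, one_mul]

lemma YY_zero {m : ℕ} {π : Perm α} {P : Setoid α} {a b : α} (hP : ¬ P a b) : YY m π P a b = 0 := by
  unfold YY
  refine (ev_congr m (Ψ := fun _ _ => 0) fun ρ Q _ => ?_).trans (ev_zero m)
  rw [if_neg]
  rintro ⟨_, h⟩
  apply hP
  rw [← h, stl_swap]
  exact (le_sup_left : pr a b ≤ _) (pr_rel a b)

lemma YY_diff {m : ℕ} {π : Perm α} {P : Setoid α} {a b : α} (hab : ¬ stl π a b) :
    YY m π P a b = cnt m (swap a b * π) P := by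
  unfold YY cnt
  refine ev_congr m fun ρ Q hQ => ?_
  simp only [swap_mul_eq_iff]
  by_cases h : ρ = swap a b * π
  · have h1 : pr a b ≤ Q := by
      refine le_trans ?_ hQ
      rw [h, merge hab]; exact le_sup_right
    simp only [stl_swap, sup_eq_right.mpr h1]
  · simp [h]

lemma YY_same {m : ℕ} {π : Perm α} {P : Setoid α} {a b : α} (hP : P a b) :
    YY m π P a b = cnt m (swap a b * π) P
      + ∑ S ∈ seps (stl (swap a b * π)) (cl P a) a b, cnt m (swap a b * π) (split P S) := by
  rw [← ev_split m _ hP]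
  unfold YY
  simp only [swap_mul_eq_iff, stl_swap, sup_comm]

lemma cnt_base (π : Perm α) (P : Setoid α) (H : stl π ≤ P) :
    ((rk π P = (0 : ℕ) → cnt 0 π P = (Nat.factorial 0 : ℚ) * ∏ B ∈ blocks P, fB (stl π) B) ∧
      ((0 : ℕ) < rk π P → cnt 0 π P = 0)) := by
  constructor
  · intro h0
    have h1 := rk_eq_sum H
    rw [h0] at h1
    have hnn : ∀ B ∈ blocks P, 1 ≤ B.card ∧ 1 ≤ (blIn (stl π) B).card := by
      intro B hB
      obtain ⟨x, rfl⟩ := mem_blocks.mp hB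
      exact ⟨block_card_pos hB, Finset.card_pos.mpr ⟨_, (sat_cl H x).cl_mem_blIn (self_mem_cl P x)⟩⟩
    have h2 : ∀ B ∈ blocks P, (B.card : ℚ) + (blIn (stl π) B).card - 2 = 0 := by
      refine (Finset.sum_eq_zero_iff_of_nonneg ?_).mp (by rw [← h1]; simp)
      intro B hB
      obtain ⟨e1, e2⟩ := hnn B hB
      have e1' : (1 : ℚ) ≤ B.card := by exact_mod_cast e1
      have e2' : (1 : ℚ) ≤ (blIn (stl π) B).card := by exact_mod_cast e2
      linarith
    have h3 : ∀ B ∈ blocks P, B.card = 1 ∧ (blIn (stl π) B).card = 1 := by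
      intro B hB
      obtain ⟨e1, e2⟩ := hnn B hB
      have := h2 B hB
      have : ((B.card + (blIn (stl π) B).card : ℕ) : ℚ) = (2 : ℕ) := by push_cast; linarith
      have : B.card + (blIn (stl π) B).card = 2 := by exact_mod_cast this
      omega
    have hPb : P = ⊥ := by
      refine le_antisymm (fun x y hxy => ?_) bot_le
      obtain ⟨z, hz⟩ := Finset.card_eq_one.mp (h3 _ (cl_mem P x)).1
      have e1 : x ∈ cl P x := self_mem_cl P x
      have e2 : y ∈ cl P x := mem_cl.mpr hxy
      rw [hz, Finset.mem_singleton] at e1 e2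
      show x = y
      rw [e1, e2]
    have hπ : π = 1 := by
      ext x
      have : P x (π x) := H (stl_apply π x)
      rw [hPb] at this
      exact this.symm
    rw [Finset.prod_eq_one]
    · rw [cnt, ev, if_pos ⟨hπ.symm, hPb.symm⟩]; simp
    · intro B hB
      obtain ⟨e1, e2⟩ := h3 B hB
      have hs : Sat (stl π) B := sat_block H hB
      have hc := sum_card_blIn hs
      obtain ⟨c, hc'⟩ := Finset.card_eq_one.mp e2
      rw [hc', Finset.sum_singleton, e1] at hc
      have : c.card = 1 := by exact_mod_cast hc.symm
      rw [fB, hc', Finset.prod_singleton, this, e1, w1]; simp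
  · intro h0
    rw [cnt, ev, if_neg]
    rintro ⟨rfl, rfl⟩
    have hc : (blocks (⊥ : Setoid α)).card = Fintype.card α := by
      rw [blocks, Finset.card_image_of_injective, Finset.card_univ]
      intro x y h
      exact cl_eq_iff.mp h
    rw [rk, stl_one, hc] at h0
    push_cast at h0
    linarith

theorem cnt_eq (m : ℕ) : ∀ (π : Perm α) (P : Setoid α), stl π ≤ P →
    ((rk π P = m → cnt m π P = (m.factorial : ℚ) * ∏ B ∈ blocks P, fB (stl π) B) ∧
      ((m : ℤ) < rk π P → cnt m π P = 0)) := by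
  induction m with
  | zero => exact fun π P H => cnt_base π P H
  | succ m ih =>
    intro π P H
    constructor
    · intro hrk
      have key : ∀ a b, a ≠ b → P a b → YY m π P a b = (m.factorial : ℚ) * (GR π (cl P a) a b *
          ∏ B ∈ (blocks P).erase (cl P a), fB (stl π) B) := by
        intro a b hne hP
        have Hτ := stl_mul_swap_le H hP
        by_cases hab : stl π a b
        · rw [YY_same hP, (ih _ _ Hτ).2 (by rw [rk_cut hne hab, hrk]; push_cast; linarith), zero_add, GR, if_pos hab,
            Finset.sum_mul, Finset.mul_sum]
          refine Finset.sum_congr rfl fun S hS => ?_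
          obtain ⟨h1, h2, h3, h4⟩ := mem_seps.mp hS
          rw [(ih _ _ (le_split Hτ h2)).1, prod_blocks_split hP h3 h4 h1, prod_other hP]
          have := rk_cut (P := P) hne hab
          unfold rk at this hrk ⊢
          rw [blocks_split_card hP h3 h4 h1]
          push_cast at *
          linarith
        · rw [YY_diff hab, (ih _ _ Hτ).1 (by rw [rk_merge hab, hrk]; push_cast; ring), GR, if_neg hab,
            ← Finset.mul_prod_erase _ _ (cl_mem P a), prod_other hP]
      have h2 : 2 * cnt (m + 1) π P = 2 * (((m + 1).factorial : ℚ) * ∏ B ∈ blocks P, fB (stl π) B) := by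
        rw [cnt_succ, sum_blocks P]
        have h3 : ∀ B ∈ blocks P, ∑ a ∈ B, ∑ b ∈ Finset.univ.erase a, YY m π P a b
            = 2 * ((m.factorial : ℚ) * ((B.card : ℚ) + (blIn (stl π) B).card - 2) * ∏ B ∈ blocks P, fB (stl π) B) := by
          intro B hB
          have h4 : ∀ a ∈ B, ∑ b ∈ Finset.univ.erase a, YY m π P a b = ∑ b ∈ B.erase a, (m.factorial : ℚ) * (GR π B a b *
              ∏ B ∈ (blocks P).erase B, fB (stl π) B) := by
            intro a ha
            have hBa := eq_cl_of_mem hB ha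
            symm
            rw [← Finset.sum_subset (Finset.erase_subset_erase a (Finset.subset_univ B))]
            · refine Finset.sum_congr rfl fun b hb => ?_
              obtain ⟨hb1, hb2⟩ := Finset.mem_erase.mp hb
              rw [key a b hb1.symm (by rw [hBa] at hb2; exact mem_cl.mp hb2), ← hBa]
            · intro b hb hb'
              refine YY_zero fun h => hb' ?_
              rw [Finset.mem_erase] at hb ⊢
              exact ⟨hb.1, by rw [hBa]; exact mem_cl.mpr h⟩
          rw [Finset.sum_congr rfl h4]
          simp only [← Finset.mul_sum, ← Finset.sum_mul]
          rw [R_identity (sat_block H hB) (block_nonempty hB), ← Finset.mul_prod_erase (blocks P) _ hB]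
          ring
        rw [Finset.sum_congr rfl h3, ← Finset.mul_sum, ← Finset.sum_mul, ← Finset.mul_sum, ← rk_eq_sum H, hrk,
          Nat.factorial_succ]
        push_cast; ring
      linarith
    · intro hrk
      have h2 : 2 * cnt (m + 1) π P = 0 := by
        rw [cnt_succ]
        refine Finset.sum_eq_zero fun a _ => Finset.sum_eq_zero fun b hb => ?_
        have hne : a ≠ b := (Finset.mem_erase.mp hb).1.symm
        by_cases hP : P a b
        · have Hτ := stl_mul_swap_le H hP
          push_cast at hrk
          by_cases hab : stl π a b
          · rw [YY_same hP, (ih _ _ Hτ).2 (by rw [rk_cut hne hab]; linarith), zero_add]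
            refine Finset.sum_eq_zero fun S hS => ?_
            obtain ⟨h1, h2, h3, h4⟩ := mem_seps.mp hS
            refine (ih _ _ (le_split Hτ h2)).2 ?_
            have := rk_cut (P := P) hne hab
            unfold rk at this hrk ⊢
            rw [blocks_split_card hP h3 h4 h1]
            push_cast at *
            linarith
          · rw [YY_diff hab, (ih _ _ Hτ).2 (by rw [rk_merge hab]; linarith)]
        · exact YY_zero hP
      linarith

end

end Hz

open Equiv

namespace Hz

noncomputable section

set_option linter.unusedSectionVars false

open scoped Classical

/-! ### Part 7: connected counts -/

variable {α : Type*} [Fintype α] [DecidableEq α]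

def sz (R : Setoid α) (x : α) : ℕ := (cl R x).card

def BS (R : Setoid α) (ψ : ℕ → ℚ) : ℚ := ∑ c ∈ blocks R, ψ c.card

def BP (R : Setoid α) : ℚ := ∏ c ∈ blocks R, w c.card

lemma sz_pos (R : Setoid α) (x : α) : 0 < sz R x := block_card_pos (cl_mem R x)

lemma sum_erase_two {R : Setoid α} {a b : α} (hab : ¬ R a b) (f : Finset α → ℚ) :
    ∑ c ∈ ((blocks R).erase (cl R a)).erase (cl R b), f c = ∑ c ∈ blocks R, f c - f (cl R a) - f (cl R b) := by
  rw [Finset.sum_erase_eq_sub (Finset.mem_erase.mpr ⟨fun h => hab (cl_eq_iff.mp h.symm), cl_mem R b⟩),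
    Finset.sum_erase_eq_sub (cl_mem R a)]

lemma BS_sup {R : Setoid α} {a b : α} (hab : ¬ R a b) (ψ : ℕ → ℚ) :
    BS (R ⊔ pr a b) ψ = BS R ψ - ψ (sz R a) - ψ (sz R b) + ψ (sz R a + sz R b) := by
  unfold BS
  rw [blocks_sup hab, Finset.sum_insert, sum_erase_two hab, Finset.card_union_of_disjoint (cl_disj hab)]
  · unfold sz; ring
  · intro h; exact cl_union_notMem hab (Finset.mem_of_mem_erase (Finset.mem_of_mem_erase h))

lemma BP_sup {R : Setoid α} {a b : α} (hab : ¬ R a b) :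
    BP (R ⊔ pr a b) * (w (sz R a) * w (sz R b)) = BP R * w (sz R a + sz R b) := by
  unfold BP
  rw [blocks_sup hab, Finset.prod_insert, Finset.card_union_of_disjoint (cl_disj hab),
    ← Finset.mul_prod_erase (blocks R) _ (cl_mem R a),
    ← Finset.mul_prod_erase ((blocks R).erase (cl R a)) _
      (Finset.mem_erase.mpr ⟨fun h => hab (cl_eq_iff.mp h.symm), cl_mem R b⟩)]
  · unfold sz; ring
  · intro h; exact cl_union_notMem hab (Finset.mem_of_mem_erase (Finset.mem_of_mem_erase h))

lemma blIn_univ (R : Setoid α) : blIn R Finset.univ = blocks R := by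
  ext c; simp [mem_blIn]

lemma cl_top (x : α) : cl (⊤ : Setoid α) x = Finset.univ := by
  ext y; simp [mem_cl]

lemma blocks_top [Nonempty α] : blocks (⊤ : Setoid α) = {Finset.univ} := by
  ext c
  rw [mem_blocks, Finset.mem_singleton]
  constructor
  · rintro ⟨x, rfl⟩; exact cl_top x
  · rintro rfl; exact ⟨Classical.arbitrary α, cl_top _⟩

lemma sat_univ (R : Setoid α) : Sat R Finset.univ := fun _ _ _ _ => Finset.mem_univ _

lemma sum_univ_sz (R : Setoid α) (f : ℕ → ℚ) : ∑ x, f (sz R x) = BS R fun k => k * f k := by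
  rw [sum_blocks R]
  refine Finset.sum_congr rfl fun B hB => ?_
  rw [Finset.sum_congr rfl (fun x hx => by rw [sz, ← eq_cl_of_mem hB hx] : ∀ x ∈ B, f (sz R x) = f B.card)]
  simp

lemma sum_cl_sz (R : Setoid α) (x : α) (f : ℕ → ℚ) : ∑ y ∈ cl R x, f (sz R y) = sz R x * f (sz R x) := by
  rw [Finset.sum_congr rfl (fun y hy => by rw [sz, sz, cl_eq_iff.mpr (mem_cl.mp hy)] :
    ∀ y ∈ cl R x, f (sz R y) = f (sz R x))]
  simp [sz]

def Z (m : ℕ) (π : Perm α) (R : Setoid α) : ℚ := ev m fun ρ Q => if ρ = π ∧ Q ⊔ R = ⊤ then 1 else 0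

lemma Z_succ (m : ℕ) (π : Perm α) (R : Setoid α) :
    Z (m + 1) π R = ∑ τ ∈ swaps, Z m (τ * π) (stl τ ⊔ R) := by
  unfold Z
  rw [ev]
  refine Finset.sum_congr rfl fun τ hτ => ?_
  obtain ⟨a, b, hab, rfl⟩ := mem_swaps.mp hτ
  refine ev_congr m fun ρ Q _ => ?_
  have : stl (swap a b) ⊔ Q ⊔ R = Q ⊔ (stl (swap a b) ⊔ R) := by
    rw [sup_comm (stl (swap a b)) Q, sup_assoc]
  simp only [swap_mul_eq_iff, this]

lemma Z_congr {m : ℕ} {π : Perm α} {R R' : Setoid α} (h : stl π ⊔ R = stl π ⊔ R') : Z m π R = Z m π R' := by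
  unfold Z
  refine ev_congr m fun ρ Q hQ => ?_
  by_cases hρ : ρ = π
  · subst hρ
    have : Q ⊔ R = Q ⊔ R' := by
      rw [← sup_eq_left.mpr hQ, sup_assoc, h, sup_assoc]
    simp only [this]
  · simp [hρ]

lemma Z_bot (m : ℕ) (π : Perm α) : Z m π ⊥ = cnt m π ⊤ := by
  unfold Z cnt; simp only [sup_bot_eq]

lemma rk_top [Nonempty α] (π : Perm α) : rk π ⊤ = Fintype.card α + (blocks (stl π)).card - 2 := by
  rw [rk, blocks_top]; simp

/-- connected evaluation -/
lemma Z_E1 [Nonempty α] {m : ℕ} {π : Perm α} {R : Setoid α} (hR : R ≤ stl π)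
    (hm : (m : ℤ) = Fintype.card α + (blocks (stl π)).card - 2) :
    Z m π R = m.factorial * ((Fintype.card α : ℚ) ^ (((blocks (stl π)).card : ℤ) - 3) * BP (stl π)) := by
  rw [Z_congr (R' := ⊥) (by rw [sup_bot_eq]; exact sup_eq_left.mpr hR), Z_bot, (cnt_eq m π ⊤ le_top).1 (by rw [rk_top, hm]),
    blocks_top, Finset.prod_singleton, fB, blIn_univ]
  rfl

lemma Z_E0 [Nonempty α] {m : ℕ} {π : Perm α} {R : Setoid α} (hR : R ≤ stl π)
    (hm : (m : ℤ) < Fintype.card α + (blocks (stl π)).card - 2) : Z m π R = 0 := by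
  rw [Z_congr (R' := ⊥) (by rw [sup_bot_eq]; exact sup_eq_left.mpr hR), Z_bot, (cnt_eq m π ⊤ le_top).2 (by rw [rk_top]; exact hm)]

lemma Z_E2' {m : ℕ} {π : Perm α} {R : Setoid α} {x y : α} (hR : stl π ⊔ R = stl π ⊔ pr x y) (hxy : ¬ stl π x y)
    (hm : (m : ℤ) = Fintype.card α + (blocks (stl π)).card - 4) :
    Z m π R = m.factorial * (BP (stl π) * conv (Bb kq (sz (stl π) x)) (Bb kq (sz (stl π) y))
      (((blocks (stl π)).erase (cl (stl π) x)).erase (cl (stl π) y))) := by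
  have : Nonempty α := ⟨x⟩
  have hT : (⊤ : Setoid α) x y := trivial
  rw [Z_congr hR, Z, ev_split m π hT, (cnt_eq m π ⊤ le_top).2 (by rw [rk_top]; linarith), zero_add, cl_top]
  have := L_lemma (sat_univ (stl π)) (Finset.mem_univ x) (Finset.mem_univ y) hxy
  rw [blIn_univ] at this
  unfold BP sz
  rw [← this, Finset.mul_sum]
  refine Finset.sum_congr rfl fun S hS => ?_
  obtain ⟨h1, h2, h3, h4⟩ := mem_seps.mp hS
  have h1' : S ⊆ cl (⊤ : Setoid α) x := by rw [cl_top]; exact h1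
  rw [(cnt_eq m π _ (le_split le_top h2)).1, prod_blocks_split hT h3 h4 h1', cl_top, blocks_top]
  · simp
  · rw [rk, blocks_split_card hT h3 h4 h1', blocks_top, hm]; simp

lemma Z_E2 {m : ℕ} {π : Perm α} {R : Setoid α} {x y : α} (hR : stl π ⊔ R = stl π ⊔ pr x y) (hxy : ¬ stl π x y)
    (hm : (m : ℤ) = Fintype.card α + (blocks (stl π)).card - 4) (hl : (blocks (stl π)).card + 2 = Fintype.card α)
    (n p q : ℚ) (hn : n = Fintype.card α) (hp : p = sz (stl π) x) (hq : q = sz (stl π) y)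
    (ψ₁ ψ₂ : ℕ → ℚ) (h1 : ∀ k : ℕ, ψ₁ k = k * (p / (p + k) + q / (q + k)) * (p + q + k))
    (h2 : ∀ k : ℕ, ψ₂ k = k * (n - p - q - k) * (1 / (p + k) + 1 / (q + k))) :
    p ^ 2 * q ^ 2 * Z m π R = m.factorial * (BP (stl π) * ((p + q) * n ^ ((Fintype.card α : ℤ) - 5)
      - n ^ ((Fintype.card α : ℤ) - 6) * (BS (stl π) ψ₁ - ψ₁ (sz (stl π) x) - ψ₁ (sz (stl π) y))
      + p * q * n ^ ((Fintype.card α : ℤ) - 7) * (BS (stl π) ψ₂ - ψ₂ (sz (stl π) x) - ψ₂ (sz (stl π) y)))) := by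
  rw [Z_E2' hR hxy hm]
  have hpp : 0 < p := by rw [hp]; exact_mod_cast sz_pos _ _
  have hqp : 0 < q := by rw [hq]; exact_mod_cast sz_pos _ _
  set I := ((blocks (stl π)).erase (cl (stl π) x)).erase (cl (stl π) y) with hI
  have hIc : (I.card : ℤ) = Fintype.card α - 4 := by
    rw [hI, Finset.card_erase_of_mem, Finset.card_erase_of_mem (cl_mem _ _)]
    · have : 1 < (blocks (stl π)).card :=
        Finset.one_lt_card.mpr ⟨_, cl_mem _ x, _, cl_mem _ y, fun h => hxy (cl_eq_iff.mp h)⟩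
      omega
    · exact Finset.mem_erase.mpr ⟨fun h => hxy (cl_eq_iff.mp h.symm), cl_mem _ y⟩
  have hs : n = p + q + ∑ c ∈ I, kq c := by
    rw [hI, sum_erase_two hxy]
    have := sum_univ_sz (stl π) (fun _ => 1)
    simp [BS] at this
    rw [hn, this, hp, hq]; unfold kq sz; ring
  have := SB_eq' kq p q hpp hqp I (fun c hc => by
    have : c ∈ blocks (stl π) := Finset.mem_of_mem_erase (Finset.mem_of_mem_erase hc)
    unfold kq; exact_mod_cast block_card_pos this) n hs
  have e1 : ∑ j ∈ I, kq j * (p / (p + kq j) + q / (q + kq j)) * (p + q + kq j)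
      = BS (stl π) ψ₁ - ψ₁ (sz (stl π) x) - ψ₁ (sz (stl π) y) := by
    rw [hI, sum_erase_two hxy]; unfold BS sz; simp only [h1]; rfl
  have e2 : ∑ j ∈ I, kq j * (n - p - q - kq j) * (1 / (p + kq j) + 1 / (q + kq j))
      = BS (stl π) ψ₂ - ψ₂ (sz (stl π) x) - ψ₂ (sz (stl π) y) := by
    rw [hI, sum_erase_two hxy]; unfold BS sz; simp only [h2]; rfl
  rw [e1, e2, hIc] at this
  rw [← hp, ← hq]
  calc _ = m.factorial * (BP (stl π) * (p ^ 2 * q ^ 2 * conv (Bb kq p) (Bb kq q) I)) := by ring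
    _ = _ := by
      rw [this]
      rw [show (Fintype.card α : ℤ) - 4 - 1 = Fintype.card α - 5 by ring, show (Fintype.card α : ℤ) - 4 - 2 = Fintype.card α - 6 by ring,
        show (Fintype.card α : ℤ) - 4 - 3 = Fintype.card α - 7 by ring]

end

end Hz

open Equiv

namespace Hz

noncomputable section

set_option linter.unusedSectionVars false

open scoped Classical

/-! ### Part 8: evaluations at a product of two disjoint transpositions -/

variable {α : Type*} [Fintype α] [DecidableEq α]

lemma w2 : w 2 = 4 := by norm_num [w, g, Nat.factorial]
lemma w3 : w 3 = 27 / 2 := by norm_num [w, g, Nat.factorial]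
lemma w4 : w 4 = 128 / 3 := by norm_num [w, g, Nat.factorial]
lemma w5 : w 5 = 3125 / 24 := by norm_num [w, g, Nat.factorial]

structure D22 (σ : Perm α) : Prop where
  bs : ∀ ψ, BS (stl σ) ψ = ((Fintype.card α : ℚ) - 4) * ψ 1 + 2 * ψ 2
  bp : BP (stl σ) = 16
  bl : (blocks (stl σ)).card + 2 = Fintype.card α
  sq : ∀ x, sz (stl σ) x = 1 ∨ sz (stl σ) x = 2

lemma sz_bot (x : α) : sz (⊥ : Setoid α) x = 1 := by
  rw [sz, Finset.card_eq_one]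
  refine ⟨x, ?_⟩
  ext y; rw [mem_cl, Finset.mem_singleton]; exact eq_comm

lemma blocks_bot_card : (blocks (⊥ : Setoid α)).card = Fintype.card α := by
  rw [blocks, Finset.card_image_of_injective, Finset.card_univ]
  intro x y h
  exact cl_eq_iff.mp h

lemma bot_block {c : Finset α} (hc : c ∈ blocks (⊥ : Setoid α)) : c.card = 1 := by
  obtain ⟨x, rfl⟩ := mem_blocks.mp hc
  exact sz_bot x

lemma BS_bot (ψ : ℕ → ℚ) : BS (⊥ : Setoid α) ψ = Fintype.card α * ψ 1 := by
  unfold BS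
  rw [Finset.sum_congr rfl (fun c hc => by rw [bot_block hc] : ∀ c ∈ blocks (⊥ : Setoid α), ψ c.card = ψ 1)]
  simp [blocks_bot_card]

lemma BP_bot : BP (⊥ : Setoid α) = 1 := by
  unfold BP
  exact Finset.prod_eq_one fun c hc => by rw [bot_block hc, w1]

lemma sz_sup_left {R : Setoid α} {a b : α} (hab : ¬ R a b) : sz (R ⊔ pr a b) a = sz R a + sz R b := by
  unfold sz; rw [cl_sup_left, Finset.card_union_of_disjoint (cl_disj hab)]

lemma sz_sup_other {R : Setoid α} {a b x : α} (ha : ¬ R x a) (hb : ¬ R x b) : sz (R ⊔ pr a b) x = sz R x := by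
  unfold sz; rw [cl_sup_other ha hb]

lemma sz_eq_of_rel {R : Setoid α} {x y : α} (h : R x y) : sz R x = sz R y := by
  unfold sz; rw [cl_eq_iff.mpr h]

lemma pr_iff {a b x y : α} : pr a b x y ↔ x = y ∨ ((x = a ∨ x = b) ∧ (y = a ∨ y = b)) := Iff.rfl

lemma stl_disj {a b c d : α} (hac : a ≠ c) (had : a ≠ d) (hbc : b ≠ c) (hbd : b ≠ d) (hab : a ≠ b) :
    stl (swap a b * swap c d) = stl (swap c d) ⊔ stl (swap a b) := by
  rw [merge, stl_swap a b]
  rw [stl_swap, pr_iff]; tauto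

lemma D22_mk {a b c d : α} (hab : a ≠ b) (hcd : c ≠ d) (hac : a ≠ c) (had : a ≠ d) (hbc : b ≠ c) (hbd : b ≠ d) :
    D22 (swap a b * swap c d) := by
  have h0 : ¬ (⊥ : Setoid α) c d := hcd
  have e0 : pr c d = (⊥ : Setoid α) ⊔ pr c d := by rw [bot_sup_eq]
  have e1 : stl (swap a b * swap c d) = (⊥ ⊔ pr c d) ⊔ pr a b := by
    rw [stl_disj hac had hbc hbd hab, stl_swap, stl_swap, bot_sup_eq]
  have h1 : ¬ ((⊥ : Setoid α) ⊔ pr c d) a b := by rw [bot_sup_eq, pr_iff]; tauto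
  have sa : sz ((⊥ : Setoid α) ⊔ pr c d) a = 1 := by rw [sz_sup_other hac had, sz_bot]
  have sb : sz ((⊥ : Setoid α) ⊔ pr c d) b = 1 := by rw [sz_sup_other hbc hbd, sz_bot]
  have hbs : ∀ ψ, BS (stl (swap a b * swap c d)) ψ = ((Fintype.card α : ℚ) - 4) * ψ 1 + 2 * ψ 2 := by
    intro ψ
    rw [e1, BS_sup h1, BS_sup h0, sa, sb, sz_bot, sz_bot, BS_bot]; ring
  refine ⟨hbs, ?_, ?_, ?_⟩
  · rw [e1]
    have t1 := BP_sup h1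
    have t2 := BP_sup h0
    rw [sa, sb, w1] at t1
    rw [sz_bot, sz_bot, w1, BP_bot] at t2
    have v2 := w2
    norm_num only at t1 t2
    rw [w2] at t1 t2
    linarith
  · rw [e1]
    have t1 := card_blocks_sup h1
    have t2 := card_blocks_sup h0
    rw [blocks_bot_card] at t2
    omega
  · intro x
    by_contra hx
    unfold sz at hx
    have t := hbs fun k => if k = 1 ∨ k = 2 then 0 else 1
    norm_num at t
    unfold BS at t
    rw [Finset.sum_eq_zero_iff_of_nonneg (fun c _ => by dsimp only; split_ifs <;> norm_num)] at t
    have := t _ (cl_mem _ x)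
    dsimp only at this
    rw [if_neg hx] at this
    norm_num at this

/-- the evaluated two-component count -/
def LF (N : ℕ) (S : (ℕ → ℚ) → ℚ) (B : ℚ) (p q : ℕ) : ℚ :=
  B * (((p : ℚ) + q) * (N : ℚ) ^ ((N : ℤ) - 5)
      - (N : ℚ) ^ ((N : ℤ) - 6) * (S (fun k => k * ((p : ℚ) / (p + k) + q / (q + k)) * (p + q + k))
        - p * ((p : ℚ) / (p + p) + q / (q + p)) * (p + q + p) - q * ((p : ℚ) / (p + q) + q / (q + q)) * (p + q + q))
      + p * q * (N : ℚ) ^ ((N : ℤ) - 7) * (S (fun k => k * ((N : ℚ) - p - q - k) * (1 / (p + k) + 1 / (q + k)))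
        - p * ((N : ℚ) - p - q - p) * (1 / (p + p) + 1 / (q + p)) - q * ((N : ℚ) - p - q - q) * (1 / (p + q) + 1 / (q + q))))
    / ((p : ℚ) ^ 2 * (q : ℚ) ^ 2)

lemma Z_LF {m : ℕ} {π : Perm α} {R : Setoid α} {x y : α} (hR : stl π ⊔ R = stl π ⊔ pr x y) (hxy : ¬ stl π x y)
    (hm : m + 6 = 2 * Fintype.card α) (hl : (blocks (stl π)).card + 2 = Fintype.card α) :
    Z m π R = m.factorial * LF (Fintype.card α) (BS (stl π)) (BP (stl π)) (sz (stl π) x) (sz (stl π) y) := by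
  have hp : (0 : ℚ) < sz (stl π) x := by exact_mod_cast sz_pos _ _
  have hq : (0 : ℚ) < sz (stl π) y := by exact_mod_cast sz_pos _ _
  have := Z_E2 (m := m) hR hxy (by omega) hl _ _ _ rfl rfl rfl _ _ (fun k => rfl) (fun k => rfl)
  rw [LF, mul_div_assoc', eq_div_iff (by positivity), mul_comm, this]

variable {σ : Perm α} {m : ℕ}

lemma V0 [Nonempty α] (h : D22 σ) (hm : m + 6 = 2 * Fintype.card α) :
    Z (m + 2) σ (stl σ) = (m + 2).factorial * ((Fintype.card α : ℚ) ^ ((Fintype.card α : ℤ) - 5) * 16) := by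
  have := h.bl
  rw [Z_E1 le_rfl (by omega), h.bp]
  rw [show ((blocks (stl σ)).card : ℤ) - 3 = (Fintype.card α : ℤ) - 5 by omega]

def S0 (N : ℕ) (ψ : ℕ → ℚ) : ℚ := ((N : ℚ) - 4) * ψ 1 + 2 * ψ 2

lemma BS_D22 (h : D22 σ) : BS (stl σ) = S0 (Fintype.card α) := funext h.bs

lemma V1 (h : D22 σ) (hm : m + 6 = 2 * Fintype.card α) {x y : α} (hxy : ¬ stl σ x y) :
    Z m σ (stl σ ⊔ pr x y) = m.factorial * LF (Fintype.card α) (S0 (Fintype.card α)) 16 (sz (stl σ) x) (sz (stl σ) y) := by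
  rw [Z_LF (by rw [← sup_assoc, sup_idem]) hxy hm h.bl, h.bp, BS_D22 h]

lemma V1' (h : D22 σ) (hm : m + 6 = 2 * Fintype.card α) {x y : α} (hxy : stl σ x y) :
    Z m σ (stl σ ⊔ pr x y) = 0 := by
  have : Nonempty α := ⟨x⟩
  have := h.bl
  exact Z_E0 (sup_le le_rfl (pr_le_iff.mpr hxy)) (by omega)

def T (m : ℕ) (σ : Perm α) (x y z : α) : ℚ :=
  Z m (swap x y * (swap y z * σ)) (stl (swap x y) ⊔ (stl (swap y z) ⊔ stl σ))

lemma T_cyc {x y z : α} (hxy : x ≠ y) (hyz : y ≠ z) (hxz : x ≠ z) : T m σ x y z = T m σ y z x := by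
  unfold T
  have e1 : swap x y * swap y z = swap y z * swap z x := by
    have h := Equiv.swap_mul_swap_mul_swap (x := y) (y := x) (z := z) 
    ext u
    simp only [Perm.mul_apply, swap_apply_def]
    split_ifs <;> simp_all
  have e2 : pr x y ⊔ pr y z = pr y z ⊔ pr z x := by
    have t1 : (pr x y ⊔ pr y z) x y := (le_sup_left : pr x y ≤ _) (pr_rel x y)
    have t2 : (pr x y ⊔ pr y z) y z := (le_sup_right : pr y z ≤ _) (pr_rel y z)
    have t3 : (pr y z ⊔ pr z x) y z := (le_sup_left : pr y z ≤ _) (pr_rel y z)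
    have t4 : (pr y z ⊔ pr z x) z x := (le_sup_right : pr z x ≤ _) (pr_rel z x)
    apply le_antisymm
    · exact sup_le (pr_le_iff.mpr (Setoid.symm' _ (Setoid.trans' _ t3 t4))) le_sup_left
    · exact sup_le le_sup_right (pr_le_iff.mpr (Setoid.symm' _ (Setoid.trans' _ t1 t2)))
  rw [← mul_assoc, e1, mul_assoc, stl_swap, stl_swap, stl_swap, ← sup_assoc, e2, sup_assoc]

lemma V2 (h : D22 σ) (hm : m + 6 = 2 * Fintype.card α) {x y z : α} (hxy : ¬ stl σ x y) (hyz : ¬ stl σ y z)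
    (hxz : ¬ stl σ x z) :
    T m σ x y z = m.factorial * ((Fintype.card α : ℚ) ^ ((Fintype.card α : ℤ) - 7) *
      (16 * w (sz (stl σ) x + sz (stl σ) y + sz (stl σ) z) / (w (sz (stl σ) x) * w (sz (stl σ) y) * w (sz (stl σ) z)))) := by
  have : Nonempty α := ⟨x⟩
  have e1 := merge hyz
  have h2 : ¬ stl (swap y z * σ) x y := by
    intro hh
    have : cl (stl σ ⊔ pr y z) x = cl (stl σ ⊔ pr y z) y := by rw [← e1]; exact cl_eq_iff.mpr hh
    rw [cl_sup_other hxy hxz] at this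
    have t := self_mem_cl (stl σ ⊔ pr y z) y
    rw [← this] at t
    exact hxy (mem_cl.mp t)
  have e2 := merge h2
  have b1 := card_blocks_sup hyz
  have b2 := card_blocks_sup h2
  rw [← e1] at b1
  rw [← e2] at b2
  have p1 := BP_sup hyz
  have p2 := BP_sup h2
  have s1 : sz (stl (swap y z * σ)) x = sz (stl σ) x := by rw [e1, sz_sup_other hxy hxz]
  have s2 : sz (stl (swap y z * σ)) y = sz (stl σ) y + sz (stl σ) z := by rw [e1, sz_sup_left hyz]
  rw [← e1, h.bp] at p1
  rw [← e2, s1, s2] at p2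
  have bl := h.bl
  unfold T
  rw [Z_E1 _ (by omega)]
  · have wx := w_pos (sz_pos (stl σ) x)
    have wy := w_pos (sz_pos (stl σ) y)
    have wz := w_pos (sz_pos (stl σ) z)
    have wyz := w_pos (Nat.add_pos_left (sz_pos (stl σ) y) (sz (stl σ) z))
    congr 2
    · congr 1; omega
    · rw [eq_div_iff (by positivity), add_assoc]
      refine mul_right_cancel₀ wyz.ne' ?_
      calc _ = (BP (stl (swap x y * (swap y z * σ))) * (w (sz (stl σ) x) * w (sz (stl σ) y + sz (stl σ) z)))
            * (w (sz (stl σ) y) * w (sz (stl σ) z)) := by ring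
        _ = (BP (stl (swap y z * σ)) * (w (sz (stl σ) y) * w (sz (stl σ) z))) * w (sz (stl σ) x + (sz (stl σ) y + sz (stl σ) z)) := by
          rw [p2]; ring
        _ = _ := by rw [p1]; ring
  · rw [e2, e1, stl_swap, stl_swap]
    exact sup_le le_sup_right (sup_le (le_sup_of_le_left le_sup_right) (le_sup_of_le_left le_sup_left))

def V3v (N : ℕ) (k : ℕ) : ℚ :=
  LF N (fun ψ => ((N : ℚ) - 2) * ψ 1 + ψ 2 - ψ 1 - ψ k + ψ (k + 1)) (4 * w (k + 1) / w k) 1 (k + 1)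

lemma V3 (h : D22 σ) (hm : m + 6 = 2 * Fintype.card α) {x y z : α} (hyz : y ≠ z) (hyz' : stl σ y z) (hxy : ¬ stl σ x y) :
    T m σ x y z = m.factorial * V3v (Fintype.card α) (sz (stl σ) x) := by
  have sy : sz (stl σ) y = 2 := by
    rcases h.sq y with h1 | h1
    · exfalso
      obtain ⟨u, hu⟩ := Finset.card_eq_one.mp h1
      have t1 := self_mem_cl (stl σ) y
      have t2 := mem_cl.mpr hyz'
      rw [hu, Finset.mem_singleton] at t1 t2
      exact hyz (t1.trans t2.symm)
    · exact h1
  set σ' := swap y z * σ with hσ'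
  have hc : ¬ stl σ' y z := cut hyz hyz'
  have e1 : stl σ = stl σ' ⊔ pr y z := cut_sup hyz hyz'
  have hxz : ¬ stl σ x z := fun hh => hxy (Setoid.trans' _ hh (Setoid.symm' _ hyz'))
  have hle : stl σ' ≤ stl σ := by rw [e1]; exact le_sup_left
  have hxy' : ¬ stl σ' x y := fun hh => hxy (hle hh)
  have hxz' : ¬ stl σ' x z := fun hh => hxz (hle hh)
  have ss := cut_card_add hyz hyz'
  rw [← hσ'] at ss
  have sy1 : sz (stl σ') y = 1 ∧ sz (stl σ') z = 1 := by
    have t1 := sz_pos (stl σ') y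
    have t2 := sz_pos (stl σ') z
    unfold sz at *
    omega
  have sx : sz (stl σ) x = sz (stl σ') x := by rw [e1, sz_sup_other hxy' hxz']
  have e2 := merge hxy'
  have b1 := card_blocks_sup hc
  have b2 := card_blocks_sup hxy'
  rw [← e1] at b1
  rw [← e2] at b2
  have p1 := BP_sup hc
  have p2 := BP_sup hxy'
  rw [← e1, sy1.1, sy1.2, h.bp, w1] at p1
  norm_num [w2] at p1
  rw [← e2, sy1.1, w1, ← sx] at p2
  have bs1 := fun ψ => BS_sup hc ψ
  have bs2 := fun ψ => BS_sup hxy' ψ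
  rw [← e1, sy1.1, sy1.2] at bs1
  rw [← e2, sy1.1, ← sx] at bs2
  have bl := h.bl
  have hz : ¬ stl (swap x y * σ') z x := by
    rw [e2]
    intro hh
    have : cl (stl σ' ⊔ pr x y) z = cl (stl σ' ⊔ pr x y) x := cl_eq_iff.mpr hh
    rw [cl_sup_other (fun t => hxz' (Setoid.symm' _ t)) (fun t => hc (Setoid.symm' _ t))] at this
    have t := self_mem_cl (stl σ' ⊔ pr x y) x
    rw [← this] at t
    exact hxz' (Setoid.symm' _ (mem_cl.mp t))
  have szz : sz (stl (swap x y * σ')) z = 1 := by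
    rw [e2, sz_sup_other (fun t => hxz' (Setoid.symm' _ t)) (fun t => hc (Setoid.symm' _ t)), sy1.2]
  have szx : sz (stl (swap x y * σ')) x = sz (stl σ) x + 1 := by
    rw [e2, sz_sup_left hxy', sy1.1, sx]
  unfold T
  rw [← hσ', Z_LF (x := z) (y := x) _ hz hm (by omega), szz, szx, V3v]
  · congr 1
    have wx := w_pos (sz_pos (stl σ) x)
    have B : BP (stl (swap x y * σ')) = 4 * w (sz (stl σ) x + 1) / w (sz (stl σ) x) := by
      rw [eq_div_iff wx.ne']
      have : BP (stl σ') = 4 := by linarith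
      rw [this] at p2; linarith
    have S : BS (stl (swap x y * σ')) = fun ψ => ((Fintype.card α : ℚ) - 2) * ψ 1 + ψ 2 - ψ 1 - ψ (sz (stl σ) x) + ψ (sz (stl σ) x + 1) := by
      funext ψ
      have t1 := bs1 ψ
      rw [h.bs] at t1
      rw [bs2]
      norm_num at t1
      linarith
    rw [B, S]
  · rw [e2, e1, stl_swap, stl_swap]
    have t1 : (stl σ' ⊔ pr x y ⊔ pr z x) x y := (le_sup_of_le_left le_sup_right : pr x y ≤ stl σ' ⊔ pr x y ⊔ pr z x) (pr_rel x y)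
    have t2 : (stl σ' ⊔ pr x y ⊔ pr z x) z x := (le_sup_right : pr z x ≤ stl σ' ⊔ pr x y ⊔ pr z x) (pr_rel z x)
    apply le_antisymm
    · refine sup_le le_sup_left (sup_le (pr_le_iff.mpr t1) (sup_le ?_ (sup_le (le_sup_of_le_left le_sup_left) ?_)))
      all_goals exact pr_le_iff.mpr (Setoid.symm' _ (Setoid.trans' _ t2 t1))
    · refine sup_le le_sup_left (pr_le_iff.mpr ?_)
      set Q := stl σ' ⊔ pr x y ⊔ (pr x y ⊔ (pr y z ⊔ (stl σ' ⊔ pr y z)))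
      have u1 : Q x y := (le_sup_of_le_left le_sup_right : pr x y ≤ Q) (pr_rel x y)
      have u2 : Q y z := (le_sup_of_le_right (le_sup_of_le_right le_sup_left) : pr y z ≤ Q) (pr_rel y z)
      exact Setoid.symm' _ (Setoid.trans' _ u1 u2)

end

end Hz

open Equiv

namespace Hz

noncomputable section

set_option linter.unusedSectionVars false

open scoped Classical

/-! ### Part 9: summation -/

variable {α : Type*} [Fintype α] [DecidableEq α]

lemma sum_swaps_moved (f : Perm α → ℚ) (x : α) :
    ∑ τ ∈ swaps with τ x ≠ x, f τ = ∑ b ∈ Finset.univ.erase x, f (swap x b) := by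
  refine Finset.sum_nbij' (fun τ => τ x) (fun b => swap x b) ?_ ?_ ?_ ?_ ?_
  · intro τ hτ; simpa using (Finset.mem_filter.mp hτ).2
  · intro b hb
    have hb' : b ≠ x := (Finset.mem_erase.mp hb).1
    exact Finset.mem_filter.mpr ⟨mem_swaps.mpr ⟨x, b, hb'.symm, rfl⟩, by simpa using hb'⟩
  · intro τ hτ
    obtain ⟨h1, h2⟩ := Finset.mem_filter.mp hτ
    exact (swap_eq_of_moved (mem_swaps.mp h1) h2).symm
  · intro b _; simp
  · intro τ hτ
    obtain ⟨h1, h2⟩ := Finset.mem_filter.mp hτ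
    rw [← swap_eq_of_moved (mem_swaps.mp h1) h2]

lemma disj_swap_iff {τ : Perm α} {y z : α} (hyz : y ≠ z) : τ.Disjoint (swap y z) ↔ τ y = y ∧ τ z = z := by
  constructor
  · intro h
    constructor
    · rcases h y with h | h
      · exact h
      · exact absurd h (by simpa using hyz.symm)
    · rcases h z with h | h
      · exact h
      · exact absurd h (by simpa using hyz)
  · rintro ⟨h1, h2⟩ u
    by_cases hy : u = y
    · subst hy; exact Or.inl h1
    by_cases hz : u = z
    · subst hz; exact Or.inl h2
    exact Or.inr (swap_apply_of_ne_of_ne hy hz)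

lemma sum_overlap (f : Perm α → ℚ) {y z : α} (hyz : y ≠ z) :
    ∑ τ ∈ swaps, f τ = f (swap y z) + ∑ x ∈ (Finset.univ.erase y).erase z, (f (swap x y) + f (swap x z))
      + ∑ τ ∈ swaps with τ.Disjoint (swap y z), f τ := by
  rw [← Finset.sum_filter_add_sum_filter_not swaps (fun τ : Perm α => τ y ≠ y), sum_swaps_moved,
    ← Finset.add_sum_erase _ _ (Finset.mem_erase.mpr ⟨hyz.symm, Finset.mem_univ z⟩), Finset.sum_add_distrib]
  have h1 : ∑ τ ∈ swaps with ¬ τ y ≠ y, f τ = ∑ x ∈ (Finset.univ.erase y).erase z, f (swap x z)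
      + ∑ τ ∈ swaps with τ.Disjoint (swap y z), f τ := by
    rw [← Finset.sum_filter_add_sum_filter_not (swaps.filter fun τ => ¬ τ y ≠ y) (fun τ : Perm α => τ z ≠ z)]
    congr 1
    · have := sum_swaps_moved (fun τ => if τ y = y then f τ else 0) z
      rw [← Finset.sum_filter, Finset.filter_filter] at this
      rw [Finset.filter_filter]
      have e : (swaps.filter fun τ : Perm α => ¬ τ y ≠ y ∧ τ z ≠ z) = swaps.filter fun τ : Perm α => τ z ≠ z ∧ τ y = y := by
        ext τ; simp [and_comm]
      rw [e, this, Finset.erase_right_comm, ← Finset.add_sum_erase _ _ (Finset.mem_erase.mpr ⟨hyz, Finset.mem_univ y⟩)]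
      rw [if_neg (by simpa using hyz.symm), zero_add]
      refine Finset.sum_congr rfl fun x hx => ?_
      simp only [Finset.mem_erase, Finset.mem_univ, and_true] at hx
      rw [if_pos (swap_apply_of_ne_of_ne hyz hx.1.symm), swap_comm]
    · rw [Finset.filter_filter]
      refine Finset.sum_congr ?_ fun _ _ => rfl
      ext τ; simp [disj_swap_iff hyz]
  rw [h1]
  have h2 : ∑ x ∈ (Finset.univ.erase y).erase z, f (swap y x) = ∑ x ∈ (Finset.univ.erase y).erase z, f (swap x y) :=
    Finset.sum_congr rfl fun x _ => by rw [swap_comm]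
  rw [h2]; ring

lemma sum_nrel (R : Setoid α) (x : α) (f : ℕ → ℚ) :
    (∑ y, if R x y then 0 else f (sz R y)) = BS R (fun k => k * f k) - sz R x * f (sz R x) := by
  rw [← sum_univ_sz, ← sum_cl_sz R x f, eq_sub_iff_add_eq, cl, Finset.sum_filter, ← Finset.sum_add_distrib]
  refine Finset.sum_congr rfl fun y _ => ?_
  split_ifs <;> simp

lemma sum_nrel2 (R : Setoid α) {x y : α} (hxy : ¬ R x y) (f : ℕ → ℚ) :
    (∑ z, if R x z ∨ R y z then 0 else f (sz R z))
      = BS R (fun k => k * f k) - sz R x * f (sz R x) - sz R y * f (sz R y) := by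
  rw [← sum_nrel, ← sum_cl_sz R y f, eq_sub_iff_add_eq, cl, Finset.sum_filter, ← Finset.sum_add_distrib]
  refine Finset.sum_congr rfl fun z _ => ?_
  by_cases h1 : R x z <;> by_cases h2 : R y z
  · exact absurd (R.trans' h1 (R.symm' h2)) hxy
  all_goals simp [h1, h2]

variable {σ : Perm α} {m : ℕ}

/-- sum of the equal terms -/
lemma sumE (h : D22 σ) (hm : m + 6 = 2 * Fintype.card α) (F : ℕ → ℕ → ℚ)
    (hF : F = LF (Fintype.card α) (S0 (Fintype.card α)) 16) (N : ℚ) (hN : N = Fintype.card α) :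
    ∑ y, ∑ z ∈ Finset.univ.erase y, Z m σ (stl σ ⊔ pr y z) = m.factorial *
      ((N - 4) * (N - 5) * F 1 1 + 4 * (N - 4) * (F 1 2 + F 2 1) + 8 * F 2 2) := by
  have e : ∀ y, ∑ z ∈ Finset.univ.erase y, Z m σ (stl σ ⊔ pr y z)
      = m.factorial * ((N - 4) * F (sz (stl σ) y) 1 + 4 * F (sz (stl σ) y) 2
        - sz (stl σ) y * F (sz (stl σ) y) (sz (stl σ) y)) := by
    intro y
    have := sum_nrel (stl σ) y (F (sz (stl σ) y))
    rw [h.bs] at this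
    have t : (∑ z, if stl σ y z then 0 else F (sz (stl σ) y) (sz (stl σ) z)) =
      ((N - 4) * F (sz (stl σ) y) 1 + 4 * F (sz (stl σ) y) 2
        - sz (stl σ) y * F (sz (stl σ) y) (sz (stl σ) y)) := by
      rw [this, hN]; push_cast; ring
    rw [← t, Finset.mul_sum, ← Finset.add_sum_erase _ _ (Finset.mem_univ y), if_pos ((stl σ).refl' y), mul_zero, zero_add]
    refine Finset.sum_congr rfl fun z _ => ?_
    by_cases hyz : stl σ y z
    · rw [if_pos hyz, V1' h hm hyz, mul_zero]
    · rw [if_neg hyz, V1 h hm hyz, hF]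
  rw [Finset.sum_congr rfl fun y _ => e y, ← Finset.mul_sum,
    sum_univ_sz (stl σ) (fun k => (N - 4) * F k 1 + 4 * F k 2 - k * F k k), h.bs, ← hN]
  push_cast; ring

def V2v (N : ℕ) (a b c : ℕ) : ℚ := (N : ℚ) ^ ((N : ℤ) - 7) * (16 * w (a + b + c) / (w a * w b * w c))

lemma sumT (h : D22 σ) (hm : m + 6 = 2 * Fintype.card α) (N : ℚ) (hN : N = Fintype.card α)
    (F : ℕ → ℕ → ℕ → ℚ) (hF : F = V2v (Fintype.card α)) (G : ℕ → ℚ) (hG : G = V3v (Fintype.card α)) :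
    ∑ y, ∑ z ∈ Finset.univ.erase y, ∑ x ∈ (Finset.univ.erase y).erase z, T m σ x y z = m.factorial *
      ((N - 4) * (N - 5) * (N - 6) * F 1 1 1 + 4 * (N - 4) * (N - 5) * (F 1 1 2 + F 1 2 1 + F 2 1 1)
        + 8 * (N - 4) * (F 1 2 2 + F 2 1 2 + F 2 2 1) + 12 * ((N - 4) * G 1 + 2 * G 2)) := by
  set s := stl σ with hs
  let A : α → α → α → ℚ := fun x y z => if s x y then 0 else if s x z ∨ s y z then 0 else F (sz s x) (sz s y) (sz s z)
  let B : α → α → α → ℚ := fun x y z => if y ≠ z ∧ s y z then (if s y x then 0 else G (sz s x)) else 0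
  have hsize : ∀ x y z, x ≠ y → y ≠ z → x ≠ z → s x y → s y z → False := by
    intro x y z h1 h2 h3 hxy hyz
    have : ({x, y, z} : Finset α) ⊆ cl s x := by
      intro u hu
      simp only [Finset.mem_insert, Finset.mem_singleton] at hu
      rcases hu with rfl | rfl | rfl
      · exact self_mem_cl _ _
      · exact mem_cl.mpr hxy
      · exact mem_cl.mpr (s.trans' hxy hyz)
    have c := Finset.card_le_card this
    rw [Finset.card_eq_three.mpr ⟨x, y, z, h1, h3, h2, rfl⟩] at c
    rcases h.sq x with t | t <;> rw [sz, ← hs] at t <;> omega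
  have key : ∀ x y z, (if y ≠ z ∧ x ≠ y ∧ x ≠ z then T m σ x y z else 0) =
      m.factorial * (A x y z + B x y z + B y z x + B z x y) := by
    intro x y z
    by_cases hd : y ≠ z ∧ x ≠ y ∧ x ≠ z
    · obtain ⟨h1, h2, h3⟩ := hd
      rw [if_pos ⟨h1, h2, h3⟩]
      by_cases hyz : s y z
      · have n1 : ¬ s x y := fun t => hsize x y z h2 h1 h3 t hyz
        have n2 : ¬ s x z := fun t => n1 (s.trans' t (s.symm' hyz))
        have n1' : ¬ s y x := fun t => n1 (s.symm' t)
        have n2' : ¬ s z x := fun t => n2 (s.symm' t)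
        rw [V3 h hm h1 hyz n1, ← hG, ← hs]
        simp [A, B, n1, n2, n1', n2', hyz, h1]
      by_cases hxy : s x y
      · have n1' : ¬ s z y := fun t => hyz (s.symm' t)
        have n2 : ¬ s x z := fun t => hyz (s.trans' (s.symm' hxy) t)
        have n2' : ¬ s z x := fun t => n2 (s.symm' t)
        rw [T_cyc h2 h1 h3, T_cyc h1 h3.symm h2.symm, V3 h hm h2 hxy n2', ← hG, ← hs]
        simp [A, B, n2, n1', n2', hyz, h2, hxy]
      by_cases hxz : s x z
      · have hzx := s.symm' hxz
        have n1 : ¬ s y x := fun t => hxy (s.symm' t)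
        rw [T_cyc h2 h1 h3, V3 h hm h3.symm hzx hyz, ← hG, ← hs]
        have n2 : ¬ s z y := fun t => hyz (s.symm' t)
        simp [A, B, hyz, hxy, hxz, hzx, h3.symm, n2]
      · have n3 : ¬ s z x := fun t => hxz (s.symm' t)
        rw [V2 h hm hxy hyz hxz, ← hs]
        simp [A, B, hyz, hxy, hxz, n3, V2v, hF]
    · rw [if_neg hd]
      have a0 : A x y z = 0 := by
        simp only [A]
        by_cases h1 : s x y
        · simp [h1]
        by_cases h2 : s x z ∨ s y z
        · simp [h2]
        exfalso; apply hd
        refine ⟨?_, ?_, ?_⟩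
        · rintro rfl; exact h2 (Or.inr (s.refl' _))
        · rintro rfl; exact h1 (s.refl' _)
        · rintro rfl; exact h2 (Or.inl (s.refl' _))
      have b0 : ∀ x y z, ¬ (y ≠ z ∧ x ≠ y ∧ x ≠ z) → B x y z = 0 := by
        intro x y z hd
        simp only [B]
        by_cases h1 : y ≠ z ∧ s y z
        · rw [if_pos h1]
          by_cases h2 : s y x
          · rw [if_pos h2]
          exfalso; apply hd
          refine ⟨h1.1, ?_, ?_⟩
          · rintro rfl; exact h2 (s.refl' _)
          · rintro rfl; exact h2 h1.2
        · rw [if_neg h1]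
      rw [a0, b0 x y z hd, b0 y z x (by tauto), b0 z x y (by tauto)]; simp
  have conv : ∑ y, ∑ z ∈ Finset.univ.erase y, ∑ x ∈ (Finset.univ.erase y).erase z, T m σ x y z
      = ∑ y, ∑ z, ∑ x, (if y ≠ z ∧ x ≠ y ∧ x ≠ z then T m σ x y z else 0) := by
    refine Finset.sum_congr rfl fun y _ => ?_
    rw [← Finset.add_sum_erase Finset.univ _ (Finset.mem_univ y)]
    simp only [ne_eq, not_true_eq_false, false_and, if_false, Finset.sum_const_zero, zero_add]
    refine Finset.sum_congr rfl fun z hz => ?_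
    rw [← Finset.sum_filter]
    refine Finset.sum_congr ?_ fun _ _ => rfl
    ext x
    have := (Finset.mem_erase.mp hz).1
    simp only [Finset.mem_erase, Finset.mem_univ, Finset.mem_filter]
    tauto
  have sA : ∑ y, ∑ z, ∑ x, A x y z = (N - 4) * (N - 5) * (N - 6) * F 1 1 1 + 4 * (N - 4) * (N - 5) * (F 1 1 2 + F 1 2 1 + F 2 1 1)
        + 8 * (N - 4) * (F 1 2 2 + F 2 1 2 + F 2 2 1) := by
    have r : ∑ y, ∑ z, ∑ x, A x y z = ∑ x, ∑ y, ∑ z, A x y z := by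
      rw [Finset.sum_congr rfl fun y _ => Finset.sum_comm, Finset.sum_comm]
    rw [r]
    have i1 : ∀ x y, ∑ z, A x y z = if s x y then 0 else
        (N - 4) * F (sz s x) (sz s y) 1 + 4 * F (sz s x) (sz s y) 2 - sz s x * F (sz s x) (sz s y) (sz s x)
          - sz s y * F (sz s x) (sz s y) (sz s y) := by
      intro x y
      by_cases hxy : s x y
      · simp [A, hxy]
      · simp only [A, if_neg hxy]
        rw [sum_nrel2 s hxy (F (sz s x) (sz s y)), h.bs, ← hN]; push_cast; ring
    have i2 : ∀ x, ∑ y, ∑ z, A x y z = BS s (fun k => k * ((N - 4) * F (sz s x) k 1 + 4 * F (sz s x) k 2 - sz s x * F (sz s x) k (sz s x)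
          - k * F (sz s x) k k)) - sz s x * ((N - 4) * F (sz s x) (sz s x) 1 + 4 * F (sz s x) (sz s x) 2
          - sz s x * F (sz s x) (sz s x) (sz s x) - sz s x * F (sz s x) (sz s x) (sz s x)) := fun x => by
      rw [Finset.sum_congr rfl fun y _ => i1 x y]
      exact sum_nrel s x (fun k => (N - 4) * F (sz s x) k 1 + 4 * F (sz s x) k 2 - sz s x * F (sz s x) k (sz s x)
          - k * F (sz s x) k k)
    rw [Finset.sum_congr rfl fun x _ => i2 x]
    simp only [h.bs, hs]
    rw [sum_univ_sz (stl σ) (fun j => (((Fintype.card α : ℚ) - 4) * (((1 : ℕ) : ℚ) * ((N - 4) * F j 1 1 + 4 * F j 1 2 - j * F j 1 j - ((1 : ℕ) : ℚ) * F j 1 1)) +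
      2 * (((2 : ℕ) : ℚ) * ((N - 4) * F j 2 1 + 4 * F j 2 2 - j * F j 2 j - ((2 : ℕ) : ℚ) * F j 2 2)) -
      j * ((N - 4) * F j j 1 + 4 * F j j 2 - j * F j j j - j * F j j j))), h.bs, ← hN]
    push_cast; ring
  have sB : ∑ y, ∑ z, ∑ x, B x y z = 4 * ((N - 4) * G 1 + 2 * G 2) := by
    have i1 : ∀ y z, ∑ x, B x y z = if y ≠ z ∧ s y z then ((N - 4) * G 1 + 4 * G 2 - sz s y * G (sz s y)) else 0 := by
      intro y z
      by_cases hyz : y ≠ z ∧ s y z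
      · simp only [B, if_pos hyz]
        rw [sum_nrel s y G, h.bs, ← hN]; push_cast; ring
      · simp only [B, if_neg hyz, Finset.sum_const_zero]
    have i2 : ∀ y, ∑ z, ∑ x, B x y z = ((sz s y : ℚ) - 1) * ((N - 4) * G 1 + 4 * G 2 - sz s y * G (sz s y)) := by
      intro y
      rw [Finset.sum_congr rfl fun z _ => i1 y z, ← Finset.sum_filter, Finset.sum_const, nsmul_eq_mul]
      congr 1
      have : (Finset.univ.filter fun z => y ≠ z ∧ s y z) = (cl s y).erase y := by
        ext z; simp [mem_cl, eq_comm]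
      rw [this, Finset.card_erase_of_mem (self_mem_cl s y), Nat.cast_sub (block_card_pos (cl_mem s y))]
      simp [sz]
    rw [Finset.sum_congr rfl fun y _ => i2 y, sum_univ_sz s (fun k => ((k : ℚ) - 1) * ((N - 4) * G 1 + 4 * G 2 - k * G k)), h.bs]
    push_cast; ring
  have sB2 : ∑ y, ∑ z, ∑ x, B y z x = ∑ y, ∑ z, ∑ x, B x y z := by
    rw [Finset.sum_congr rfl fun y _ => Finset.sum_comm (f := fun z x => B x y z), Finset.sum_comm]
  have sB3 : ∑ y, ∑ z, ∑ x, B z x y = ∑ y, ∑ z, ∑ x, B x y z := by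
    rw [Finset.sum_comm]
    rw [Finset.sum_congr rfl fun z _ => Finset.sum_comm (f := fun y x => B z x y)]
    rw [← sB2]
  rw [conv]
  simp only [key, ← Finset.mul_sum, Finset.sum_add_distrib]
  rw [sA, sB2, sB3, sB]
  ring

end

end Hz

open Equiv

namespace Hz

noncomputable section

set_option linter.unusedSectionVars false

open scoped Classical

/-! ### Part 10: the sum over double transpositions -/

variable {α : Type*} [Fintype α] [DecidableEq α]

def C22 : Finset (Perm α) := Finset.univ.filter fun σ => σ.cycleType = {2, 2}

lemma mem_C22 {σ : Perm α} : σ ∈ C22 ↔ σ.cycleType = {2, 2} := by simp [C22]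

lemma isSwap_iff_ct {τ : Perm α} : τ.IsSwap ↔ τ.cycleType = {2} := by
  constructor
  · intro h
    rw [h.isCycle.cycleType, Perm.card_support_eq_two.mpr h]
  · intro h
    rw [← Perm.card_support_eq_two, ← Perm.sum_cycleType, h]; simp

lemma factor_swap {σ τ : Perm α} (hσ : σ ∈ C22) (hτ : τ ∈ σ.cycleFactorsFinset) :
    τ.IsSwap ∧ (σ * τ⁻¹).IsSwap ∧ (σ * τ⁻¹).Disjoint τ := by
  have hσ' := mem_C22.mp hσ
  have hd := Perm.disjoint_mul_inv_of_mem_cycleFactorsFinset hτ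
  have h1 : τ.IsSwap := by
    rw [← Perm.card_support_eq_two]
    have : τ.support.card ∈ σ.cycleType := by
      rw [Perm.cycleType_def]
      exact Multiset.mem_map.mpr ⟨τ, hτ, rfl⟩
    rw [hσ'] at this
    simpa using this
  refine ⟨h1, ?_, hd⟩
  have := hd.cycleType_mul
  rw [inv_mul_cancel_right, hσ', isSwap_iff_ct.mp h1] at this
  rw [isSwap_iff_ct]
  have h2 : ({2, 2} : Multiset ℕ) = {2} + {2} := rfl
  rw [h2] at this
  exact (add_right_cancel this).symm

lemma mul_mem_C22 {τ₁ τ₂ : Perm α} (h1 : τ₁.IsSwap) (h2 : τ₂.IsSwap) (hd : τ₂.Disjoint τ₁) : τ₂ * τ₁ ∈ C22 := by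
  rw [mem_C22, hd.cycleType_mul, isSwap_iff_ct.mp h1, isSwap_iff_ct.mp h2]; rfl

lemma sum_disj (Φ : Perm α → ℚ) :
    ∑ τ₁ ∈ swaps, ∑ τ₂ ∈ swaps with τ₂.Disjoint τ₁, Φ (τ₂ * τ₁) = 2 * ∑ σ ∈ (C22 : Finset (Perm α)), Φ σ := by
  have h1 : 2 * ∑ σ ∈ (C22 : Finset (Perm α)), Φ σ = ∑ σ ∈ (C22 : Finset (Perm α)), ∑ τ ∈ σ.cycleFactorsFinset, Φ σ := by
    rw [Finset.mul_sum]
    refine Finset.sum_congr rfl fun σ hσ => ?_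
    rw [Finset.sum_const, nsmul_eq_mul]
    congr 1
    have : σ.cycleFactorsFinset.card = σ.cycleType.card := by rw [Perm.cycleType_def, Multiset.card_map]; rfl
    rw [this, mem_C22.mp hσ]; rfl
  rw [h1, Finset.sum_sigma', Finset.sum_sigma']
  refine Finset.sum_bij' (fun p _ => ⟨p.2 * p.1, p.1⟩) (fun p _ => ⟨p.2, p.1 * p.2⁻¹⟩) ?_ ?_ ?_ ?_ ?_
  · rintro ⟨τ₁, τ₂⟩ hp
    simp only [Finset.mem_sigma, Finset.mem_filter, mem_swaps] at hp ⊢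
    obtain ⟨a, b, c⟩ := hp
    refine ⟨mul_mem_C22 a b c, ?_⟩
    rw [c.cycleFactorsFinset_mul_eq_union, a.isCycle.cycleFactorsFinset_eq_singleton]
    simp
  · rintro ⟨σ, τ⟩ hp
    simp only [Finset.mem_sigma, Finset.mem_filter, mem_swaps] at hp ⊢
    exact factor_swap hp.1 hp.2
  · rintro ⟨τ₁, τ₂⟩ _; simp
  · rintro ⟨τ₁, τ₂⟩ _; simp
  · rintro ⟨τ₁, τ₂⟩ _; rfl

lemma exists_pts {τ₁ τ₂ : Perm α} (h1 : τ₁.IsSwap) (h2 : τ₂.IsSwap) (hd : τ₂.Disjoint τ₁) :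
    ∃ a b c d, a ≠ b ∧ c ≠ d ∧ a ≠ c ∧ a ≠ d ∧ b ≠ c ∧ b ≠ d ∧ τ₂ = swap a b ∧ τ₁ = swap c d := by
  obtain ⟨a, b, hab, rfl⟩ := h2
  obtain ⟨c, d, hcd, rfl⟩ := h1
  obtain ⟨h3, h4⟩ := (disj_swap_iff hcd).mp hd
  refine ⟨a, b, c, d, hab, hcd, ?_, ?_, ?_, ?_, rfl, rfl⟩
  · rintro rfl; rw [swap_apply_left] at h3; exact hab h3.symm
  · rintro rfl; rw [swap_apply_left] at h4; exact hab h4.symm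
  · rintro rfl; rw [swap_apply_right] at h3; exact hab h3
  · rintro rfl; rw [swap_apply_right] at h4; exact hab h4

lemma D22_of_mem {σ : Perm α} (hσ : σ ∈ C22) : D22 σ ∧ σ * σ = 1 := by
  have hne : σ.cycleFactorsFinset.Nonempty := by
    rw [← Finset.card_pos]
    have : σ.cycleFactorsFinset.card = σ.cycleType.card := by rw [Perm.cycleType_def, Multiset.card_map]; rfl
    rw [this, mem_C22.mp hσ]; decide
  obtain ⟨τ, hτ⟩ := hne
  obtain ⟨h1, h2, h3⟩ := factor_swap hσ hτ
  obtain ⟨a, b, c, d, hab, hcd, hac, had, hbc, hbd, e1, e2⟩ := exists_pts h1 h2 h3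
  have e : σ = swap a b * swap c d := by rw [← e1, ← e2]; simp
  refine ⟨?_, ?_⟩
  · rw [e]; exact D22_mk hab hcd hac had hbc hbd
  · have hc : swap a b * swap c d = swap c d * swap a b := by
      rw [← e1, ← e2]; exact h3.commute
    rw [e]
    nth_rewrite 1 [hc]
    rw [mul_assoc, ← mul_assoc (swap a b), swap_mul_self, one_mul, swap_mul_self]

variable {σ : Perm α} {m : ℕ}

lemma J_expand (m : ℕ) (σ : Perm α) :
    2 * Z (m + 2) σ (stl σ) = ∑ y, ∑ z ∈ Finset.univ.erase y, Z m σ (stl σ ⊔ pr y z)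
      + 2 * ∑ y, ∑ z ∈ Finset.univ.erase y, ∑ x ∈ (Finset.univ.erase y).erase z, T m σ x y z
      + 4 * ∑ σ₂ ∈ C22, Z m (σ₂ * σ) (stl σ₂ ⊔ stl σ) := by
  let G : Perm α → Perm α → ℚ := fun τ₂ τ₁ => Z m (τ₂ * (τ₁ * σ)) (stl τ₂ ⊔ (stl τ₁ ⊔ stl σ))
  have h0 : Z (m + 2) σ (stl σ) = ∑ τ₁ ∈ swaps, ∑ τ₂ ∈ swaps, G τ₂ τ₁ := by
    rw [Z_succ]
    exact Finset.sum_congr rfl fun τ _ => Z_succ _ _ _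
  have h1 : ∀ y, ∀ z ∈ Finset.univ.erase y, ∑ τ₂ ∈ swaps, G τ₂ (swap y z) = Z m σ (stl σ ⊔ pr y z)
      + (∑ x ∈ (Finset.univ.erase y).erase z, T m σ x y z + ∑ x ∈ (Finset.univ.erase z).erase y, T m σ x z y)
      + ∑ τ₂ ∈ swaps with τ₂.Disjoint (swap y z), G τ₂ (swap y z) := by
    intro y z hz
    have hyz : y ≠ z := (Finset.mem_erase.mp hz).1.symm
    rw [sum_overlap _ hyz, Finset.sum_add_distrib]
    congr 2
    · simp only [G]
      rw [← mul_assoc, swap_mul_self, one_mul, stl_swap, ← sup_assoc, sup_idem, sup_comm]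
    · congr 1
      rw [Finset.erase_right_comm]
      refine Finset.sum_congr rfl fun x _ => ?_
      simp only [G, T, swap_comm z y]
  have h2 : ∑ y, ∑ z ∈ Finset.univ.erase y, ∑ x ∈ (Finset.univ.erase z).erase y, T m σ x z y
      = ∑ y, ∑ z ∈ Finset.univ.erase y, ∑ x ∈ (Finset.univ.erase y).erase z, T m σ x y z := by
    refine Finset.sum_comm' ?_
    intro x y; simp [eq_comm]
  have h3 : ∑ y, ∑ z ∈ Finset.univ.erase y, ∑ τ₂ ∈ swaps with τ₂.Disjoint (swap y z), G τ₂ (swap y z)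
      = 4 * ∑ σ₂ ∈ C22, Z m (σ₂ * σ) (stl σ₂ ⊔ stl σ) := by
    rw [← sum_swaps (fun τ₁ => ∑ τ₂ ∈ swaps with τ₂.Disjoint τ₁, G τ₂ τ₁)]
    have := sum_disj (fun σ₂ => Z m (σ₂ * σ) (stl σ₂ ⊔ stl σ))
    rw [show (4 : ℚ) = 2 * 2 by norm_num, mul_assoc, ← this]
    congr 1
    refine Finset.sum_congr rfl fun τ₁ h1 => Finset.sum_congr rfl fun τ₂ h2 => ?_
    simp only [Finset.mem_filter, mem_swaps] at h1 h2
    obtain ⟨a, b, c, d, hab, hcd, hac, had, hbc, hbd, rfl, rfl⟩ := exists_pts h1 h2.1 h2.2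
    simp only [G]
    rw [stl_disj hac had hbc hbd hab, mul_assoc, ← sup_assoc, sup_comm (stl (swap a b))]
  rw [h0, sum_swaps (fun τ₁ => ∑ τ₂ ∈ swaps, G τ₂ τ₁), Finset.sum_congr rfl fun y _ => Finset.sum_congr rfl (h1 y)]
  simp only [Finset.sum_add_distrib]
  rw [h2, h3]; ring

lemma J_eq (hα : 4 ≤ Fintype.card α) (h : D22 σ) (hm : m + 6 = 2 * Fintype.card α) (N : ℚ) (hN : N = Fintype.card α) :
    ∑ σ₂ ∈ C22, Z m (σ₂ * σ) (stl σ₂ ⊔ stl σ) =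
      16 * (2 * N ^ 3 - 16 * N ^ 2 + 43 * N - 40) * m.factorial * N ^ ((Fintype.card α : ℤ) - 6) := by
  have : Nonempty α := Fintype.card_pos_iff.mp (by omega)
  have hx := J_expand m σ
  rw [sumE h hm _ rfl N hN, sumT h hm N hN _ rfl _ rfl, V0 h hm] at hx
  have hN0 : N ≠ 0 := by rw [hN]; exact_mod_cast (by omega : Fintype.card α ≠ 0)
  have hmN : (m : ℚ) = 2 * N - 6 := by
    rw [hN, eq_sub_iff_add_eq]; exact_mod_cast hm
  have hf : ((m + 2).factorial : ℚ) = (2 * N - 4) * (2 * N - 5) * m.factorial := by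
    rw [Nat.factorial_succ, Nat.factorial_succ]; push_cast; rw [hmN]; ring
  rw [hf] at hx
  set c := N ^ ((Fintype.card α : ℤ) - 7) with hc
  have c6 : N ^ ((Fintype.card α : ℤ) - 6) = N * c := by
    rw [hc, ← zpow_one_add₀ hN0]; congr 1; ring
  have c5 : N ^ ((Fintype.card α : ℤ) - 5) = N ^ 2 * c := by
    rw [hc, ← zpow_natCast N 2, ← zpow_add₀ hN0]; congr 1; push_cast; ring
  simp only [LF, V2v, V3v, S0, ← hN, c5, c6, ← hc] at hx
  norm_num [w1, w2, w3, w4, w5] at hx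
  rw [c6]
  linear_combination (-1 / 4) * hx

end

end Hz

open Equiv

namespace Hz

noncomputable section

set_option linter.unusedSectionVars false

open scoped Classical

/-! ### Part 11: the link with tuples of permutations -/

variable {α : Type*} [Fintype α] [DecidableEq α]

lemma ev_tuple (m : ℕ) : ∀ Φ : Perm α → Setoid α → ℚ,
    ∑ v : Fin m → Perm α, (if ∀ i, (v i).IsSwap then Φ (List.ofFn v).prod (⨆ i, stl (v i)) else 0) = ev m Φ := by
  induction m with
  | zero =>
    intro Φ
    simp [ev, iSup_of_empty]
  | succ m ih =>
    intro Φ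
    rw [← (Fin.consEquiv fun _ : Fin (m + 1) => Perm α).sum_comp, Fintype.sum_prod_type]
    simp only [ev, ← ih]
    rw [swaps, Finset.sum_filter]
    refine Finset.sum_congr rfl fun τ _ => ?_
    by_cases hτ : τ.IsSwap
    · rw [if_pos hτ]
      refine Finset.sum_congr rfl fun v _ => ?_
      simp only [Fin.consEquiv_apply, Fin.forall_fin_succ, Fin.cons_zero, Fin.cons_succ, hτ, true_and]
      congr 1
      rw [List.ofFn_succ, List.prod_cons]
      change Φ (τ * (List.ofFn v).prod) _ = _
      congr 1
      refine le_antisymm (iSup_le fun i => ?_) (sup_le ?_ (iSup_le fun i => ?_))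
      · refine Fin.cases ?_ (fun j => ?_) i
        · exact le_sup_left
        · exact le_sup_of_le_right (le_iSup (fun j => stl (v j)) j)
      · exact le_iSup (fun i : Fin (m + 1) => stl (Fin.cons (α := fun _ => Perm α) τ v i)) 0
      · exact le_iSup (fun i : Fin (m + 1) => stl (Fin.cons (α := fun _ => Perm α) τ v i)) i.succ
    · rw [if_neg hτ]
      refine Finset.sum_eq_zero fun v _ => ?_
      rw [if_neg]
      intro H; exact hτ (H 0)

lemma trans_iff {m : ℕ} (σ₁ σ₂ : Perm α) (v : Fin m → Perm α) :
    (∀ x y, ∃ g ∈ Subgroup.closure ({σ₁, σ₂} ∪ Set.range v), g x = y) ↔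
      (⨆ i, stl (v i)) ⊔ (stl σ₂ ⊔ stl σ₁) = ⊤ := by
  set R := (⨆ i, stl (v i)) ⊔ (stl σ₂ ⊔ stl σ₁) with hR
  constructor
  · intro H
    have key : ∀ g ∈ Subgroup.closure ({σ₁, σ₂} ∪ Set.range v), stl g ≤ R := by
      intro g hg
      induction hg using Subgroup.closure_induction with
      | mem x hx =>
        rcases hx with (rfl | rfl) | ⟨i, rfl⟩
        · exact le_sup_of_le_right le_sup_right
        · exact le_sup_of_le_right le_sup_left
        · exact le_sup_of_le_left (le_iSup (fun i => stl (v i)) i)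
      | one => rw [stl_one]; exact bot_le
      | mul x y _ _ hx hy =>
        exact stl_le_iff.mpr fun a => Setoid.trans' _ (stl_le_iff.mp hy a) (stl_le_iff.mp hx (y a))
      | inv x _ hx => rw [stl_inv]; exact hx
    rw [eq_top_iff]
    intro x y _
    obtain ⟨g, hg, rfl⟩ := H x y
    exact stl_le_iff.mp (key g hg) x
  · intro H x y
    let O : Setoid α := MulAction.orbitRel (Subgroup.closure ({σ₁, σ₂} ∪ Set.range v)) α
    have hO : ∀ g ∈ Subgroup.closure ({σ₁, σ₂} ∪ Set.range v), stl g ≤ O := by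
      intro g hg
      refine stl_le_iff.mpr fun a => Setoid.symm' _ ?_
      exact ⟨⟨g, hg⟩, rfl⟩
    have hle : R ≤ O := by
      refine sup_le (iSup_le fun i => hO _ (Subgroup.subset_closure (Or.inr ⟨i, rfl⟩))) (sup_le ?_ ?_)
      · exact hO _ (Subgroup.subset_closure (Or.inl (Or.inr rfl)))
      · exact hO _ (Subgroup.subset_closure (Or.inl (Or.inl rfl)))
    rw [H] at hle
    have : O y x := hle trivial
    obtain ⟨⟨g, hg⟩, e⟩ := this
    exact ⟨g, hg, e⟩

lemma count_eq (m : ℕ) :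
    (Nat.card {p : Perm α × Perm α × (Fin m → Perm α) //
        p.1.cycleType = {2, 2} ∧ p.2.1.cycleType = {2, 2} ∧ (∀ i, (p.2.2 i).IsSwap) ∧
        p.1 * p.2.1 * (List.ofFn p.2.2).prod = 1 ∧
        (∀ x y : α, ∃ g ∈ Subgroup.closure ({p.1, p.2.1} ∪ Set.range p.2.2), g x = y)} : ℚ) =
      ∑ σ ∈ (C22 : Finset (Perm α)), ∑ σ₂ ∈ (C22 : Finset (Perm α)), Z m (σ₂ * σ) (stl σ₂ ⊔ stl σ) := by
  rw [Nat.card_eq_fintype_card, Fintype.card_subtype, Finset.card_filter]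
  push_cast
  rw [Fintype.sum_prod_type]
  simp only [Fintype.sum_prod_type]
  rw [C22, Finset.sum_filter]
  refine Finset.sum_congr rfl fun σ _ => ?_
  by_cases h1 : σ.cycleType = {2, 2}
  swap
  · simp only [h1, false_and, if_false, Finset.sum_const_zero]
  rw [if_pos h1, Finset.sum_filter]
  refine Finset.sum_congr rfl fun σ₂ _ => ?_
  by_cases h2 : σ₂.cycleType = {2, 2}
  swap
  · simp only [h2, and_false, false_and, if_false, Finset.sum_const_zero]
  rw [if_pos h2, Z, ← ev_tuple]
  refine Finset.sum_congr rfl fun v _ => ?_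
  have i1 := (D22_of_mem (mem_C22.mpr h1)).2
  have i2 := (D22_of_mem (mem_C22.mpr h2)).2
  have e : σ * σ₂ * (List.ofFn v).prod = 1 ↔ (List.ofFn v).prod = σ₂ * σ := by
    rw [mul_eq_one_iff_eq_inv', mul_inv_rev, ← eq_inv_of_mul_eq_one_left i1, ← eq_inv_of_mul_eq_one_left i2]
  simp only [h1, h2, true_and, e, trans_iff]
  by_cases h3 : ∀ i, (v i).IsSwap
  · simp [h3]
  · simp [h3]

lemma card_C22 (hα : 4 ≤ Fintype.card α) :
    ((C22 : Finset (Perm α)).card : ℚ) * ((Fintype.card α - 4).factorial * 8) = (Fintype.card α).factorial := by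
  have := Perm.card_of_cycleType_mul_eq α {2, 2}
  rw [if_pos ⟨by simpa using hα, by simp⟩] at this
  have e : (({2, 2} : Multiset ℕ).prod * ∏ n ∈ ({2, 2} : Multiset ℕ).toFinset, (({2, 2} : Multiset ℕ).count n).factorial) = 8 := by
    decide
  rw [mul_assoc _ (Multiset.prod _), e] at this
  have s : ({2, 2} : Multiset ℕ).sum = 4 := by decide
  rw [s] at this
  rw [← this, C22]
  push_cast
  congr!

end

end Hz

open Equiv

/-- Theorem 1.2, third formula. Genus-zero Hurwitz number h_{1^2,1^2}: two branch points of cycle type (2,2,1^{n-4}) and 2n-6 transpositions; h_{1^2,1^2} = 2(2n^3-16n^2+43n-40)((2n-6)!/(n-4)!) n^(n-6). -/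
theorem hurwitz_number_1_2_1_2 (n : ℕ) (hn : 4 ≤ n) :
    (Nat.card {p : Perm (Fin n) × Perm (Fin n) × (Fin (2 * n - 6) → Perm (Fin n)) //
        p.1.cycleType = {2, 2} ∧
        p.2.1.cycleType = {2, 2} ∧
        (∀ i, (p.2.2 i).IsSwap) ∧
        p.1 * p.2.1 * (List.ofFn p.2.2).prod = 1 ∧
        (∀ x y : Fin n, ∃ g ∈ Subgroup.closure ({p.1, p.2.1} ∪ Set.range p.2.2),
          g x = y)} : ℚ) =
      (n.factorial : ℚ) * (2 * (2 * (n : ℚ) ^ 3 - 16 * (n : ℚ) ^ 2 + 43 * (n : ℚ) - 40)) *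
        (((2 * n - 6).factorial : ℚ) / ((n - 4).factorial : ℚ)) *
        (n : ℚ) ^ ((n : ℤ) - 6) := by
  classical
  rw [Hz.count_eq]
  have h4 : 4 ≤ Fintype.card (Fin n) := by simpa using hn
  rw [Finset.sum_congr rfl fun σ hσ => Hz.J_eq h4 (Hz.D22_of_mem hσ).1
    (by rw [Fintype.card_fin]; omega) (n : ℚ) (by simp)]
  have hc := Hz.card_C22 h4
  rw [Finset.sum_const, nsmul_eq_mul]
  simp only [Fintype.card_fin] at hc ⊢
  have hf : ((n - 4).factorial : ℚ) ≠ 0 := by exact_mod_cast (n - 4).factorial_ne_zero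
  rw [← hc]
  field_simp
  ring
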